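/- arXiv:1802.04214 — 2 statements merged into one kernel-verified Lean document; each statement's English description precedes it below -/
import Mathlib

section
/- The smallest complete cap in PG(5,2) has size 13, and 13 is also the smallest size of a 1-saturating set in PG(5,2): there exists a complete cap of 13 nonzero vectors in (ZMod 2)^6, and every 1-saturating set of nonzero vectors of (ZMod 2)^6 has at least 13 points. -/
/-- Points of PG(n-1,2) are the nonzero vectors of `Fin n → ZMod 2`.
A set `S` of nonzero vectors is 1-saturating if every nonzero vector `x ∉ S`
is the sum of two distinct elements of `S`. -/
def Saturating {n : ℕ} (S : Set (Fin n → ZMod 2)) : Prop :=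
  (∀ s ∈ S, s ≠ 0) ∧
    ∀ x : Fin n → ZMod 2, x ≠ 0 → x ∉ S →
      ∃ a ∈ S, ∃ b ∈ S, a ≠ b ∧ x = a + b

/-- A minimal 1-saturating set: 1-saturating, and removing any point destroys saturation. -/
def MinSat {n : ℕ} (S : Set (Fin n → ZMod 2)) : Prop :=
  Saturating S ∧ ∀ s ∈ S, ¬ Saturating (S \ {s})

/-- A cap: a set of nonzero vectors no three pairwise distinct elements of which sum to zero. -/
def IsCap {n : ℕ} (S : Set (Fin n → ZMod 2)) : Prop :=
  (∀ s ∈ S, s ≠ 0) ∧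
    ∀ a ∈ S, ∀ b ∈ S, ∀ c ∈ S, a ≠ b → a ≠ c → b ≠ c → a + b + c ≠ 0

/-- A complete cap: a cap that is 1-saturating. -/
def CompleteCap {n : ℕ} (S : Set (Fin n → ZMod 2)) : Prop :=
  IsCap S ∧ Saturating S

/-- Projective equivalence: some element of GL(n, ZMod 2) maps `S` onto `T`. -/
def ProjEquiv {n : ℕ} (S T : Set (Fin n → ZMod 2)) : Prop :=
  ∃ g : Matrix.GeneralLinearGroup (Fin n) (ZMod 2),
    (fun x => Matrix.mulVec (g : Matrix (Fin n) (Fin n) (ZMod 2)) x) '' S = T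

def tab3 (c0 c1 c2 c3 c4 c5 c6 c7 : ZMod 2) (x : Fin 3 → ZMod 2) : ZMod 2 :=
  if x 0 = 0 then (if x 1 = 0 then (if x 2 = 0 then c0 else c1)
      else (if x 2 = 0 then c2 else c3))
    else (if x 1 = 0 then (if x 2 = 0 then c4 else c5) else (if x 2 = 0 then c6 else c7))

theorem auxL0 : ∀ c0 c1 c2 c3 c4 c5 c6 c7 : ZMod 2, c0+c1+c2+c3+c4+c5+c6+c7 = 0 →
    ∃ d : Fin 3 → ZMod 2, d ≠ 0 ∧ ∃ e : ZMod 2, ∀ z : Fin 3 → ZMod 2,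
      tab3 c0 c1 c2 c3 c4 c5 c6 c7 z + tab3 c0 c1 c2 c3 c4 c5 c6 c7 (z + d) = e := by
  decide +kernel

theorem auxL (c : (Fin 3 → ZMod 2) → ZMod 2)
    (h : c ![0,0,0] + c ![0,0,1] + c ![0,1,0] + c ![0,1,1] + c ![1,0,0] + c ![1,0,1]
      + c ![1,1,0] + c ![1,1,1] = 0) :
    ∃ d : Fin 3 → ZMod 2, d ≠ 0 ∧ ∃ e : ZMod 2, ∀ z : Fin 3 → ZMod 2, c z + c (z + d) = e := by
  have key : tab3 (c ![0,0,0]) (c ![0,0,1]) (c ![0,1,0]) (c ![0,1,1]) (c ![1,0,0])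
      (c ![1,0,1]) (c ![1,1,0]) (c ![1,1,1]) = c := by
    have H : ∀ x : ZMod 2, x = 0 ∨ x = 1 := by decide
    funext z
    have hz : z = ![z 0, z 1, z 2] := by
      ext i; fin_cases i <;> rfl
    rw [hz]
    rcases H (z 0) with h0 | h0 <;> rcases H (z 1) with h1 | h1 <;>
      rcases H (z 2) with h2 | h2 <;> simp [h0, h1, h2, tab3]
  have := auxL0 _ _ _ _ _ _ _ _ h
  rwa [key] at this

theorem auxH : ∀ x : Fin 6 → ZMod 2, x ≠ 0 →
    (Finset.univ.filter (fun y : Fin 6 → ZMod 2 => y ⬝ᵥ x = 1)).card = 32 := by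
  decide +kernel

theorem auxK : ∀ X : Finset (Fin 3 → ZMod 2),
    (∀ w, w ∈ X ∨ w + Pi.single 0 1 ∈ X ∨ w + Pi.single 1 1 ∈ X ∨ w + Pi.single 2 1 ∈ X) →
      2 ≤ X.card ∧ (X.card ≤ 3 → ∃ p ∈ X, p + 1 ∈ X) := by
  decide +kernel

theorem split_equiv {E : Type*} [AddCommGroup E] [Module (ZMod 2) E] [FiniteDimensional (ZMod 2) E]
   (m n : ℕ) (h : Module.finrank (ZMod 2) E = m + n) (v : Fin m → E) (hv : LinearIndependent (ZMod 2) v) :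
   ∃ φ : E ≃ₗ[ZMod 2] (Fin m → ZMod 2) × (Fin n → ZMod 2), ∀ i, φ (v i) = (Pi.single i 1, 0) := by
  obtain ⟨Q, hQ⟩ := Submodule.exists_isCompl (Submodule.span (ZMod 2) (Set.range v))
  have h1 := Submodule.finrank_add_eq_of_isCompl hQ
  rw [finrank_span_eq_card hv, Fintype.card_fin, h] at h1
  let b := Module.finBasisOfFinrankEq (ZMod 2) Q (n := n) (by omega)
  let a := Module.Basis.span hv
  refine ⟨(Submodule.prodEquivOfIsCompl _ _ hQ).symm.trans (LinearEquiv.prodCongr a.equivFun b.equivFun), ?_⟩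
  intro i
  have : (Submodule.prodEquivOfIsCompl _ _ hQ).symm (v i) = (a i, 0) := by
    rw [LinearEquiv.symm_apply_eq]
    simp [a, Module.Basis.span_apply]
  simp [this]
  ext j
  simp [Finsupp.single_apply, Pi.single_apply, eq_comm]

theorem li2 {E : Type*} [AddCommGroup E] [Module (ZMod 2) E] (a b : E) (ha : a ≠ 0) (hb : b ≠ 0) (hab : a + b ≠ 0) :
    LinearIndependent (ZMod 2) ![a, b] := by
  have H : ∀ x : ZMod 2, x = 0 ∨ x = 1 := by decide
  rw [Fintype.linearIndependent_iff]
  intro g hg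
  simp only [Fin.sum_univ_two, Fin.forall_fin_two] at *
  rcases H (g 0) with h0 | h0 <;> rcases H (g 1) with h1 | h1 <;> simp_all

theorem li3 {E : Type*} [AddCommGroup E] [Module (ZMod 2) E] (a b c : E) (ha : a ≠ 0) (hb : b ≠ 0) (hc : c ≠ 0)
    (hab : a + b ≠ 0) (hac : a + c ≠ 0) (hbc : b + c ≠ 0) (h : a + b + c ≠ 0) :
    LinearIndependent (ZMod 2) ![a, b, c] := by
  have H : ∀ x : ZMod 2, x = 0 ∨ x = 1 := by decide
  rw [Fintype.linearIndependent_iff]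
  intro g hg
  simp only [Fin.sum_univ_three, Fin.forall_fin_succ] at *
  rcases H (g 0) with h0 | h0 <;> rcases H (g 1) with h1 | h1 <;> rcases H (g 2) with h2 | h2 <;> simp_all

theorem extra_point {α β : Type*} [DecidableEq α] [Nonempty α] [Fintype β] (U : Finset α)
    (g : β → α) (hg : Function.Injective g) (hU : ∀ b, g b ∈ U)
    (hc : U.card ≤ Fintype.card β + 1) : ∃ q, ∀ u ∈ U, (∃ b, u = g b) ∨ u = q := by
  have h1 : (Finset.univ.image g) ⊆ U := by
    intro x hx
    obtain ⟨b, _, rfl⟩ := Finset.mem_image.1 hx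
    exact hU b
  have h2 : (U \ Finset.univ.image g).card ≤ 1 := by
    rw [Finset.card_sdiff_of_subset h1, Finset.card_image_of_injective _ hg, Finset.card_univ]
    omega
  obtain ⟨q, hq⟩ := Finset.card_le_one_iff_subset_singleton.1 h2
  refine ⟨q, fun u hu => ?_⟩
  by_cases h : u ∈ Finset.univ.image g
  · left
    obtain ⟨b, _, rfl⟩ := Finset.mem_image.1 h
    exact ⟨b, rfl⟩
  · right
    exact Finset.mem_singleton.1 (hq (Finset.mem_sdiff.2 ⟨hu, h⟩))

theorem case1 (U : Finset ((Fin 2 → ZMod 2) × (Fin 3 → ZMod 2))) (hc : U.card ≤ 9)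
    (hV : ∀ z, ∃ g, (g, z) ∈ U)
    (hD : ∀ w d, d ≠ 0 → ∃ u ∈ U, ∃ u' ∈ U, u + u' = (w, d)) : False := by
  choose g hg using hV
  obtain ⟨q, hq⟩ := extra_point U (fun z => (g z, z)) (fun a b h => (Prod.ext_iff.1 h).2) hg
    (by simpa using hc)
  have two : ∀ x : Fin 3 → ZMod 2, x + x = 0 := fun x => CharTwo.add_self_eq_zero x
  have H : ∀ w d, d ≠ 0 → (∃ z, g z + g (z + d) = w) ∨ q.1 + g (q.2 + d) = w := by
    intro w d hd
    obtain ⟨u, hu, u', hu', h⟩ := hD w d hd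
    have h1 : u.1 + u'.1 = w := by rw [← Prod.fst_add, h]
    have h2 : u.2 + u'.2 = d := by rw [← Prod.snd_add, h]
    have h3 : u'.2 = u.2 + d := by rw [← h2, ← add_assoc, two, zero_add]
    have h4 : u.2 = u'.2 + d := by rw [← h2, add_comm, add_assoc, two, add_zero]
    rcases hq u hu with ⟨z, hz⟩ | hz <;> rcases hq u' hu' with ⟨z', hz'⟩ | hz'
    · left
      refine ⟨z, ?_⟩
      subst hz hz'
      simp only at h3 h1
      rw [← h3, h1]
    · right
      subst hz hz'
      simp only at h4 h1
      rw [← h4, add_comm, h1]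
    · right
      subst hz hz'
      simp only at h3 h1
      rw [← h3, h1]
    · exfalso
      subst hz hz'
      exact hd (by rw [← h2, two])
  have main : ∀ L : (Fin 2 → ZMod 2) →+ ZMod 2,
      (∀ e, ∃ w w', w ≠ w' ∧ L w ≠ e ∧ L w' ≠ e) →
      L (g ![0,0,0] + g ![0,0,1] + g ![0,1,0] + g ![0,1,1] + g ![1,0,0] + g ![1,0,1]
      + g ![1,1,0] + g ![1,1,1]) = 0 → False := by
    intro L hL h0
    obtain ⟨d, hd, e, he⟩ := auxL (fun z => L (g z)) (by simpa using h0)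
    obtain ⟨w, w', hne, hw, hw'⟩ := hL e
    have P : ∀ w, L w ≠ e → q.1 + g (q.2 + d) = w := by
      intro w hw
      rcases H w d hd with ⟨z, hz⟩ | h
      · exfalso
        apply hw
        rw [← hz, map_add]
        exact he z
      · exact h
    exact hne ((P w hw).symm.trans (P w' hw'))
  generalize (g ![0,0,0] + g ![0,0,1] + g ![0,1,0] + g ![0,1,1] + g ![1,0,0] + g ![1,0,1]
      + g ![1,1,0] + g ![1,1,1]) = s at main
  have hs : ∀ s : Fin 2 → ZMod 2, s 0 = 0 ∨ s 1 = 0 ∨ s 0 + s 1 = 0 := by decide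
  let L0 : (Fin 2 → ZMod 2) →+ ZMod 2 := Pi.evalAddMonoidHom (fun _ => ZMod 2) 0
  let L1 : (Fin 2 → ZMod 2) →+ ZMod 2 := Pi.evalAddMonoidHom (fun _ => ZMod 2) 1
  rcases hs s with h | h | h
  · refine main L0 ?_ h
    change ∀ e, ∃ w w' : Fin 2 → ZMod 2, w ≠ w' ∧ w 0 ≠ e ∧ w' 0 ≠ e
    decide
  · refine main L1 ?_ h
    change ∀ e, ∃ w w' : Fin 2 → ZMod 2, w ≠ w' ∧ w 1 ≠ e ∧ w' 1 ≠ e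
    decide
  · refine main (L0 + L1) ?_ h
    change ∀ e, ∃ w w' : Fin 2 → ZMod 2, w ≠ w' ∧ w 0 + w 1 ≠ e ∧ w' 0 + w' 1 ≠ e
    decide

theorem auxSix (a b c d e f : Fin 3 → ZMod 2) : ∃ w, w ∉ ({a, b, c, d, e, f} : Finset (Fin 3 → ZMod 2)) := by
  by_contra! h
  have h1 : (Finset.univ : Finset (Fin 3 → ZMod 2)) ⊆ {a, b, c, d, e, f} := fun w _ => h w
  have h2 := Finset.card_le_card h1
  have h3 : (Finset.univ : Finset (Fin 3 → ZMod 2)).card = 8 := by decide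
  have h4 : ({a, b, c, d, e, f} : Finset (Fin 3 → ZMod 2)).card ≤ 6 := Finset.card_le_six
  omega

theorem case2 (U : Finset ((Fin 3 → ZMod 2) × (Fin 2 → ZMod 2))) (hc : U.card ≤ 9)
    (hV : ∀ w z, (w, z) ∈ U ∨ (w + Pi.single 0 1, z) ∈ U ∨ (w + Pi.single 1 1, z) ∈ U ∨
      (w + Pi.single 2 1, z) ∈ U)
    (hD : ∀ w d, d ≠ 0 → ∃ u ∈ U, ∃ u' ∈ U, u + u' = (w, d)) : False := by
  let X : (Fin 2 → ZMod 2) → Finset (Fin 3 → ZMod 2) :=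
    fun z => Finset.univ.filter (fun w => (w, z) ∈ U)
  have hX : ∀ z w, w ∈ X z ↔ (w, z) ∈ U := by intro z w; simp [X]
  have hK := fun z => auxK (X z) (by intro w; simp only [hX]; exact hV w z)
  have hsum : ∑ z, (X z).card ≤ 9 := by
    refine le_trans (le_of_eq ?_) hc
    rw [← Finset.card_sigma]
    refine Finset.card_bij (fun a _ => (a.2, a.1)) ?_ ?_ ?_
    · rintro ⟨z, w⟩ h
      simpa [hX] using h
    · rintro ⟨z, w⟩ _ ⟨z', w'⟩ _ h
      simp at h
      obtain ⟨rfl, rfl⟩ := h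
      rfl
    · rintro ⟨w, z⟩ h
      exact ⟨⟨z, w⟩, by simpa [hX] using h, rfl⟩
  have h3 : ∀ z, (X z).card ≤ 3 := by
    intro z
    have h := Finset.add_sum_erase Finset.univ (fun z => (X z).card) (Finset.mem_univ z)
    have h' : (Finset.univ.erase z).card • 2 ≤ ∑ z ∈ Finset.univ.erase z, (X z).card :=
      Finset.card_nsmul_le_sum _ _ _ (fun x _ => (hK x).1)
    rw [Finset.card_erase_of_mem (Finset.mem_univ z)] at h'
    simp at h h'
    omega
  choose p hp hp' using fun z => (hK z).2 (h3 z)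
  simp only [hX] at hp hp'
  have H01 : ∀ x : ZMod 2, x = 0 ∨ x = 1 := by decide
  obtain ⟨q, hq⟩ := extra_point U
    (fun a : (Fin 2 → ZMod 2) × ZMod 2 => (p a.1 + fun _ => a.2, a.1)) (by
      rintro ⟨z, e⟩ ⟨z', e'⟩ h
      simp only [Prod.mk.injEq] at h
      obtain ⟨h, rfl⟩ := h
      have this : e = e' := congrFun (add_left_cancel h) 0
      rw [this]) (by
      rintro ⟨z, e⟩
      rcases H01 e with rfl | rfl
      · have : (p z + fun _ => (0 : ZMod 2)) = p z := by ext; simp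
        simpa only [this] using hp z
      · exact hp' z)
    (by simpa using hc)
  have two : ∀ x : Fin 2 → ZMod 2, x + x = 0 := fun x => CharTwo.add_self_eq_zero x
  let d : Fin 2 → ZMod 2 := ![1, 0]
  have hd : d ≠ 0 := by decide
  have H : ∀ w, (∃ z, ∃ e : ZMod 2, w = p z + p (z + d) + fun _ => e) ∨
      ∃ e : ZMod 2, w = q.1 + p (q.2 + d) + fun _ => e := by
    intro w
    obtain ⟨u, hu, u', hu', h⟩ := hD w d hd
    have h1 : u.1 + u'.1 = w := by rw [← Prod.fst_add, h]
    have h2 : u.2 + u'.2 = d := by rw [← Prod.snd_add, h]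
    have h3 : u'.2 = u.2 + d := by rw [← h2, ← add_assoc, two, zero_add]
    have h4 : u.2 = u'.2 + d := by rw [← h2, add_comm, add_assoc, two, add_zero]
    rcases hq u hu with ⟨⟨z, e⟩, hz⟩ | hz <;> rcases hq u' hu' with ⟨⟨z', e'⟩, hz'⟩ | hz'
    · left
      refine ⟨z, e + e', ?_⟩
      subst hz hz'
      simp only at h3 h1
      rw [← h3, ← h1]
      ext i
      simp only [Pi.add_apply]
      ring
    · right
      refine ⟨e, ?_⟩
      subst hz hz'
      simp only at h4 h1
      rw [← h4, ← h1]
      ext i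
      simp only [Pi.add_apply]
      ring
    · right
      refine ⟨e', ?_⟩
      subst hz hz'
      simp only at h3 h1
      rw [← h3, ← h1]
      ext i
      simp only [Pi.add_apply]
      ring
    · exfalso
      subst hz hz'
      exact hd (by rw [← h2, two])
  let A := p ![0,0] + p ![1,0]
  let B := p ![0,1] + p ![1,1]
  let C := q.1 + p (q.2 + d)
  obtain ⟨w, hw⟩ := auxSix (A + fun _ => 0) (A + fun _ => 1) (B + fun _ => 0) (B + fun _ => 1)
    (C + fun _ => 0) (C + fun _ => 1)
  apply hw
  simp only [Finset.mem_insert, Finset.mem_singleton]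
  rcases H w with ⟨z, e, h⟩ | ⟨e, h⟩
  · have hz : p z + p (z + d) = A ∨ p z + p (z + d) = B := by
      have : ∀ z : Fin 2 → ZMod 2, (z = ![0,0] ∧ z + ![1,0] = ![1,0]) ∨
        (z = ![1,0] ∧ z + ![1,0] = ![0,0]) ∨ (z = ![0,1] ∧ z + ![1,0] = ![1,1]) ∨
        (z = ![1,1] ∧ z + ![1,0] = ![0,1]) := by decide
      rcases this z with ⟨h, h'⟩ | ⟨h, h'⟩ | ⟨h, h'⟩ | ⟨h, h'⟩
      · left; simp only [d, h', A]; rw [h]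
      · left; simp only [d, h', A]; rw [h, add_comm]
      · right; simp only [d, h', B]; rw [h]
      · right; simp only [d, h', B]; rw [h, add_comm]
    rcases hz with hz | hz <;> rw [hz] at h <;> rcases H01 e with rfl | rfl <;> simp [h]
  · rcases H01 e with rfl | rfl <;> simp only [h, C, true_or, or_true]

theorem core {E : Type*} [AddCommGroup E] [Module (ZMod 2) E] [FiniteDimensional (ZMod 2) E]
    [DecidableEq E] (h5 : Module.finrank (ZMod 2) E = 5) (U V : Finset E) (hU : U.card ≤ 9)
    (hV : V.card = 4) (h0 : 0 ∈ V) (hUV : ∀ w, ∃ u ∈ U, ∃ v ∈ V, u + v = w)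
    (hD : ∀ w, (∃ u ∈ U, ∃ u' ∈ U, u + u' = w) ∨ (∃ v ∈ V, ∃ v' ∈ V, v + v' = w)) : False := by
  have hE : (V.erase 0).card = 3 := by rw [Finset.card_erase_of_mem h0, hV]
  obtain ⟨a, b, c, hab, hac, hbc, hVe⟩ := Finset.card_eq_three.1 hE
  have hmem : ∀ v ∈ V, v = 0 ∨ v = a ∨ v = b ∨ v = c := by
    intro v hv
    by_cases h : v = 0
    · exact Or.inl h
    · right
      have : v ∈ V.erase 0 := Finset.mem_erase.2 ⟨h, hv⟩
      rw [hVe] at this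
      simpa using this
  have hnz : ∀ x ∈ ({a, b, c} : Finset E), x ≠ 0 := by
    intro x hx
    rw [← hVe] at hx
    exact (Finset.mem_erase.1 hx).1
  have ha : a ≠ 0 := hnz a (by simp)
  have hb : b ≠ 0 := hnz b (by simp)
  have hcc : c ≠ 0 := hnz c (by simp)
  have add0 : ∀ x y : E, x + y = 0 → x = y := by
    intro x y h
    rw [eq_neg_of_add_eq_zero_left h, ZModModule.neg_eq_self]
  by_cases habc : a + b + c = 0
  · have hc : c = a + b := (add0 _ _ habc).symm
    obtain ⟨φ, hφ⟩ := split_equiv 2 3 h5 ![a, b] (li2 a b ha hb (fun h => hab (add0 _ _ h)))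
    have φa : φ a = (Pi.single 0 1, 0) := hφ 0
    have φb : φ b = (Pi.single 1 1, 0) := hφ 1
    have φV : ∀ v ∈ V, (φ v).2 = 0 := by
      intro v hv
      rcases hmem v hv with rfl | rfl | rfl | rfl
      · simp
      · simp [φa]
      · simp [φb]
      · simp [hc, φa, φb]
    refine case1 (U.image φ) (Finset.card_image_le.trans hU) ?_ ?_
    · intro z
      obtain ⟨u, hu, v, hv, h⟩ := hUV (φ.symm (0, z))
      refine ⟨(φ u).1, Finset.mem_image.2 ⟨u, hu, ?_⟩⟩
      have h' : φ u + φ v = (0, z) := by rw [← map_add, h, LinearEquiv.apply_symm_apply]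
      have h2 : (φ u).2 + (φ v).2 = z := by rw [← Prod.snd_add, h']
      rw [φV v hv, add_zero] at h2
      exact Prod.ext rfl h2
    · intro w d hd
      rcases hD (φ.symm (w, d)) with ⟨u, hu, v, hv, h⟩ | ⟨u, hu, v, hv, h⟩
      · refine ⟨φ u, Finset.mem_image_of_mem _ hu, φ v, Finset.mem_image_of_mem _ hv, ?_⟩
        rw [← map_add, h, LinearEquiv.apply_symm_apply]
      · exfalso
        have h' : φ u + φ v = (w, d) := by rw [← map_add, h, LinearEquiv.apply_symm_apply]
        have h2 : (φ u).2 + (φ v).2 = d := by rw [← Prod.snd_add, h']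
        rw [φV v hv, φV u hu, add_zero] at h2
        exact hd h2.symm
  · obtain ⟨φ, hφ⟩ := split_equiv 3 2 h5 ![a, b, c] (li3 a b c ha hb hcc
      (fun h => hab (add0 _ _ h)) (fun h => hac (add0 _ _ h)) (fun h => hbc (add0 _ _ h)) habc)
    have φa : φ a = (Pi.single 0 1, 0) := hφ 0
    have φb : φ b = (Pi.single 1 1, 0) := hφ 1
    have φc : φ c = (Pi.single 2 1, 0) := hφ 2
    have φV : ∀ v ∈ V, (φ v).2 = 0 := by
      intro v hv
      rcases hmem v hv with rfl | rfl | rfl | rfl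
      · simp
      · simp [φa]
      · simp [φb]
      · simp [φc]
    refine case2 (U.image φ) (Finset.card_image_le.trans hU) ?_ ?_
    · intro w z
      obtain ⟨u, hu, v, hv, h⟩ := hUV (φ.symm (w, z))
      have hm : φ u ∈ U.image φ := Finset.mem_image_of_mem _ hu
      have h' : φ u = (w, z) + φ v := by
        rw [← LinearEquiv.apply_symm_apply φ (w, z), ← h, ← map_add, add_assoc,
          ZModModule.add_self, add_zero]
      rw [h'] at hm
      rcases hmem v hv with rfl | rfl | rfl | rfl
      · left; simpa using hm
      · right; left; simpa [φa] using hm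
      · right; right; left; simpa [φb] using hm
      · right; right; right; simpa [φc] using hm
    · intro w d hd
      rcases hD (φ.symm (w, d)) with ⟨u, hu, v, hv, h⟩ | ⟨u, hu, v, hv, h⟩
      · refine ⟨φ u, Finset.mem_image_of_mem _ hu, φ v, Finset.mem_image_of_mem _ hv, ?_⟩
        rw [← map_add, h, LinearEquiv.apply_symm_apply]
      · exfalso
        have h' : φ u + φ v = (w, d) := by rw [← map_add, h, LinearEquiv.apply_symm_apply]
        have h2 : (φ u).2 + (φ v).2 = d := by rw [← Prod.snd_add, h']
        rw [φV v hv, φV u hu, add_zero] at h2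
        exact hd h2.symm

theorem sep_count (T : Finset (Fin 6 → ZMod 2)) (y : Fin 6 → ZMod 2) :
    ∑ a ∈ T, ∑ b ∈ T, (if y ⬝ᵥ (a + b) = 1 then 1 else 0) =
      2 * ((T.filter (fun t => y ⬝ᵥ t = 1)).card * (T.filter (fun t => ¬ y ⬝ᵥ t = 1)).card) := by
  have H : ∀ s t : ZMod 2, (if s + t = 1 then 1 else 0) =
    (if s = 1 then 1 else 0) * (if ¬ t = 1 then 1 else 0) +
    (if ¬ s = 1 then 1 else 0) * (if t = 1 then 1 else 0) := by decide
  simp only [dotProduct_add, H, Finset.sum_add_distrib, ← Finset.mul_sum, ← Finset.sum_mul,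
    ← Finset.card_filter]
  ring

theorem exists_sep (T : Finset (Fin 6 → ZMod 2)) (hT : T.card = 13) :
    ∃ y : Fin 6 → ZMod 2, y ≠ 0 ∧
      (T.filter (fun t => y ⬝ᵥ t = 1)).card * (T.filter (fun t => ¬ y ⬝ᵥ t = 1)).card ≤ 39 := by
  by_contra! h
  have h1 : ∑ y : Fin 6 → ZMod 2, ∑ a ∈ T, ∑ b ∈ T, (if y ⬝ᵥ (a + b) = 1 then 1 else 0) = 4992 := by
    rw [Finset.sum_comm]
    have : ∀ a ∈ T, ∑ y : Fin 6 → ZMod 2, ∑ b ∈ T, (if y ⬝ᵥ (a + b) = 1 then 1 else 0) = 384 := by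
      intro a ha
      rw [Finset.sum_comm, ← Finset.add_sum_erase T _ ha]
      have h0 : a + a = 0 := ZModModule.add_self a
      have : ∀ b ∈ T.erase a,
          ∑ y : Fin 6 → ZMod 2, (if y ⬝ᵥ (a + b) = 1 then 1 else 0) = 32 := by
        intro b hb
        rw [← Finset.card_filter]
        apply auxH
        intro h
        apply (Finset.mem_erase.1 hb).1
        rw [eq_neg_of_add_eq_zero_right h, ZModModule.neg_eq_self]
      rw [Finset.sum_congr rfl this, h0]
      simp [Finset.card_erase_of_mem ha, hT]
    rw [Finset.sum_congr rfl this]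
    simp [hT]
  have h2 : ∀ y ∈ Finset.univ.erase (0 : Fin 6 → ZMod 2),
      80 ≤ ∑ a ∈ T, ∑ b ∈ T, (if y ⬝ᵥ (a + b) = 1 then 1 else 0) := by
    intro y hy
    rw [sep_count T]
    exact Nat.mul_le_mul_left 2 (h y (Finset.mem_erase.1 hy).1 : 39 < _)
  have h3 := Finset.card_nsmul_le_sum _ _ _ h2
  have h4 := Finset.sum_le_sum_of_subset (f := fun y : Fin 6 → ZMod 2 =>
    ∑ a ∈ T, ∑ b ∈ T, (if y ⬝ᵥ (a + b) = 1 then 1 else 0))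
    (Finset.erase_subset (0 : Fin 6 → ZMod 2) Finset.univ)
  rw [h1] at h4
  rw [Finset.card_erase_of_mem (Finset.mem_univ _)] at h3
  simp only [Finset.card_univ, Fintype.card_pi, ZMod.card, Finset.prod_const, Fintype.card_fin,
    smul_eq_mul] at h3
  omega

theorem no13_aux (T : Finset (Fin 6 → ZMod 2)) (f : (Fin 6 → ZMod 2) →ₗ[ZMod 2] ZMod 2)
    (hf : f ≠ 0) (hcov : ∀ x, ∃ a ∈ T, ∃ b ∈ T, a + b = x) (e : ZMod 2)
    (h4 : (T.filter (fun t => f t = e)).card = 4)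
    (h9 : (T.filter (fun t => ¬ f t = e)).card = 9) : False := by
  classical
  obtain ⟨p, hp⟩ := Finset.card_pos.1 (by rw [h4]; norm_num : 0 < (T.filter (fun t => f t = e)).card)
  obtain ⟨u, hu⟩ := Finset.card_pos.1 (by rw [h9]; norm_num : 0 < (T.filter (fun t => ¬ f t = e)).card)
  rw [Finset.mem_filter] at hp hu
  obtain ⟨hpT, hpe⟩ := hp
  obtain ⟨huT, hue⟩ := hu
  have two : ∀ x : Fin 6 → ZMod 2, x + x = 0 := fun x => ZModModule.add_self x
  have Z : ∀ s t e : ZMod 2, s + t = 0 → (s = e ∧ t = e) ∨ (¬ s = e ∧ ¬ t = e) := by decide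
  have Z1 : ∀ s t e : ZMod 2, s + t = 1 → (s = e ∧ ¬ t = e) ∨ (¬ s = e ∧ t = e) := by decide
  have Z2 : ∀ s e : ZMod 2, ¬ s = e → s + e = 1 := by decide
  have Z3 : ∀ s e : ZMod 2, s = e → s + e = 0 := by decide
  have Z4 : ∀ s t e : ZMod 2, ¬ s = e → ¬ t = e → s + t = 0 := by decide
  let K := LinearMap.ker f
  have hrank : Module.finrank (ZMod 2) K = 5 := by
    have h := LinearMap.finrank_range_add_finrank_ker f
    have hs : LinearMap.range f = ⊤ := LinearMap.range_eq_top.2 (LinearMap.surjective hf)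
    rw [hs] at h
    simp at h
    change 1 + Module.finrank (ZMod 2) K = 6 at h
    omega
  let U : Finset K := Finset.univ.filter (fun w => (w : Fin 6 → ZMod 2) + u ∈ T)
  let V : Finset K := Finset.univ.filter (fun w => (w : Fin 6 → ZMod 2) + p ∈ T)
  have memU : ∀ t ∈ T, ¬ f t = e → ∃ w ∈ U, (w : Fin 6 → ZMod 2) = t + u := by
    intro t ht hte
    have hk : t + u ∈ K := by
      rw [LinearMap.mem_ker, map_add]
      exact Z4 _ _ e hte hue
    refine ⟨⟨t + u, hk⟩, ?_, rfl⟩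
    simp only [U, Finset.mem_filter, Finset.mem_univ, true_and]
    rwa [add_assoc, two, add_zero]
  have memV : ∀ t ∈ T, f t = e → ∃ w ∈ V, (w : Fin 6 → ZMod 2) = t + p := by
    intro t ht hte
    have hk : t + p ∈ K := by
      rw [LinearMap.mem_ker, map_add, hpe]
      exact Z3 _ e hte
    refine ⟨⟨t + p, hk⟩, ?_, rfl⟩
    simp only [V, Finset.mem_filter, Finset.mem_univ, true_and]
    rwa [add_assoc, two, add_zero]
  have hUc : U.card = 9 := by
    rw [← h9]
    refine Finset.card_bij (fun w _ => (w : Fin 6 → ZMod 2) + u) ?_ ?_ ?_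
    · intro w hw
      have hk : f w = 0 := w.2
      simp only [U, Finset.mem_filter, Finset.mem_univ, true_and] at hw ⊢
      refine ⟨hw, ?_⟩
      rwa [map_add, hk, zero_add]
    · intro w _ w' _ h
      exact Subtype.ext (add_right_cancel h)
    · intro t ht
      rw [Finset.mem_filter] at ht
      obtain ⟨w, hw, h⟩ := memU t ht.1 ht.2
      exact ⟨w, hw, by rw [h, add_assoc, two, add_zero]⟩
  have hVc : V.card = 4 := by
    rw [← h4]
    refine Finset.card_bij (fun w _ => (w : Fin 6 → ZMod 2) + p) ?_ ?_ ?_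
    · intro w hw
      have hk : f w = 0 := w.2
      simp only [V, Finset.mem_filter, Finset.mem_univ, true_and] at hw ⊢
      refine ⟨hw, ?_⟩
      rwa [map_add, hk, zero_add]
    · intro w _ w' _ h
      exact Subtype.ext (add_right_cancel h)
    · intro t ht
      rw [Finset.mem_filter] at ht
      obtain ⟨w, hw, h⟩ := memV t ht.1 ht.2
      exact ⟨w, hw, by rw [h, add_assoc, two, add_zero]⟩
  have four : ∀ a b x : Fin 6 → ZMod 2, a + x + (b + x) = a + b := by
    intro a b x
    rw [add_add_add_comm, two, add_zero]
  refine core hrank U V hUc.le hVc ?_ ?_ ?_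
  · simp only [V, Finset.mem_filter, Finset.mem_univ, true_and]
    simpa using hpT
  · intro w
    have hk : f w = 0 := w.2
    obtain ⟨a, ha, b, hb, h⟩ := hcov (w + (u + p))
    have h1 : f a + f b = 1 := by
      rw [← map_add, h, map_add, map_add, hk, zero_add, hpe]
      exact Z2 _ _ hue
    have fin : ∀ a b : Fin 6 → ZMod 2, a + b = w + (u + p) → a + u + (b + p) = w := by
      intro a b h
      rw [add_add_add_comm, h, add_assoc, two, add_zero]
    rcases Z1 _ _ e h1 with ⟨hae, hbe⟩ | ⟨hae, hbe⟩
    · obtain ⟨v, hv, hv'⟩ := memV a ha hae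
      obtain ⟨x, hx, hx'⟩ := memU b hb hbe
      refine ⟨x, hx, v, hv, Subtype.ext ?_⟩
      rw [Submodule.coe_add, hv', hx']
      exact fin b a (by rw [add_comm, h])
    · obtain ⟨v, hv, hv'⟩ := memV b hb hbe
      obtain ⟨x, hx, hx'⟩ := memU a ha hae
      refine ⟨x, hx, v, hv, Subtype.ext ?_⟩
      rw [Submodule.coe_add, hv', hx']
      exact fin a b h
  · intro w
    have hk : f w = 0 := w.2
    obtain ⟨a, ha, b, hb, h⟩ := hcov w
    have h1 : f a + f b = 0 := by rw [← map_add, h, hk]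
    rcases Z _ _ e h1 with ⟨hae, hbe⟩ | ⟨hae, hbe⟩
    · right
      obtain ⟨v, hv, hv'⟩ := memV a ha hae
      obtain ⟨x, hx, hx'⟩ := memV b hb hbe
      refine ⟨v, hv, x, hx, Subtype.ext ?_⟩
      rw [Submodule.coe_add, hv', hx', four, h]
    · left
      obtain ⟨v, hv, hv'⟩ := memU a ha hae
      obtain ⟨x, hx, hx'⟩ := memU b hb hbe
      refine ⟨v, hv, x, hx, Subtype.ext ?_⟩
      rw [Submodule.coe_add, hv', hx', four, h]

theorem no13 (T : Finset (Fin 6 → ZMod 2)) (hT : T.card = 13)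
    (hcov : ∀ x, ∃ a ∈ T, ∃ b ∈ T, a + b = x) : False := by
  classical
  obtain ⟨y, hy, hle⟩ := exists_sep T hT
  have hsum := Finset.card_filter_add_card_filter_not (s := T) (fun t => y ⬝ᵥ t = 1)
  rw [hT] at hsum
  have hge : 32 ≤ (T.filter (fun t => y ⬝ᵥ t = 1)).card *
      (T.filter (fun t => ¬ y ⬝ᵥ t = 1)).card := by
    rw [← auxH y hy, ← Finset.card_product]
    refine (Finset.card_le_card (t := ((T.filter (fun t => y ⬝ᵥ t = 1)) ×ˢ
      (T.filter (fun t => ¬ y ⬝ᵥ t = 1))).image (fun a => a.1 + a.2)) ?_).trans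
      Finset.card_image_le
    intro x hx
    simp only [Finset.mem_filter, Finset.mem_univ, true_and] at hx
    rw [dotProduct_comm] at hx
    obtain ⟨a, ha, b, hb, rfl⟩ := hcov x
    have Z1 : ∀ s t : ZMod 2, s + t = 1 → (s = 1 ∧ ¬ t = 1) ∨ (¬ s = 1 ∧ t = 1) := by decide
    rw [dotProduct_add] at hx
    rw [Finset.mem_image]
    rcases Z1 _ _ hx with ⟨h1, h2⟩ | ⟨h1, h2⟩
    · exact ⟨(a, b), by simp [ha, hb, h1, h2], rfl⟩
    · exact ⟨(b, a), by simp [ha, hb, h1, h2], add_comm _ _⟩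
  let f : (Fin 6 → ZMod 2) →ₗ[ZMod 2] ZMod 2 := dotProductBilin (ZMod 2) (ZMod 2) y
  have hf : f ≠ 0 := by
    intro h
    exact hy (dotProduct_eq_zero y (fun w => LinearMap.congr_fun h w))
  have Zc : ∀ s : ZMod 2, ¬ s = 1 ↔ s = 0 := by decide
  have Zd : ∀ s : ZMod 2, s = 1 ↔ ¬ s = 0 := by decide
  have e0 : T.filter (fun t => ¬ y ⬝ᵥ t = 1) = T.filter (fun t => f t = 0) :=
    Finset.filter_congr (fun t _ => Zc _)
  have e1 : T.filter (fun t => y ⬝ᵥ t = 1) = T.filter (fun t => ¬ f t = 0) :=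
    Finset.filter_congr (fun t _ => Zd _)
  have hcase : ((T.filter (fun t => y ⬝ᵥ t = 1)).card = 4 ∧
      (T.filter (fun t => ¬ y ⬝ᵥ t = 1)).card = 9) ∨
      ((T.filter (fun t => y ⬝ᵥ t = 1)).card = 9 ∧
      (T.filter (fun t => ¬ y ⬝ᵥ t = 1)).card = 4) := by
    generalize (T.filter (fun t => y ⬝ᵥ t = 1)).card = k at *
    generalize (T.filter (fun t => ¬ y ⬝ᵥ t = 1)).card = l at *
    have hl : l = 13 - k := by omega
    have hk : k ≤ 13 := by omega
    subst hl
    interval_cases k <;> omega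
  rcases hcase with ⟨h1, h2⟩ | ⟨h1, h2⟩
  · exact no13_aux T f hf hcov 1 h1 h2
  · rw [e1] at h1
    rw [e0] at h2
    exact no13_aux T f hf hcov 0 h2 h1

def capF : Finset (Fin 6 → ZMod 2) :=
  {![0,0,1,0,1,0], ![1,0,1,1,0,1], ![1,0,1,1,1,0], ![1,0,1,0,0,0],
   ![0,1,1,0,1,0], ![0,0,1,1,0,1], ![1,1,0,0,1,1], ![1,0,1,1,1,1],
   ![0,1,0,1,0,1], ![1,1,1,1,0,0], ![0,0,0,1,0,0], ![0,0,1,1,0,0],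
   ![0,0,1,0,1,1]}

theorem capF_card : capF.card = 13 := by decide +kernel

theorem capF_nz : ∀ s ∈ capF, s ≠ 0 := by decide +kernel

theorem capF_cap : ∀ a ∈ capF, ∀ b ∈ capF, ∀ c ∈ capF, a ≠ b → a ≠ c → b ≠ c →
    a + b + c ≠ 0 := by decide +kernel

theorem capF_sat : ∀ x : Fin 6 → ZMod 2, x ≠ 0 → x ∉ capF →
    ∃ a ∈ capF, ∃ b ∈ capF, a ≠ b ∧ x = a + b := by decide +kernel

/-- The smallest complete cap in PG(5,2) has size 13, and 13 is also the smallest size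
of a 1-saturating set in PG(5,2). -/
theorem completeCap_PG5_min_size :
    (∃ S : Set (Fin 6 → ZMod 2), CompleteCap S ∧ S.ncard = 13) ∧
      ∀ S : Set (Fin 6 → ZMod 2), Saturating S → 13 ≤ S.ncard := by
  constructor
  · refine ⟨(capF : Set (Fin 6 → ZMod 2)), ⟨⟨capF_nz, capF_cap⟩, capF_nz, capF_sat⟩, ?_⟩
    rw [Set.ncard_coe_finset, capF_card]
  · intro S hS
    by_contra! hlt
    classical
    obtain ⟨F, rfl⟩ : ∃ F : Finset (Fin 6 → ZMod 2), S = F := ⟨S.toFinset, by simp⟩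
    rw [Set.ncard_coe_finset] at hlt
    have h1 : (insert 0 F).card ≤ 13 := (Finset.card_insert_le _ _).trans hlt
    obtain ⟨T, hFT, hT⟩ := Finset.exists_superset_card_eq h1 (by simp)
    refine no13 T hT (fun x => ?_)
    have h0T : (0 : Fin 6 → ZMod 2) ∈ T := hFT (Finset.mem_insert_self _ _)
    have hF : ∀ a ∈ F, a ∈ T := fun a ha => hFT (Finset.mem_insert_of_mem ha)
    by_cases hx : x = 0
    · exact ⟨0, h0T, 0, h0T, by simp [hx]⟩
    by_cases hxF : x ∈ F
    · exact ⟨x, hF x hxF, 0, h0T, add_zero x⟩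
    · obtain ⟨a, ha, b, hb, _, h⟩ := hS.2 x hx hxF
      exact ⟨a, hF a ha, b, hF b hb, h.symm⟩
end

section
/- Up to projective equivalence there are exactly five complete caps of size 17 in PG(5,2): the number of orbits of the action of GL(6, ZMod 2) on the collection of complete caps of 17 nonzero vectors of (ZMod 2)^6 is exactly 5. (This proves the conjecture of Davydov and Tombak.) -/
namespace PG5

inductive T where
  | b (v : ℕ) (x y : T)
  | s
  | g
  | l
  | u (x : ℕ)
  | q (n : ℕ)

open T in
def t0 : T :=
  (b 7 (b 11 (b 13 (b 14 (b 19 (b 21 (b 22 (b 25 (b 26 (b 28 (b 31 (b 35 l (u 35)) (u 31)) (u 28))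
  (u 26)) (u 25)) (u 22)) (u 21)) (u 19)) (u 14)) (u 13)) (u 11)) (u 7))

open T in
def t1_0 : T :=
  (b 38 (b 42 (b 44 (b 50 (b 52 (b 56 (b 62 (u 7) (q 0x4134e10981)) (b 62 (q 0x4f969b2139) (u 7)))
  (b 53 (b 56 (b 62 (q 0x49a03b8135) (u 11)) (b 62 (u 13) (q 0x3220716681))) (u 52))) (b 51 (b 52
  (b 56 (b 62 (q 0x4fb80a6401) (u 13)) (b 62 (u 11) (q 0x3720084201))) (b 53 (b 56 (b 62 (u 7) (q
  0x3226710581)) (b 62 (q 0x372c204381) (u 7))) (u 52))) (u 50))) (b 45 (b 50 (b 52 (b 56 (b 62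
  (q 0x4abe4326ad) (u 19)) (b 62 (u 21) (q 0x3726096401))) (b 53 (b 56 (b 62 (u 25) (q
  0x3c82704581)) (b 62 (q 0x30a6210101) (q 0x298e116081))) (u 52))) (b 51 (b 52 (b 56 (b 62 (u
  31) (q 0x30b421a581)) (b 62 (q 0x3808110381) (q 0x2cce688101))) (b 53 (b 56 (b 62 (q
  0x3384e3e801) (q 0x2a88416681)) (b 62 (q 0x299a40e581) (q 0x33b9710681))) (u 52))) (u 50))) (u
  44))) (b 43 (b 44 (b 50 (b 52 (b 56 (b 62 (q 0x4c9069612b) (u 21)) (b 62 (u 19) (q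
  0x308ecb4801))) (b 53 (b 56 (b 62 (u 31) (q 0x3e1a59c081)) (b 62 (q 0x3704cacf81) (q
  0x2d5a21c581))) (u 52))) (b 51 (b 52 (b 56 (b 62 (u 25) (q 0x3b0e708101)) (b 62 (q
  0x3d16688081) (q 0x2990708681))) (b 53 (b 56 (b 62 (q 0x33b8102681) (q 0x2984708081)) (b 62 (q
  0x2b0269c401) (q 0x3e5608e101))) (u 52))) (u 50))) (b 45 (b 50 (b 52 (b 56 (b 62 (u 7) (q
  0x310e9a0c81)) (b 62 (q 0x3210832981) (u 7))) (b 53 (b 56 (b 62 (q 0x321a9b8801) (q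
  0x2fd6388701)) (b 62 (q 0x281c404081) (q 0x30ad388681))) (u 52))) (b 51 (b 52 (b 56 (b 62 (q
  0x3e10684701) (q 0x299c108681)) (b 62 (q 0x2b50682101) (q 0x3408e6dac1))) (b 53 (b 56 (b 62 (u
  7) (q 0x3384cebd41)) (b 62 (q 0x30b3396201) (u 7))) (u 52))) (u 50))) (u 44))) (u 42))) (b 39
  (b 42 (b 44 (b 50 (b 52 (b 56 (b 62 (q 0x4b32210827) (u 25)) (b 62 (u 31) (q 0x35ac704681))) (b
  53 (b 56 (b 62 (u 19) (q 0x3a96088401)) (b 62 (q 0x3c82584681) (q 0x2c82388401))) (u 52))) (b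
  51 (b 52 (b 56 (b 62 (u 21) (q 0x3090b34e01)) (b 62 (q 0x320e834a81) (q 0x29c810e401))) (b 53
  (b 56 (b 62 (q 0x358efaae01) (q 0x29d071a201)) (b 62 (q 0x2802116201) (q 0x3435388081))) (u
  52))) (u 50))) (b 45 (b 50 (b 52 (b 56 (b 62 (u 11) (q 0x3388ab8c81)) (b 62 (q 0x3d1639a401) (q
  0x281020e681))) (b 53 (b 56 (b 62 (q 0x3120408681) (u 11)) (b 62 (q 0x2a8811a401) (q
  0x3110d7fb41))) (u 52))) (b 51 (b 52 (b 56 (b 62 (q 0x33aa588701) (q 0x2b5c108581)) (b 62 (u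
  11) (q 0x3688ce7b41))) (b 53 (b 56 (b 62 (q 0x29da702201) (q 0x35bf402681)) (b 62 (q
  0x3cce702201) (u 11))) (u 52))) (u 50))) (u 44))) (b 43 (b 44 (b 50 (b 52 (b 56 (b 62 (u 13) (q
  0x3584e2c801)) (b 62 (q 0x310e832f81) (q 0x2fda584081))) (b 53 (b 56 (b 62 (q 0x3582fb2b01) (q
  0x2e0240e681)) (b 62 (u 13) (q 0x3adc116201))) (u 52))) (b 51 (b 52 (b 56 (b 62 (q
  0x3684b34801) (u 13)) (b 62 (q 0x2ac4390701) (q 0x323f59a381))) (b 53 (b 56 (b 62 (q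
  0x29c271a381) (q 0x3102fe7cc1)) (b 62 (q 0x3416e6bd41) (u 13))) (u 52))) (u 50))) (b 45 (b 50
  (b 52 (b 56 (b 62 (q 0x3432204081) (q 0x2d1a090581)) (b 62 (q 0x2804202581) (q 0x372d110581)))
  (b 53 (b 56 (b 62 (q 0x2e0459a701) (q 0x359ab7f9c1)) (b 62 (q 0x3e4e588681) (u 19))) (u 52)))
  (b 51 (b 52 (b 56 (b 62 (q 0x2e16702681) (q 0x3090cebfc1)) (b 62 (q 0x33ad582201) (u 21))) (b
  53 (b 56 (b 62 (q 0x35ad09a701) (u 25)) (b 62 (u 31) (q 0x4d56cdaac1))) (u 52))) (u 50))) (u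
  44))) (u 42))) (u 38)))

open T in
def t1_1 : T :=
  (b 29 (b 38 (b 42 (b 44 (b 50 (b 52 (b 56 (b 62 (q 0x4a88e0211d) (u 35)) (b 62 (u 37) (q
  0x3832a8e201))) (b 53 (b 56 (b 62 (u 41) (q 0x3caab26381)) (b 62 (q 0x32160a6381) (q
  0x2426a8eb01))) (u 52))) (b 51 (b 52 (b 56 (b 62 (u 47) (q 0x358222a101)) (b 62 (q
  0x399012a801) (q 0x240e0a0101))) (b 53 (b 56 (b 62 (q 0x3420b04a81) (q 0x2cc882a981)) (b 62 (q
  0x240422c081) (q 0x3226e75cc1))) (u 52))) (u 50))) (b 45 (b 50 (b 52 (b 56 (b 62 (u 49) (q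
  0x39a06aa201)) (b 62 (q 0x36a6110d01) (q 0x2fd60b2401))) (b 53 (b 56 (b 62 (q 0x3402fa6581) (q
  0x25b841a201)) (b 62 (q 0x2132a9af81) (q 0x1804fd0081))) (u 52))) (b 51 (b 52 (b 56 (b 62 (q
  0x39b4fa0401) (q 0x281a584d01)) (b 62 (q 0x221a3aa101) (q 0x1590b5a101))) (b 53 (b 56 (b 62 (q
  0x2b4e988581) (q 0x142d696201)) (b 62 (q 0x10aae5a381) (q 0x2abf084201))) (u 52))) (u 50))) (u
  44))) (b 43 (b 44 (b 50 (b 52 (b 56 (b 62 (u 55) (q 0x30903ac681)) (b 62 (q 0x309623e681) (q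
  0x2384ca0981))) (b 53 (b 56 (b 62 (q 0x3c96e10981) (q 0x2804690c81)) (b 62 (q 0x20a05bec81) (q
  0x182c772101))) (u 52))) (b 51 (b 52 (b 56 (b 62 (q 0x33886ac081) (q 0x29a0d38581)) (b 62 (q
  0x281021af81) (q 0x1ff3779081))) (b 53 (b 56 (b 62 (q 0x277e9b8401) (q 0x1e26b1d381)) (b 62 (q
  0x1d6bcf9201) (q 0x2588e73d41))) (u 52))) (u 50))) (b 45 (b 50 (b 52 (b 56 (b 62 (q
  0x383e0b2101) (q 0x2760cb4081)) (b 62 (q 0x23b4402101) (q 0x342dd26801))) (b 53 (b 56 (b 62 (q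
  0x2b503a6581) (q 0x1778ca6401)) (b 62 (q 0x1e6d76b581) (q 0x2750584ac1))) (u 52))) (b 51 (b 52
  (b 56 (b 62 (q 0x2b4ee16201) (q 0x16b320e581)) (b 62 (q 0x1d046b9401) (q 0x26b913fb41))) (b 53
  (b 56 (b 62 (q 0x33ad826f81) (q 0x282b3b5cc1)) (b 62 (q 0x2988d56381) (q 0x3affcc8381))) (u
  52))) (u 50))) (u 44))) (u 42))) (b 39 (b 42 (b 44 (b 50 (b 52 (b 56 (b 62 (u 59) (q
  0x3e083acd01)) (b 62 (q 0x3c9ad10a81) (q 0x276cd32581))) (b 53 (b 56 (b 62 (q 0x309af84581) (q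
  0x2d60682201)) (b 62 (q 0x243e6b2801) (q 0x19ff779201))) (u 52))) (b 51 (b 52 (b 56 (b 62 (q
  0x342c3a0d01) (q 0x2cf8682581)) (b 62 (q 0x2e7468e401) (q 0x1b2a834381))) (b 53 (b 56 (b 62 (q
  0x2684aacf81) (q 0x159ae10081)) (b 62 (q 0x121a80e101) (q 0x2808ff9d41))) (u 52))) (u 50))) (b
  45 (b 50 (b 52 (b 56 (b 62 (q 0x3cb4aa0401) (q 0x23b8688081)) (b 62 (q 0x2774faa381) (q
  0x10bf232401))) (b 53 (b 56 (b 62 (q 0x2f9021a801) (q 0x39e0202681)) (b 62 (q 0x15b2088681) (q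
  0x2742690b41))) (u 52))) (b 51 (b 52 (b 56 (b 62 (q 0x220443e381) (q 0x1b67fdd681)) (b 62 (q
  0x3e7e404681) (q 0x275a3909c1))) (b 53 (b 56 (b 62 (q 0x122d6a0401) (q 0x2748690b41)) (b 62 (q
  0x2a8e433101) (q 0x3cc8427b41))) (u 52))) (u 50))) (u 44))) (b 43 (b 44 (b 50 (b 52 (b 56 (b 62
  (q 0x3096fb2101) (q 0x220ee2cd01)) (b 62 (q 0x2744588c81) (q 0x10b4fd0581))) (b 53 (b 56 (b 62
  (q 0x208883ec81) (q 0x1778cac681)) (b 62 (q 0x3aec116681) (q 0x2b1a9f5ac1))) (u 52))) (b 51 (b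
  52 (b 56 (b 62 (q 0x2cc2d38b01) (q 0x36b8ce7fc1)) (b 62 (q 0x1402d33681) (q 0x2e7f9eb581))) (b
  53 (b 56 (b 62 (q 0x1d67add581) (q 0x275609a9c1)) (b 62 (q 0x2439108681) (q 0x3133ada9c1))) (u
  52))) (u 50))) (b 45 (b 50 (b 52 (b 56 (b 62 (q 0x2aced3ee01) (q 0x1132b48081)) (b 62 (q
  0x1ac2588101) (q 0x2d3fb42ac1))) (b 53 (b 56 (b 62 (q 0x1760fb2201) (q 0x2748090b41)) (b 62 (q
  0x23a721a101) (q 0x313542dfc1))) (u 52))) (b 51 (b 52 (b 56 (b 62 (q 0x176bb67381) (q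
  0x277f9eb081)) (b 62 (q 0x25843a7681) (q 0x30ad68e9c1))) (b 53 (b 56 (b 62 (q 0x2e3342dd41) (q
  0x339ab48401)) (b 62 (q 0x3e50d48ac1) (u 60))) (u 52))) (u 50))) (u 44))) (u 42))) (u 38))) (u
  28))

open T in
def t1_2 : T :=
  (b 28 (b 38 (b 42 (b 44 (b 50 (b 52 (b 56 (b 62 (q 0x440499cd01) (u 37)) (b 62 (u 35) (q
  0x3a96984801))) (b 53 (b 56 (b 62 (u 47) (q 0x3238a84801)) (b 62 (q 0x312c732f81) (q
  0x2c8810ea81))) (u 52))) (b 51 (b 52 (b 56 (b 62 (u 41) (q 0x30b4b04801)) (b 62 (q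
  0x3a8ef9cd01) (q 0x2e6c108381))) (b 53 (b 56 (b 62 (q 0x3402808381) (q 0x2ccea84081)) (b 62 (q
  0x2e440aa201) (q 0x3988e7fd41))) (u 52))) (u 50))) (b 45 (b 50 (b 52 (b 56 (b 62 (u 55) (q
  0x3d203b8701)) (b 62 (q 0x3988582801) (q 0x2fe05b4c81))) (b 53 (b 56 (b 62 (q 0x3420704c81) (q
  0x2b78716381)) (b 62 (q 0x20a6210101) (q 0x1d6a21c101))) (u 52))) (b 51 (b 52 (b 56 (b 62 (q
  0x39bed02701) (q 0x26ead26081)) (b 62 (q 0x29a0abe201) (q 0x138443f081))) (b 53 (b 56 (b 62 (q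
  0x2096e20f81) (q 0x1e266ea381)) (b 62 (q 0x13a0cd6201) (q 0x240ed7fcc1))) (u 52))) (u 50))) (u
  44))) (b 43 (b 44 (b 50 (b 52 (b 56 (b 62 (u 49) (q 0x3b04096981)) (b 62 (q 0x30be584d01) (q
  0x2b32826081))) (b 53 (b 56 (b 62 (q 0x3b1640ef81) (q 0x2ac29acc81)) (b 62 (q 0x25823ac701) (q
  0x16f9d6b081))) (u 52))) (b 51 (b 52 (b 56 (b 62 (q 0x39a0734101) (q 0x2384d10701)) (b 62 (q
  0x2cc4d26b01) (q 0x1b1b9a0101))) (b 53 (b 56 (b 62 (q 0x26e6e20201) (q 0x19b5396201)) (b 62 (q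
  0x159cafe381) (q 0x27083b5081))) (u 52))) (u 50))) (b 45 (b 50 (b 52 (b 56 (b 62 (q
  0x3fb4426581) (q 0x26f2d26081)) (b 62 (q 0x2ae0096401) (q 0x382b582401))) (b 53 (b 56 (b 62 (q
  0x26d6210981) (q 0x17353b8581)) (b 62 (q 0x19b283e401) (q 0x29ab402581))) (u 52))) (b 51 (b 52
  (b 56 (b 62 (q 0x2116fa0981) (q 0x16e6d20401)) (b 62 (q 0x1220b50581) (q 0x2204e6bfc1))) (b 53
  (b 56 (b 62 (q 0x3d56826e01) (q 0x272dad0cc1)) (b 62 (q 0x272d5abcc1) (q 0x3b7f235381))) (u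
  52))) (u 50))) (u 44))) (u 42))) (b 39 (b 42 (b 44 (b 50 (b 52 (b 56 (b 62 (u 61) (q
  0x3e34c96381)) (b 62 (q 0x3732588a81) (q 0x2732d10b01))) (b 53 (b 56 (b 62 (q 0x33be5aae01) (q
  0x2fdc80e101)) (b 62 (q 0x212cc90f81) (q 0x1b20ab2381))) (u 52))) (b 51 (b 52 (b 56 (b 62 (q
  0x3b34faa581) (q 0x20b8804b01)) (b 62 (q 0x2102720201) (q 0x1a8ee42201))) (b 53 (b 56 (b 62 (q
  0x2816084a81) (q 0x1cffd67101)) (b 62 (q 0x1cf96f5081) (q 0x2839388081))) (u 52))) (u 50))) (b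
  45 (b 50 (b 52 (b 56 (b 62 (q 0x3584d3e081) (q 0x29e0584701)) (b 62 (q 0x26f483e081) (q
  0x108472d581))) (b 53 (b 56 (b 62 (q 0x2d72138a81) (q 0x39dccaa801)) (b 62 (q 0x1110cb5701) (q
  0x221c9f5b41))) (u 52))) (b 51 (b 52 (b 56 (b 62 (q 0x2cd6aa0f81) (q 0x1aa0d1b701)) (b 62 (q
  0x3802b67e41) (q 0x23825ad701))) (b 53 (b 56 (b 62 (q 0x1a9c102581) (q 0x2cffb67701)) (b 62 (q
  0x2108b56701) (q 0x35b5e48cc1))) (u 52))) (u 50))) (u 44))) (b 43 (b 44 (b 50 (b 52 (b 56 (b 62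
  (q 0x340e134201) (q 0x2ca0b34401)) (b 62 (q 0x2d20cac401) (q 0x1affe67401))) (b 53 (b 56 (b 62
  (q 0x2e0e710801) (q 0x1116ff8701)) (b 62 (q 0x3f82af59c1) (q 0x2c9c9d0381))) (u 52))) (b 51 (b
  52 (b 56 (b 62 (q 0x2adc220401) (q 0x39e0204701)) (b 62 (q 0x1cd6d04701) (q 0x2d2741c201))) (b
  53 (b 56 (b 62 (q 0x1b20fb8401) (q 0x2e2b427cc1)) (b 62 (q 0x210e42b701) (q 0x322be4ed41))) (u
  52))) (u 50))) (b 45 (b 50 (b 52 (b 56 (b 62 (q 0x2b44238381) (q 0x16edfeb101)) (b 62 (q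
  0x1e5b9eb081) (q 0x2cb9582401))) (b 53 (b 56 (b 62 (q 0x10bead0381) (q 0x282710e701)) (b 62 (q
  0x211c0a7381) (q 0x3ac470e9c1))) (u 52))) (b 51 (b 52 (b 56 (b 62 (q 0x19ed6f3201) (q
  0x26d011cfc1)) (b 62 (q 0x2388733581) (q 0x3fc8096e41))) (b 53 (b 56 (b 62 (q 0x26ce408ac1) (q
  0x3d5c233ac1)) (b 62 (q 0x32350a7e41) (u 58))) (u 52))) (u 50))) (u 44))) (u 42))) (u 38))) (b
  29 (b 38 (b 42 (b 44 (b 50 (b 52 (b 56 (b 62 (u 7) (q 0x3b109a0101)) (b 62 (q 0x382c416c81) (u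
  7))) (b 53 (b 56 (b 62 (q 0x3b38808981) (q 0x24043aab01)) (b 62 (q 0x26c4b20081) (q
  0x338277fe41))) (u 52))) (b 51 (b 52 (b 56 (b 62 (q 0x323e12c081) (q 0x274812ca81)) (b 62 (q
  0x240882a381) (q 0x3b1d9a0081))) (b 53 (b 56 (b 62 (u 7) (q 0x3d60102a81)) (b 62 (q
  0x3384d5bcc1) (u 7))) (u 52))) (u 50))) (b 45 (b 50 (b 52 (b 56 (b 62 (q 0x3584f88e01) (q
  0x2744832081)) (b 62 (q 0x26d0120981) (q 0x3fc4432581))) (b 53 (b 56 (b 62 (q 0x2d56826381) (q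
  0x10bfa84801)) (b 62 (q 0x1d5d6f9981) (q 0x2b5bff9101))) (u 52))) (b 51 (b 52 (b 56 (b 62 (q
  0x208e83e201) (q 0x1cc83aa981)) (b 62 (q 0x1139ab4801) (q 0x22260bf101))) (b 53 (b 56 (b 62 (q
  0x3d56826381) (q 0x2588775cc1)) (b 62 (q 0x24336e0741) (q 0x36c2d4ecc1))) (u 52))) (u 50))) (u
  44))) (b 43 (b 44 (b 50 (b 52 (b 56 (b 62 (q 0x33b2816401) (q 0x2756982801)) (b 62 (q
  0x26e0116981) (q 0x34399a0081))) (b 53 (b 56 (b 62 (q 0x2ca0988581) (q 0x1238b0e981)) (b 62 (q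
  0x1416afe801) (q 0x2aff6dd981))) (u 52))) (b 51 (b 52 (b 56 (b 62 (q 0x2088838381) (q
  0x10a6396801)) (b 62 (q 0x1f905ab981) (q 0x2ac49a06c1))) (b 53 (b 56 (b 62 (q 0x39be6f5cc1) (q
  0x2ae02266c1)) (b 62 (q 0x25889b3381) (q 0x3fce826741))) (u 52))) (u 50))) (b 45 (b 50 (b 52 (b
  56 (b 62 (u 7) (q 0x359dc84d01)) (b 62 (q 0x3d26b5bac1) (u 7))) (b 53 (b 56 (b 62 (q
  0x36e0e08381) (q 0x2e2b42d741)) (b 62 (q 0x2d5daed581) (q 0x37500b9fc1))) (u 52))) (b 51 (b 52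
  (b 56 (b 62 (q 0x36fe9a0581) (q 0x20969ad401)) (b 62 (q 0x211681b981) (q 0x36d0102fc1))) (b 53
  (b 56 (b 62 (u 7) (q 0x3ae0d48cc1)) (b 62 (q 0x375020ecc1) (u 7))) (u 52))) (u 50))) (u 44)))
  (u 42))) (b 39 (b 42 (b 44 (b 50 (b 52 (b 56 (b 62 (q 0x323eb10581) (q 0x26ec396a81)) (b 62 (q
  0x2110b0ea81) (q 0x3b1bd32401))) (b 53 (b 56 (b 62 (q 0x29c4a82e01) (q 0x1202b1da81)) (b 62 (q
  0x15909feb01) (q 0x29ce22afc1))) (u 52))) (b 51 (b 52 (b 56 (b 62 (q 0x23b8b04081) (q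
  0x1742a8eb01)) (b 62 (q 0x13a0d08a81) (q 0x211b22ab01))) (b 53 (b 56 (b 62 (q 0x309df90e01) (q
  0x29c2aac741)) (b 62 (q 0x29f375ba81) (q 0x309de4efc1))) (u 52))) (u 50))) (b 45 (b 50 (b 52 (b
  56 (b 62 (q 0x2ab823e081) (q 0x111bd16c81)) (b 62 (q 0x15b9810d01) (q 0x2b74c966c1))) (b 53 (b
  56 (b 62 (q 0x1116f8ee01) (q 0x2138835a81)) (b 62 (q 0x43e09d101) (q 0x1090e5dfc1))) (u 52)))
  (b 51 (b 52 (b 56 (b 62 (q 0x10849eaf81) (q 0xaa0e1bb41)) (b 62 (q 0x20a0b73e41) (q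
  0x19ed590e41))) (b 53 (b 56 (b 62 (q 0x29fe5b86c1) (q 0x183f22dd41)) (b 62 (q 0x12393adcc1) (q
  0x2ab5cce101))) (u 52))) (u 50))) (u 44))) (b 43 (b 44 (b 50 (b 52 (b 56 (b 62 (q 0x25b4e08381)
  (q 0x1802af8d01)) (b 62 (q 0x19fe3acc81) (q 0x20b97726c1))) (b 53 (b 56 (b 62 (q 0x16eb767f81)
  (q 0xe35802fc1)) (b 62 (q 0x23a0af2f81) (q 0x110282be41))) (u 52))) (b 51 (b 52 (b 56 (b 62 (q
  0x1382756e01) (q 0x25acfe0d01)) (b 62 (q 0x8169c4ac1) (q 0x14169ebfc1))) (b 53 (b 56 (b 62 (q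
  0x22356d0cc1) (q 0x16c4408cc1)) (b 62 (q 0x1773216d41) (q 0x29ced73081))) (u 52))) (u 50))) (b
  45 (b 50 (b 52 (b 56 (b 62 (q 0x374420ef81) (q 0x282dac2741)) (b 62 (q 0x2f9bd32081) (q
  0x36ed439581))) (b 53 (b 56 (b 62 (q 0x212d748ac1) (q 0x1fe7c84b41)) (b 62 (q 0x1127e72ac1) (q
  0x23abe56401))) (u 52))) (b 51 (b 52 (b 56 (b 62 (q 0x283e6f8201) (q 0x16d0b48ac1)) (b 62 (q
  0x1ad039db41) (q 0x26c2fd6e41))) (b 53 (b 56 (b 62 (q 0x33becf5401) (q 0x2e33235401)) (b 62 (q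
  0x20b5216cc1) (q 0x3fd6235381))) (u 52))) (u 50))) (u 44))) (u 42))) (u 38))) (u 28)))

open T in
def t1_3 : T :=
  (u 26)

open T in
def t1_4 : T :=
  (b 28 (b 38 (b 42 (b 44 (b 50 (b 52 (b 56 (b 62 (q 0x4e32834201) (u 41)) (b 62 (u 47) (q
  0x372c3a6801))) (b 53 (b 56 (b 62 (u 35) (q 0x3ab89ac381)) (b 62 (q 0x3708b20381) (q
  0x242c102381))) (u 52))) (b 51 (b 52 (b 56 (b 62 (u 37) (q 0x33a0e1cd01)) (b 62 (q
  0x368280e101) (q 0x26aa982b01))) (b 53 (b 56 (b 62 (q 0x323e120981) (q 0x2d48b04381)) (b 62 (q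
  0x25c2384801) (q 0x31339aa801))) (u 52))) (u 50))) (b 45 (b 50 (b 52 (b 56 (b 62 (u 59) (q
  0x33aac9a801)) (b 62 (q 0x3204d20381) (q 0x2ff2726d01))) (b 53 (b 56 (b 62 (q 0x311aa88401) (q
  0x2d6a438c81)) (b 62 (q 0x2d50abec81) (q 0x110e726201))) (u 52))) (b 51 (b 52 (b 56 (b 62 (q
  0x3d2683e681) (q 0x2838ab4401)) (b 62 (q 0x2e6a3b4801) (q 0x171ad10381))) (b 53 (b 56 (b 62 (q
  0x2d66702101) (q 0x16b8b50081)) (b 62 (q 0x180e682101) (q 0x25c210ecc1))) (u 52))) (u 50))) (u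
  44))) (b 43 (b 44 (b 50 (b 52 (b 56 (b 62 (u 61) (q 0x3688b38401)) (b 62 (q 0x36be3b2801) (q
  0x210899a381))) (b 53 (b 56 (b 62 (q 0x30a6432b01) (q 0x2fd03ac101)) (b 62 (q 0x2d4ec9c401) (q
  0x1cac9a0381))) (u 52))) (b 51 (b 52 (b 56 (b 62 (q 0x3f8442cd01) (q 0x2090e2cd01)) (b 62 (q
  0x2ac29acf81) (q 0x10b3404201))) (b 53 (b 56 (b 62 (q 0x2cdc0be681) (q 0x1cc2808101)) (b 62 (q
  0x142bf9c081) (q 0x2b02d73e41))) (u 52))) (u 50))) (b 45 (b 50 (b 52 (b 56 (b 62 (q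
  0x3e0e69c981) (q 0x210e9b4c81)) (b 62 (q 0x25f49a0681) (q 0x3ae039a701))) (b 53 (b 56 (b 62 (q
  0x2ae00b8f81) (q 0x1d42e04681)) (b 62 (q 0x1110fb5701) (q 0x25ce708e41))) (u 52))) (b 51 (b 52
  (b 56 (b 62 (q 0x24266a0f81) (q 0x1e34997701)) (b 62 (q 0x1e4e408681) (q 0x211cfce201))) (b 53
  (b 56 (b 62 (q 0x3e1aaedd41) (q 0x222b11a701)) (b 62 (q 0x2f84cf5b41) (q 0x3cffb6b701))) (u
  52))) (u 50))) (u 44))) (u 42))) (b 39 (b 42 (b 44 (b 50 (b 52 (b 56 (b 62 (u 49) (q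
  0x3720a82c81)) (b 62 (q 0x380211aa81) (q 0x29dad32a81))) (b 53 (b 56 (b 62 (q 0x3e1cc90801) (q
  0x212a21a081)) (b 62 (q 0x29d0f9c381) (q 0x17326a7081))) (u 52))) (b 51 (b 52 (b 56 (b 62 (q
  0x371a810101) (q 0x26b8d10801)) (b 62 (q 0x2e5af8e401) (q 0x1cc880e101))) (b 53 (b 56 (b 62 (q
  0x280839aa81) (q 0x13b3704201)) (b 62 (q 0x1d579f9381) (q 0x2b33384201))) (u 52))) (u 50))) (b
  45 (b 50 (b 52 (b 56 (b 62 (q 0x36b810ef81) (q 0x25d0682a81)) (b 62 (q 0x2b6a134f81) (q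
  0x112742a681))) (b 53 (b 56 (b 62 (q 0x2708e02681) (q 0x3e08fed9c1)) (b 62 (q 0x109a3a0401) (q
  0x2388b75fc1))) (u 52))) (b 51 (b 52 (b 56 (b 62 (q 0x29fe6a0a81) (q 0x1b57ff3401)) (b 62 (q
  0x33b9ab4801) (q 0x20a7433b41))) (b 53 (b 56 (b 62 (q 0x140eaa7681) (q 0x2cd06889c1)) (b 62 (q
  0x2090e6d9c1) (q 0x3390fc8081))) (u 52))) (u 50))) (u 44))) (b 43 (b 44 (b 50 (b 52 (b 56 (b 62
  (q 0x3fb472c401) (q 0x29f8b04d01)) (b 62 (q 0x25c2390f81) (q 0x1b325e0701))) (b 53 (b 56 (b 62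
  (q 0x29ec390701) (q 0x1fc8138401)) (b 62 (q 0x39ceca0f81) (q 0x283540e081))) (u 52))) (b 51 (b
  52 (b 56 (b 62 (q 0x269c420101) (q 0x3af4704201)) (b 62 (q 0x13be682401) (q 0x2d2742bcc1))) (b
  53 (b 56 (b 62 (q 0x1e33688701) (q 0x2690adc101)) (b 62 (q 0x21359cee41) (q 0x3390fc8101))) (u
  52))) (u 50))) (b 45 (b 50 (b 52 (b 56 (b 62 (q 0x29f8f82c81) (q 0x1af439c201)) (b 62 (q
  0x142069c381) (q 0x2d086bf701))) (b 53 (b 56 (b 62 (q 0x1427c8e081) (q 0x239ab42201)) (b 62 (q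
  0x2cb5702401) (q 0x3e48090d41))) (u 52))) (b 51 (b 52 (b 56 (b 62 (q 0x1ac80b8101) (q
  0x25c441ccc1)) (b 62 (q 0x2ace684b41) (q 0x342d708fc1))) (b 53 (b 56 (b 62 (q 0x2204b73ac1) (q
  0x3cff6b5081)) (b 62 (q 0x30b39d0e41) (u 54))) (u 52))) (u 50))) (u 44))) (u 42))) (u 38))) (b
  29 (b 38 (b 42 (b 44 (b 50 (b 52 (b 56 (b 62 (u 11) (q 0x32389ac101)) (b 62 (q 0x3402384801) (q
  0x27483a6b01))) (b 53 (b 56 (b 62 (q 0x309a10e981) (u 11)) (b 62 (q 0x2e44b0e801) (q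
  0x3abf126b01))) (u 52))) (b 51 (b 52 (b 56 (b 62 (q 0x3404226b01) (q 0x2fec226101)) (b 62 (u
  11) (q 0x3ceca84801))) (b 53 (b 56 (b 62 (q 0x25e0988081) (q 0x3aac757d41)) (b 62 (q
  0x374280ea81) (u 11))) (u 52))) (u 50))) (b 45 (b 50 (b 52 (b 56 (b 62 (q 0x322ad3e101) (q
  0x2382420a81)) (b 62 (q 0x25e0110a81) (q 0x1cbf0a6801))) (b 53 (b 56 (b 62 (q 0x2748c90e01) (q
  0x3090d5dfc1)) (b 62 (q 0x11105c8a81) (q 0x29aa5e0201))) (u 52))) (b 51 (b 52 (b 56 (b 62 (q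
  0x299082a381) (q 0x169d108a81)) (b 62 (q 0x38396bed01) (q 0x2b6a804741))) (b 53 (b 56 (b 62 (q
  0x10b5238801) (q 0x2388abf081)) (b 62 (q 0x26a074ea81) (q 0x33b55e0741))) (u 52))) (u 50))) (u
  44))) (b 43 (b 44 (b 50 (b 52 (b 56 (b 62 (q 0x3b32234f81) (q 0x282642c101)) (b 62 (q
  0x2766688b01) (q 0x111d402981))) (b 53 (b 56 (b 62 (q 0x2226138381) (q 0x3435b04381)) (b 62 (q
  0x111a766b01) (q 0x243512c381))) (u 52))) (b 51 (b 52 (b 56 (b 62 (q 0x2e2c202d01) (q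
  0x1e1ad10b01)) (b 62 (q 0x3e48d10681) (q 0x2ad7779981))) (b 53 (b 56 (b 62 (q 0x13b5138981) (q
  0x2e04fceb01)) (b 62 (q 0x2102b39201) (q 0x3d795ddb01))) (u 52))) (u 50))) (b 45 (b 50 (b 52 (b
  56 (b 62 (q 0x2afed04081) (q 0x1e08397c81)) (b 62 (q 0x1b603b2d01) (q 0x2220d39981))) (b 53 (b
  56 (b 62 (q 0x11026b2e01) (q 0x2ad7775e01)) (b 62 (q 0xf90aed801) (q 0x1adab50fc1))) (u 52)))
  (b 51 (b 52 (b 56 (b 62 (q 0x141ace0f81) (q 0x13409a201)) (b 62 (q 0x28345fe681) (q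
  0x1ac80a6e41))) (b 53 (b 56 (b 62 (q 0x277ee20b41) (q 0x16adaf8d41)) (b 62 (q 0x122b0a6cc1) (q
  0x2affd48381))) (u 52))) (u 50))) (u 44))) (u 42))) (b 39 (b 42 (b 44 (b 50 (b 52 (b 56 (b 62
  (q 0x36be0b8201) (q 0x2390220a81)) (b 62 (q 0x2cbe434381) (q 0x1fd79dda81))) (b 53 (b 56 (b 62
  (q 0x29ea220681) (q 0x3d5a0aa201)) (b 62 (q 0x1d67779801) (q 0x29d777fa81))) (u 52))) (b 51 (b
  52 (b 56 (b 62 (q 0x29c43a0d01) (q 0x1384b33801)) (b 62 (q 0x339ae57cc1) (q 0x2417ab9741))) (b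
  53 (b 56 (b 62 (q 0x108481da81) (q 0x29f5fdd081)) (b 62 (q 0x2d60a84741) (q 0x311d088d41))) (u
  52))) (u 50))) (b 45 (b 50 (b 52 (b 56 (b 62 (u 11) (q 0x322d810681)) (b 62 (q 0x3abe5e7b41) (q
  0x212a750801))) (b 53 (b 56 (b 62 (q 0x30aa5e7741) (u 11)) (b 62 (q 0x23a07675c1) (q
  0x309d427b41))) (u 52))) (b 51 (b 52 (b 56 (b 62 (q 0x3a8e9dd5c1) (q 0x212d42a681)) (b 62 (u
  11) (q 0x374e42d9c1))) (b 53 (b 56 (b 62 (q 0x23ad5e0741) (q 0x35d0d42fc1)) (b 62 (q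
  0x3b6a3b3e41) (u 11))) (u 52))) (u 50))) (u 44))) (b 43 (b 44 (b 50 (b 52 (b 56 (b 62 (q
  0x2b080b2f81) (q 0x1c88417e01)) (b 62 (q 0x1d1d204f81) (q 0xfd7add101))) (b 53 (b 56 (b 62 (q
  0x174811ac81) (q 0x221afddd41)) (b 62 (q 0x20b2af59c1) (q 0x19c8802d41))) (u 52))) (b 51 (b 52
  (b 56 (b 62 (q 0x1f8e75ad01) (q 0x223fe2c801)) (b 62 (q 0x209afb9401) (q 0x10b968ecc1))) (b 53
  (b 56 (b 62 (q 0x41d12be01) (q 0x1e1a42bfc1)) (b 62 (q 0x11359cee41) (q 0x25c8e75081))) (u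
  52))) (u 50))) (b 45 (b 50 (b 52 (b 56 (b 62 (q 0x3744202c81) (q 0x2838c97201)) (b 62 (q
  0x220e5e7b41) (q 0x19c409db41))) (b 53 (b 56 (b 62 (q 0x23b85ed741) (q 0x3750227b41)) (b 62 (q
  0x1202af29c1) (q 0x21359c2201))) (u 52))) (b 51 (b 52 (b 56 (b 62 (q 0x2e2710ed01) (q
  0x1aff2029c1)) (b 62 (q 0x3e6d5fed01) (q 0x2d39cce681))) (b 53 (b 56 (b 62 (q 0x1810d5ab41) (q
  0x2e3f235401)) (b 62 (q 0x2810cf9381) (q 0x39ffe44cc1))) (u 52))) (u 50))) (u 44))) (u 42))) (u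
  38))) (u 28)))

open T in
def t1_5 : T :=
  (b 27 (b 28 (b 38 (b 42 (b 44 (b 50 (b 52 (b 56 (b 62 (u 13) (q 0x3e0898e081)) (b 62 (q
  0x33be9aa101) (q 0x2fc8a84b01))) (b 53 (b 56 (b 62 (q 0x381c9aa101) (q 0x26e0088b01)) (b 62 (u
  13) (q 0x33b5aa6101))) (u 52))) (b 51 (b 52 (b 56 (b 62 (q 0x3802d38701) (u 13)) (b 62 (q
  0x2e42a8e801) (q 0x3fea120b01))) (b 53 (b 56 (b 62 (q 0x2d48120981) (q 0x3388fdbcc1)) (b 62 (q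
  0x32173a0b01) (u 13))) (u 52))) (u 50))) (b 45 (b 50 (b 52 (b 56 (b 62 (q 0x3a84e34381) (q
  0x2ca60aa401)) (b 62 (q 0x26c8c9cf81) (q 0x10bf3a0981))) (b 53 (b 56 (b 62 (q 0x2e08a84c81) (q
  0x16ce704a81)) (b 62 (q 0x35dc22a981) (q 0x243511be41))) (u 52))) (b 51 (b 52 (b 56 (b 62 (q
  0x25e640ea81) (q 0x36ea438701)) (b 62 (q 0x1cf4382a81) (q 0x212a6f35c1))) (b 53 (b 56 (b 62 (q
  0x183ed44981) (q 0x2702abf381)) (b 62 (q 0x2717ab96c1) (q 0x36f3135201))) (u 52))) (u 50))) (u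
  44))) (b 43 (b 44 (b 50 (b 52 (b 56 (b 62 (q 0x30ace34201) (q 0x2fc4238b01)) (b 62 (q
  0x2ad0cbe081) (q 0x1732d2b801))) (b 53 (b 56 (b 62 (q 0x21320ac381) (q 0x110e417b01)) (b 62 (q
  0x3d4ef9c401) (q 0x29a06ec081))) (u 52))) (b 51 (b 52 (b 56 (b 62 (q 0x2cf4138701) (q
  0x32385f36c1)) (b 62 (q 0x16c439cb01) (q 0x27046e0b01))) (b 53 (b 56 (b 62 (q 0x19b8cc8801) (q
  0x241bfc8cc1)) (b 62 (q 0x213580e081) (q 0x33885db801))) (u 52))) (u 50))) (b 45 (b 50 (b 52 (b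
  56 (b 62 (q 0x29b8204f81) (q 0x1708397d01)) (b 62 (q 0x1834ac2c81) (q 0x243f9a0d01))) (b 53 (b
  56 (b 62 (q 0x1710d66f81) (q 0x2170abc81)) (b 62 (q 0x2810e756c1) (q 0x19bf108e41))) (u 52)))
  (b 51 (b 52 (b 56 (b 62 (q 0x1826710e01) (q 0x209be335c1)) (b 62 (q 0x710b7e201) (q
  0x1e66b4efc1))) (b 53 (b 56 (b 62 (q 0x2126e33801) (q 0x1120d48cc1)) (b 62 (q 0x139b239d41) (q
  0x29b5382cc1))) (u 52))) (u 50))) (u 44))) (u 42))) (b 39 (b 42 (b 44 (b 50 (b 52 (b 56 (b 62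
  (q 0x3d02810701) (q 0x26c4b1c801)) (b 62 (q 0x2a9c82c081) (q 0x10b2e6ab01))) (b 53 (b 56 (b 62
  (q 0x2210b02801) (q 0x141ce32801)) (b 62 (q 0x37026f5e41) (q 0x271be6c5c1))) (u 52))) (b 51 (b
  52 (b 56 (b 62 (q 0x2f90e34101) (q 0x3fe041ce01)) (b 62 (q 0x1e423be801) (q 0x2420cc8101))) (b
  53 (b 56 (b 62 (q 0x1738fa7b01) (q 0x2733b1b5c1)) (b 62 (q 0x220ee60081) (q 0x3e6ccc8fc1))) (u
  52))) (u 50))) (b 45 (b 50 (b 52 (b 56 (b 62 (q 0x280ee02c81) (q 0x1ca7808e01)) (b 62 (q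
  0x171bc88f81) (q 0xe505c8c81))) (b 53 (b 56 (b 62 (q 0x1382827c81) (q 0x25f882afc1)) (b 62 (q
  0x23b96fe5c1) (q 0x1204fead41))) (u 52))) (b 51 (b 52 (b 56 (b 62 (q 0x113e808d01) (q
  0x2217d336c1)) (b 62 (q 0x2233d2d9c1) (q 0x19dcd2dcc1))) (b 53 (b 56 (b 62 (q 0xb5c9f8a81) (q
  0x1b5c427fc1)) (b 62 (q 0x1aa06fee41) (q 0x2a84cff381))) (u 52))) (u 50))) (u 44))) (b 43 (b 44
  (b 50 (b 52 (b 56 (b 62 (u 13) (q 0x31205eb6c1)) (b 62 (q 0x39dc3b2081) (q 0x2d1781bac1))) (b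
  53 (b 56 (b 62 (q 0x33a7b20701) (q 0x21109e0701)) (b 62 (u 13) (q 0x35d008ed41))) (u 52))) (b
  51 (b 52 (b 56 (b 62 (q 0x3e2c6d79c1) (u 13)) (b 62 (q 0x2e579db801) (q 0x382b204fc1))) (b 53
  (b 56 (b 62 (q 0x2097727ac1) (q 0x39c48176c1)) (b 62 (q 0x341be4ed41) (u 13))) (u 52))) (u
  50))) (b 45 (b 50 (b 52 (b 56 (b 62 (q 0x3e1b0b2381) (q 0x2cb86f4101)) (b 62 (q 0x2702cab381)
  (q 0x18346d7ac1))) (b 53 (b 56 (b 62 (q 0x2832f9b381) (q 0x16f85f29c1)) (b 62 (q 0x39d7d79401)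
  (q 0x21393ab081))) (u 52))) (b 51 (b 52 (b 56 (b 62 (q 0x242b1179c1) (q 0x35d0ac49c1)) (b 62 (q
  0x170222b9c1) (q 0x25f3708fc1))) (b 53 (b 56 (b 62 (q 0x140839bac1) (q 0x26dcac49c1)) (b 62 (q
  0x2235702e41) (q 0x3739cff201))) (u 52))) (u 50))) (u 44))) (u 42))) (u 38))) (b 29 (b 38 (b 42
  (b 44 (b 50 (b 52 (b 56 (b 62 (q 0x3ca0204081) (q 0x26ea808b01)) (b 62 (q 0x25ea20e101) (q
  0x36ea802981))) (b 53 (b 56 (b 62 (q 0x2e0812a081) (q 0x39a0d57741)) (b 62 (q 0x3aac5f56c1) (u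
  35))) (u 52))) (b 51 (b 52 (b 56 (b 62 (q 0x2d2a102381) (q 0x35e6120b01)) (b 62 (q
  0x312c779cc1) (u 37))) (b 53 (b 56 (b 62 (q 0x321d12c081) (u 41)) (b 62 (u 47) (q
  0x41023bf990))) (u 52))) (u 50))) (b 45 (b 50 (b 52 (b 56 (b 62 (q 0x26c2238381) (q
  0x15ff75b081)) (b 62 (q 0x180ed1d101) (q 0x23a0742101))) (b 53 (b 56 (b 62 (q 0x1102ab2201) (q
  0x2e200bfa81)) (b 62 (q 0x2435e6a5c1) (q 0x3a9d984e41))) (u 52))) (b 51 (b 52 (b 56 (b 62 (q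
  0x1b74fb8381) (q 0x2d17a82381)) (b 62 (q 0x29aae735c1) (q 0x312a6c2981))) (b 53 (b 56 (b 62 (q
  0x2b6620e6c1) (q 0x39a0fea081)) (b 62 (q 0x3a9d99bd41) (u 60))) (u 52))) (u 50))) (u 44))) (b
  43 (b 44 (b 50 (b 52 (b 56 (b 62 (q 0x2808d02101) (q 0x1e1720e101)) (b 62 (q 0x15c8b0e081) (q
  0x241d102981))) (b 53 (b 56 (b 62 (q 0x120499d381) (q 0x26e612cfc1)) (b 62 (q 0x21390976c1) (q
  0x3b266f9081))) (u 52))) (b 51 (b 52 (b 56 (b 62 (q 0x1e3eaf4201) (q 0x2e332176c1)) (b 62 (q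
  0x2426b33201) (q 0x36dd5f3201))) (b 53 (b 56 (b 62 (q 0x2120d4e981) (q 0x3ff56f3201)) (b 62 (q
  0x374eb025c1) (u 58))) (u 52))) (u 50))) (b 45 (b 50 (b 52 (b 56 (b 62 (q 0x3e32aed741) (q
  0x2e026c4d01)) (b 62 (q 0x2432b74101) (q 0x30abfe0e41))) (b 53 (b 56 (b 62 (q 0x212de08f81) (q
  0x1e35397741)) (b 62 (q 0x1e66d506c1) (q 0x25ff084741))) (u 52))) (b 51 (b 52 (b 56 (b 62 (q
  0x298eb5d6c1) (q 0x1cd73b86c1)) (b 62 (q 0x1f8ecd7741) (q 0x2d040bf6c1))) (b 53 (b 56 (b 62 (q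
  0x36edd73981) (q 0x2adb98e741)) (b 62 (q 0x241d39b801) (q 0x308e9a06c1))) (u 52))) (u 50))) (u
  44))) (u 42))) (b 39 (b 42 (b 44 (b 50 (b 52 (b 56 (b 62 (q 0x25c4e02201) (q 0x15e00b8201)) (b
  62 (q 0x11200be381) (q 0x2139b0ea81))) (b 53 (b 56 (b 62 (q 0x1817c88081) (q 0x26e02025c1)) (b
  62 (q 0x2f8eb1b081) (q 0x35ec76afc1))) (u 52))) (b 51 (b 52 (b 56 (b 62 (q 0x1e1b0ac101) (q
  0x2417108801)) (b 62 (q 0x209d3b95c1) (q 0x36d7779381))) (b 53 (b 56 (b 62 (q 0x242cd736c1) (q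
  0x35ea6eccc1)) (b 62 (q 0x3d79a9d101) (u 54))) (u 52))) (u 50))) (b 45 (b 50 (b 52 (b 56 (b 62
  (q 0x39cee08c81) (q 0x2d02217e01)) (b 62 (q 0x2cad9f4741) (q 0x1ca7434741))) (b 53 (b 56 (b 62
  (q 0x2aa7c82e01) (q 0x39ddd60a81)) (b 62 (q 0x1b6a21d5c1) (q 0x26ea760fc1))) (u 52))) (b 51 (b
  52 (b 56 (b 62 (q 0x2aa7d17b41) (q 0x10aa76d5c1)) (b 62 (q 0x3fa05c4381) (q 0x2fdd5cea81))) (b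
  53 (b 56 (b 62 (q 0x1e1b0b5741) (q 0x29d70bf201)) (b 62 (q 0x208ecdd101) (q 0x30aa139cc1))) (u
  52))) (u 50))) (u 44))) (b 43 (b 44 (b 50 (b 52 (b 56 (b 62 (q 0x3217cbe081) (q 0x23b412be01))
  (b 62 (q 0x2e6b6d7081) (q 0x1ae7cb46c1))) (b 53 (b 56 (b 62 (q 0x24176ceac1) (q 0x1742cb55c1))
  (b 62 (q 0x3af939b081) (q 0x2cac5e0d41))) (u 52))) (b 51 (b 52 (b 56 (b 62 (q 0x20b49c4e01) (q
  0x3d08cffb01)) (b 62 (q 0x19db10e5c1) (q 0x2397233101))) (b 53 (b 56 (b 62 (q 0x1742d4e6c1) (q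
  0x2ae02176c1)) (b 62 (q 0x2217839b01) (q 0x3384b1b5c1))) (u 52))) (u 50))) (b 45 (b 50 (b 52 (b
  56 (b 62 (u 49) (q 0x35eb742c81)) (b 62 (q 0x35ed09bc81) (q 0x241b084ac1))) (b 53 (b 56 (b 62
  (q 0x30ad3beac1) (q 0x26f8757201)) (b 62 (q 0x21170b26c1) (q 0x15e06dd081))) (u 52))) (b 51 (b
  52 (b 56 (b 62 (q 0x323e9c4d01) (q 0x2feb2389c1)) (b 62 (q 0x2234b5df81) (q 0x1cf9fd0101))) (b
  53 (b 56 (b 62 (q 0x283ee1db41) (q 0x19ff097201)) (b 62 (q 0x11399d7381) (q 0x2ace133201))) (u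
  52))) (u 50))) (u 44))) (u 42))) (u 38))) (u 28))) (u 26))

open T in
def t1_6 : T :=
  (u 22)

open T in
def t1_7 : T :=
  (b 28 (b 38 (b 42 (b 44 (b 50 (b 52 (b 56 (b 62 (q 0x4810a9c20f) (u 49)) (b 62 (u 55) (q
  0x3702420581))) (b 53 (b 56 (b 62 (u 59) (q 0x381c0b2e01)) (b 62 (q 0x3690c84201) (q
  0x2d6a69c401))) (u 52))) (b 51 (b 52 (b 56 (b 62 (u 61) (q 0x343899aa81)) (b 62 (q
  0x3220426b01) (q 0x2e6c420981))) (b 53 (b 56 (b 62 (q 0x36bea90b01) (q 0x2cd0aa0b01)) (b 62 (q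
  0x209a816701) (q 0x34339a0b01))) (u 52))) (u 50))) (b 45 (b 50 (b 52 (b 56 (b 62 (u 35) (q
  0x398221ae01)) (b 62 (q 0x3408834081) (q 0x2726116401))) (b 53 (b 56 (b 62 (q 0x309c432201) (q
  0x2d6a6b8801)) (b 62 (q 0x2b44cbe981) (q 0x1a9c688401))) (u 52))) (b 51 (b 52 (b 56 (b 62 (q
  0x322681cf81) (q 0x20a6a96d01)) (b 62 (q 0x2b5c816081) (q 0x16aa733581))) (b 53 (b 56 (b 62 (q
  0x2d60f82e01) (q 0x1408fea681)) (b 62 (q 0x13ea9be701) (q 0x2996733681))) (u 52))) (u 50))) (u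
  44))) (b 43 (b 44 (b 50 (b 52 (b 56 (b 62 (u 37) (q 0x3cb8834401)) (b 62 (q 0x3cb4b08681) (q
  0x2696982401))) (b 53 (b 56 (b 62 (q 0x309681a101) (q 0x2802588c81)) (b 62 (q 0x23c8116c81) (q
  0x1b26832581))) (u 52))) (b 51 (b 52 (b 56 (b 62 (q 0x322009af81) (q 0x2cf4804e01)) (b 62 (q
  0x25a6682401) (q 0x13ebff9401))) (b 53 (b 56 (b 62 (q 0x23dc084e01) (q 0x1af5ccf701)) (b 62 (q
  0x19b3702681) (q 0x20b5696701))) (u 52))) (u 50))) (b 45 (b 50 (b 52 (b 56 (b 62 (q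
  0x3d0269cf81) (q 0x26a0d04981)) (b 62 (q 0x22345b2801) (q 0x3e74110081))) (b 53 (b 56 (b 62 (q
  0x23fe9a0101) (q 0x14325bf081)) (b 62 (q 0x199c0ad101) (q 0x2716139401))) (u 52))) (b 51 (b 52
  (b 56 (b 62 (q 0x221ae1c101) (q 0x1cebb7f101)) (b 62 (q 0x1e74210081) (q 0x272d584081))) (b 53
  (b 56 (b 62 (q 0x3b5a9bee01) (q 0x23ebb73101)) (b 62 (q 0x2fb5cdaac1) (q 0x3fdc102ac1))) (u
  52))) (u 50))) (u 44))) (u 42))) (b 39 (b 42 (b 44 (b 50 (b 52 (b 56 (b 62 (u 41) (q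
  0x3132238801)) (b 62 (q 0x36bea82d01) (q 0x282cab2681))) (b 53 (b 56 (b 62 (q 0x3a88b16f81) (q
  0x25a0238c81)) (b 62 (q 0x2d72b1a801) (q 0x12029c4681))) (u 52))) (b 51 (b 52 (b 56 (b 62 (q
  0x3b085aaf81) (q 0x2ce0e08d01)) (b 62 (q 0x241cd2a801) (q 0x11029c8701))) (b 53 (b 56 (b 62 (q
  0x29c2fb8a81) (q 0x1b1c5b3401)) (b 62 (q 0x16a0239581) (q 0x2816d73e41))) (u 52))) (u 50))) (b
  45 (b 50 (b 52 (b 56 (b 62 (q 0x383e438681) (q 0x29ea688081)) (b 62 (q 0x23dc202a81) (q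
  0x1c84fd0081))) (b 53 (b 56 (b 62 (q 0x2faaca0201) (q 0x3827090201)) (b 62 (q 0x1faa3f2201) (q
  0x2127b42fc1))) (u 52))) (b 51 (b 52 (b 56 (b 62 (q 0x2cc80aa581) (q 0x10ada9a201)) (b 62 (q
  0x3fad588701) (q 0x2416233701))) (b 53 (b 56 (b 62 (q 0x1e2af8f081) (q 0x2702435681)) (b 62 (q
  0x28275b3e41) (q 0x3cc8690fc1))) (u 52))) (u 50))) (u 44))) (b 43 (b 44 (b 50 (b 52 (b 56 (b 62
  (q 0x383ee34701) (q 0x26b4120b01)) (b 62 (q 0x2e56f9a201) (q 0x122b590101))) (b 53 (b 56 (b 62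
  (q 0x29d6b32f81) (q 0x1fe7d4f201)) (b 62 (q 0x3b1a9f5e41) (q 0x2b1612b201))) (u 52))) (b 51 (b
  52 (b 56 (b 62 (q 0x2fa0d2c201) (q 0x3d1cfeb9c1)) (b 62 (q 0x15a711c201) (q 0x26a721c101))) (b
  53 (b 56 (b 62 (q 0x1ce7d6b101) (q 0x2b27fd0cc1)) (b 62 (q 0x2816d44681) (q 0x321ce5a581))) (u
  52))) (u 50))) (b 45 (b 50 (b 52 (b 56 (b 62 (q 0x2234590701) (q 0x19da21c401)) (b 62 (q
  0x1e6b3e7581) (q 0x2c96e6dac1))) (b 53 (b 56 (b 62 (q 0x15a7432681) (q 0x282d6a7d41)) (b 62 (q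
  0x2727d5aac1) (q 0x3682e6b101))) (u 52))) (b 51 (b 52 (b 56 (b 62 (q 0x1fad682701) (q
  0x25ab11c401)) (b 62 (q 0x2102239581) (q 0x3590cc8701))) (b 53 (b 56 (b 62 (q 0x281ab6bd41) (q
  0x3ada43f9c1)) (b 62 (q 0x3cc42169c1) (u 46))) (u 52))) (u 50))) (u 44))) (u 42))) (u 38))) (b
  29 (b 38 (b 42 (b 44 (b 50 (b 52 (b 56 (b 62 (u 19) (q 0x39a0238a81)) (b 62 (q 0x312c990081) (q
  0x2e42832101))) (b 53 (b 56 (b 62 (q 0x342c832681) (q 0x212a81a201)) (b 62 (q 0x29be5ac681) (q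
  0x1d5ab08801))) (u 52))) (b 51 (b 52 (b 56 (b 62 (q 0x3f8812a581) (q 0x2766696d01)) (b 62 (q
  0x23c2988d01) (q 0x1108d02981))) (b 53 (b 56 (b 62 (q 0x280242ca81) (q 0x181a9bfa81)) (b 62 (q
  0x1ce60aab01) (q 0x242cd79cc1))) (u 52))) (u 50))) (b 45 (b 50 (b 52 (b 56 (b 62 (q
  0x35826b8a81) (u 19)) (b 62 (q 0x2204810c81) (q 0x399dc90081))) (b 53 (b 56 (b 62 (q
  0x2b42a90c81) (q 0x3cad238a81)) (b 62 (q 0x1402b6ac81) (q 0x2d724203c1))) (u 52))) (b 51 (b 52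
  (b 56 (b 62 (q 0x2b7812a681) (q 0x3d2afddb41)) (b 62 (q 0x1773b79d01) (q 0x283fb563c1))) (b 53
  (b 56 (b 62 (q 0x1590a9de01) (q 0x20bf6aa201)) (b 62 (q 0xf82108681) (q 0x1ce6116fc1))) (u
  52))) (u 50))) (u 44))) (b 43 (b 44 (b 50 (b 52 (b 56 (b 62 (q 0x381a426081) (q 0x2774420081))
  (b 62 (u 19) (q 0x3e66c84801))) (b 53 (b 56 (b 62 (q 0x20b212c581) (q 0x199612cc81)) (b 62 (q
  0x3e6c116801) (q 0x2ff28163c1))) (u 52))) (b 51 (b 52 (b 56 (b 62 (q 0x2cdafac081) (q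
  0x18100abd01)) (b 62 (q 0x3748434981) (q 0x2cebe4f401))) (b 53 (b 56 (b 62 (q 0x15b5e20f81) (q
  0xe109bfd41)) (b 62 (q 0x2cc8b1ae41) (q 0x1090ff3e41))) (u 52))) (u 50))) (b 45 (b 50 (b 52 (b
  56 (b 62 (q 0x23e0990081) (q 0x3cbf134981)) (b 62 (q 0x33e0990081) (u 19))) (b 53 (b 56 (b 62
  (q 0x13c4c82801) (q 0x2acffed081)) (b 62 (q 0x209dae03c1) (q 0x3e7fc9d801))) (u 52))) (b 51 (b
  52 (b 56 (b 62 (q 0x16b3fb8981) (q 0x20ad7663c1)) (b 62 (q 0x280242b981) (q 0x3d39116b41))) (b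
  53 (b 56 (b 62 (q 0x2126cfee01) (q 0x1d6b402b41)) (b 62 (q 0x141621dac1) (q 0x2216e50ac1))) (u
  52))) (u 50))) (u 44))) (u 42))) (b 39 (b 42 (b 44 (b 50 (b 52 (b 56 (b 62 (q 0x35b2e02401) (q
  0x23d0a88e01)) (b 62 (q 0x2744c9a801) (q 0x168f084c81))) (b 53 (b 56 (b 62 (u 19) (q
  0x3235438081)) (b 62 (q 0x3d6013eb01) (q 0x259d8353c1))) (u 52))) (b 51 (b 52 (b 56 (b 62 (q
  0x2cc4b3e401) (q 0x1584cf4e01)) (b 62 (q 0x1cf4090f81) (q 0xe4f42a581))) (b 53 (b 56 (b 62 (q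
  0x376a5ac101) (q 0x2b35402a81)) (b 62 (q 0x2cc45be9c1) (q 0x111d0a7d41))) (u 52))) (u 50))) (b
  45 (b 50 (b 52 (b 56 (b 62 (q 0x23c8cb8681) (q 0x30ade2a201)) (b 62 (q 0x174f9ed801) (q
  0x2690772801))) (b 53 (b 56 (b 62 (q 0x39e0090a81) (u 19)) (b 62 (q 0x20b53c89c1) (q
  0x374221ad41))) (u 52))) (b 51 (b 52 (b 56 (b 62 (q 0x1b5d9cfa81) (q 0x29edfdd681)) (b 62 (q
  0x26b3faad01) (q 0x1ce721ab41))) (b 53 (b 56 (b 62 (q 0x2827d50741) (q 0x34386bf201)) (b 62 (q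
  0x121a8399c1) (q 0x23d06a7d41))) (u 52))) (u 50))) (u 44))) (b 43 (b 44 (b 50 (b 52 (b 56 (b 62
  (q 0x2744b08f81) (q 0x1fcf9eb801)) (b 62 (q 0x33da5a0c81) (q 0x2d395ab741))) (b 53 (b 56 (b 62
  (q 0x3cac9cfd41) (q 0x24083f2801)) (b 62 (u 19) (q 0x3d4480f741))) (u 52))) (b 51 (b 52 (b 56
  (b 62 (q 0x1f9669db01) (q 0x2774b38cc1)) (b 62 (q 0x282be483c1) (q 0x1827116ac1))) (b 53 (b 56
  (b 62 (q 0x26ac10ff81) (q 0x17750969c1)) (b 62 (q 0x313e239681) (q 0x28045b5e41))) (u 52))) (u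
  50))) (b 45 (b 50 (b 52 (b 56 (b 62 (q 0x16a0590c81) (q 0x29e0c82741)) (b 62 (q 0x26a03d6c81)
  (q 0x310274fc81))) (b 53 (b 56 (b 62 (q 0x2b5dd4f801) (q 0x39c2ca0741)) (b 62 (q 0x35b5c8f741)
  (u 19))) (u 52))) (b 51 (b 52 (b 56 (b 62 (q 0xfb8760ac1) (q 0x1682b5dfc1)) (b 62 (q
  0x1f9ace7e41) (q 0x2ced090e41))) (b 53 (b 56 (b 62 (q 0x1b5aac8d41) (q 0x2cc2fd09c1)) (b 62 (q
  0x27446abe41) (q 0x3127fed401))) (u 52))) (u 50))) (u 44))) (u 42))) (u 38))) (u 28)))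

open T in
def t1_8 : T :=
  (b 27 (b 28 (b 38 (b 42 (b 44 (b 50 (b 52 (b 56 (b 62 (u 21) (q 0x3702810d01)) (b 62 (q
  0x3088110981) (q 0x26e6816081))) (b 53 (b 56 (b 62 (q 0x311699cc81) (q 0x2d425b2e01)) (b 62 (q
  0x26fe204a81) (q 0x122cab5981))) (u 52))) (b 51 (b 52 (b 56 (b 62 (q 0x3e3e234801) (q
  0x29a0708b01)) (b 62 (q 0x2cc2816a81) (q 0x1716434801))) (b 53 (b 56 (b 62 (q 0x2cfe404e01) (q
  0x1aa0110b01)) (b 62 (q 0x1096ce0a81) (q 0x25bf82c981))) (u 52))) (u 50))) (b 45 (b 50 (b 52 (b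
  56 (b 62 (q 0x3726834081) (q 0x2202d10801)) (b 62 (u 21) (q 0x398f834581))) (b 53 (b 56 (b 62
  (q 0x2b6af90201) (q 0x1238a9cc81)) (b 62 (q 0x39be6f9b41) (q 0x2d6d3f9401))) (u 52))) (b 51 (b
  52 (b 56 (b 62 (q 0x26fe81c201) (q 0x180f584d01)) (b 62 (q 0x36d622af81) (q 0x2fc25b4b41))) (b
  53 (b 56 (b 62 (q 0x1138990f81) (q 0xcc8d6a801)) (b 62 (q 0x280ff9bb41) (q 0x11109bfe41))) (u
  52))) (u 50))) (u 44))) (b 43 (b 44 (b 50 (b 52 (b 56 (b 62 (q 0x3b105b2081) (u 21)) (b 62 (q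
  0x2734990101) (q 0x3af2134801))) (b 53 (b 56 (b 62 (q 0x283299c081) (q 0x33c8982c81)) (b 62 (q
  0x17106e6c81) (q 0x213f3d6ac1))) (u 52))) (b 51 (b 52 (b 56 (b 62 (q 0x26ec408e01) (q
  0x3e3f810d01)) (b 62 (q 0x15bee42d01) (q 0x27103f4801))) (b 53 (b 56 (b 62 (q 0x1ccf6ebe01) (q
  0x212c70fe01)) (b 62 (q 0x1163f3f81) (q 0x1e569b5fc1))) (u 52))) (u 50))) (b 45 (b 50 (b 52 (b
  56 (b 62 (q 0x2e20d16401) (q 0x30bf120401)) (b 62 (q 0x33d6404c81) (u 21))) (b 53 (b 56 (b 62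
  (q 0x1e1682b981) (q 0x270fff26c1)) (b 62 (q 0x282d1393c1) (q 0x36c212de41))) (u 52))) (b 51 (b
  52 (b 56 (b 62 (q 0x13f411c801) (q 0x2b50120ac1)) (b 62 (q 0x2239d16081) (q 0x3d16fd0101))) (b
  53 (b 56 (b 62 (q 0x25abce0b41) (q 0x1d665adac1)) (b 62 (q 0x1d48f9cb41) (q 0x282d404ac1))) (u
  52))) (u 50))) (u 44))) (u 42))) (b 39 (b 42 (b 44 (b 50 (b 52 (b 56 (b 62 (q 0x3fa0404b01) (q
  0x2cb8110801)) (b 62 (q 0x2e42faa701) (q 0x1b2772ad01))) (b 53 (b 56 (b 62 (q 0x2838b16101) (q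
  0x10883ece01)) (b 62 (q 0x1a8f204f81) (q 0x6d0fc2101))) (u 52))) (b 51 (b 52 (b 56 (b 62 (u 21)
  (q 0x3b0fd20701)) (b 62 (q 0x3727faa081) (q 0x2fc88346c1))) (b 53 (b 56 (b 62 (q 0x3e0ffaa081)
  (q 0x2fd012ccc1)) (b 62 (q 0x2d736e7081) (q 0x1e560aacc1))) (u 52))) (u 50))) (b 45 (b 50 (b 52
  (b 56 (b 62 (q 0x2420a96081) (q 0x1c90138801)) (b 62 (q 0x3808b5b3c1) (q 0x2fcfb5b801))) (b 53
  (b 56 (b 62 (q 0x1232b60a81) (q 0x2135cbfb41)) (b 62 (q 0x209bb6a3c1) (q 0x19e05bfb41))) (u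
  52))) (b 51 (b 52 (b 56 (b 62 (q 0x309c9cfcc1) (q 0x241c827201)) (b 62 (u 21) (q
  0x309c3e0d01))) (b 53 (b 56 (b 62 (q 0x242a6d6f81) (q 0x1ff5e109c1)) (b 62 (q 0x30aab79201) (q
  0x2433e42581))) (u 52))) (u 50))) (u 44))) (b 43 (b 44 (b 50 (b 52 (b 56 (b 62 (q 0x2fb8b1c401)
  (q 0x33f8834401)) (b 62 (q 0x141cd1b801) (q 0x2b346e0401))) (b 53 (b 56 (b 62 (q 0x1e1b702b01)
  (q 0x282b708b01)) (b 62 (q 0x25b2e75ac1) (q 0x1427e44ac1))) (u 52))) (b 51 (b 52 (b 56 (b 62 (q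
  0x3233e2c401) (u 21)) (b 62 (q 0x20a09cf6c1) (q 0x3fe0727cc1))) (b 53 (b 56 (b 62 (q
  0x2f84ce73c1) (q 0x3cebb1be01)) (b 62 (q 0x1e750be9c1) (q 0x20ab9c4401))) (u 52))) (u 50))) (b
  45 (b 50 (b 52 (b 56 (b 62 (q 0x1e1c9fed01) (q 0x259bd2b3c1)) (b 62 (q 0x2acfe6d581) (q
  0x308481bd01))) (b 53 (b 56 (b 62 (q 0x6f8fa0201) (q 0x16dc12bfc1)) (b 62 (q 0x1ad60a0e41) (q
  0x2c96e42ac1))) (u 52))) (b 51 (b 52 (b 56 (b 62 (q 0x258f81cd01) (q 0x36c42339c1)) (b 62 (q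
  0x3234b79081) (u 21))) (b 53 (b 56 (b 62 (q 0x19cf084cc1) (q 0x2d7321cac1)) (b 62 (q
  0x2d73708b41) (q 0x39d0e6d081))) (u 52))) (u 50))) (u 44))) (u 42))) (u 38))) (b 29 (b 38 (b 42
  (b 44 (b 50 (b 52 (b 56 (b 62 (q 0x30b2b2ae01) (q 0x23e00a6c81)) (b 62 (q 0x2b16d02401) (q
  0x3d02fdde41))) (b 53 (b 56 (b 62 (q 0x2d44582b01) (q 0x142076a081)) (b 62 (q 0x1ca0239101) (q
  0x2b1d802101))) (u 52))) (b 51 (b 52 (b 56 (b 62 (q 0x282a5b8f81) (q 0x19aa742101)) (b 62 (q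
  0x181b584081) (q 0x2cdb77f101))) (b 53 (b 56 (b 62 (q 0x30b5f90e01) (q 0x23ddcdb101)) (b 62 (q
  0x2f8211db01) (q 0x376ae60fc1))) (u 52))) (u 50))) (b 45 (b 50 (b 52 (b 56 (b 62 (q
  0x2234ca0081) (q 0x33d0d26101)) (b 62 (q 0x381bc84981) (u 35))) (b 53 (b 56 (b 62 (q
  0x1b48826401) (q 0x298274ffc1)) (b 62 (q 0x221b110981) (q 0x33f90bf801))) (u 52))) (b 51 (b 52
  (b 56 (b 62 (q 0x1b66d20581) (q 0x2226d3f101)) (b 62 (q 0x24163ed6c1) (q 0x3b6013f741))) (b 53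
  (b 56 (b 62 (q 0x2238fb3581) (q 0x15b36c4741)) (b 62 (q 0x1b798086c1) (q 0x2aa66dd101))) (u
  52))) (u 50))) (u 44))) (b 43 (b 44 (b 50 (b 52 (b 56 (b 62 (q 0x2b169a0c81) (q 0x358fd10101))
  (b 62 (q 0x3c8fd10981) (u 37))) (b 53 (b 56 (b 62 (q 0x1402e26581) (q 0x241bfe6ac1)) (b 62 (q
  0x20ab81de41) (q 0x399dc8fac1))) (u 52))) (b 51 (b 52 (b 56 (b 62 (q 0x16cfaf3401) (q
  0x259b804401)) (b 62 (q 0x26d0d26ac1) (q 0x3802ad0d01))) (b 53 (b 56 (b 62 (q 0x21355b8f81) (q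
  0x1b08e336c1)) (b 62 (q 0x110fe42741) (q 0x259d0a66c1))) (u 52))) (u 50))) (b 45 (b 50 (b 52 (b
  56 (b 62 (q 0x3756c82101) (u 49)) (b 62 (u 55) (q 0x4cadae66c8))) (b 53 (b 56 (b 62 (q
  0x2e266edac1) (q 0x38160bfc81)) (b 62 (q 0x3779b5b981) (u 60))) (u 52))) (b 51 (b 52 (b 56 (b
  62 (q 0x2cedadd981) (q 0x36d61343c1)) (b 62 (q 0x398f59bb41) (u 58))) (b 53 (b 56 (b 62 (q
  0x343382dac1) (q 0x2fd6750b41)) (b 62 (q 0x23dd826ac1) (q 0x34260bfe41))) (u 52))) (u 50))) (u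
  44))) (u 42))) (b 39 (b 42 (b 44 (b 50 (b 52 (b 56 (b 62 (q 0x26ecf84e01) (q 0x1e0f804401)) (b
  62 (q 0x1fa008f581) (q 0x23dbe7fd01))) (b 53 (b 56 (b 62 (q 0x39f85ac101) (q 0x26f842a9c1)) (b
  62 (q 0x2227d7e3c1) (q 0x1b1b584741))) (u 52))) (b 51 (b 52 (b 56 (b 62 (q 0x34330aaf81) (q
  0x282c6e7cc1)) (b 62 (q 0x2d1bcc23c1) (q 0x1110fdd6c1))) (b 53 (b 56 (b 62 (u 41) (q
  0x3d733e7401)) (b 62 (q 0x3faad5d101) (q 0x25846ec741))) (u 52))) (u 50))) (b 45 (b 50 (b 52 (b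
  56 (b 62 (q 0x1b5d3db081) (q 0x2110772081)) (b 62 (q 0x2fa00add01) (q 0x3fc2d1be41))) (b 53 (b
  56 (b 62 (q 0x2f9d3c29c1) (q 0x33e0ab89c1)) (b 62 (q 0x1d4441d3c1) (q 0x29cf42d081))) (u 52)))
  (b 51 (b 52 (b 56 (b 62 (q 0x280fab39c1) (q 0x15aab5d3c1)) (b 62 (q 0x39c2e74b41) (q
  0x274f834b41))) (b 53 (b 56 (b 62 (q 0x3f82775e01) (q 0x22389f5401)) (b 62 (q 0x27429d63c1) (q
  0x1239b7f081))) (u 52))) (u 50))) (u 44))) (b 43 (b 44 (b 50 (b 52 (b 56 (b 62 (q 0x16c2d10101)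
  (q 0x2e0f120401)) (b 62 (q 0x2d2bcb9741) (q 0x37444346c1))) (b 53 (b 56 (b 62 (q 0x241df84581)
  (q 0x122cd783c1)) (b 62 (q 0x33f2facd41) (q 0x26d6139741))) (u 52))) (b 51 (b 52 (b 56 (b 62 (q
  0x2238cec401) (q 0x3e3f11b3c1)) (b 62 (q 0x1cd0d023c1) (q 0x209b4343c1))) (b 53 (b 56 (b 62 (q
  0x3b1de1bcc1) (q 0x2827433e01)) (b 62 (q 0x20843ec741) (q 0x1742e56101))) (u 52))) (u 50))) (b
  45 (b 50 (b 52 (b 56 (b 62 (q 0x2f82772101) (q 0x381b09db41)) (b 62 (q 0x311b5b93c1) (u 46)))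
  (b 53 (b 56 (b 62 (q 0x122d832741) (q 0x29cfcbf801)) (b 62 (q 0x2b79cab101) (q 0x30b93f2801)))
  (u 52))) (b 51 (b 52 (b 56 (b 62 (q 0x1e1dad06c1) (q 0x2b60ff43c1)) (b 62 (q 0x22163c2e41) (q
  0x33f943fac1))) (b 53 (b 56 (b 62 (q 0x211b5b3401) (q 0x1fed808401)) (b 62 (q 0x1d50744581) (q
  0x2816404ac1))) (u 52))) (u 50))) (u 44))) (u 42))) (u 38))) (u 28))) (u 26))

open T in
def t1_9 : T :=
  (b 26 (b 28 (b 38 (b 42 (b 44 (b 50 (b 52 (b 56 (b 62 (u 25) (q 0x3688704d01)) (b 62 (q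
  0x342ab02681) (q 0x25dcb1ad01))) (b 53 (b 56 (b 62 (q 0x39b209ae01) (q 0x2138c88401)) (b 62 (q
  0x26a6108f81) (q 0x183f6aca81))) (u 52))) (b 51 (b 52 (b 56 (b 62 (q 0x39ac138801) (q
  0x23d0738801)) (b 62 (q 0x25c8fb4401) (q 0x1aa0fdcb01))) (b 53 (b 56 (b 62 (q 0x2b3881a701) (q
  0x1fcf5f3801)) (b 62 (q 0x15c40be981) (q 0x2735aa0981))) (u 52))) (u 50))) (b 45 (b 50 (b 52 (b
  56 (b 62 (q 0x383211c981) (q 0x27320a0681)) (b 62 (q 0x2808990c81) (q 0x1717a9ac81))) (b 53 (b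
  56 (b 62 (u 25) (q 0x35daa88c81)) (b 62 (q 0x322dfa6701) (q 0x208fd6a5c1))) (u 52))) (b 51 (b
  52 (b 56 (b 62 (q 0x25e6e04701) (q 0x1cff3ede01)) (b 62 (q 0x16a6110f81) (q 0xcf4fdaa81))) (b
  53 (b 56 (b 62 (q 0x3117e1a801) (q 0x22385c2801)) (b 62 (q 0x2417135b41) (q 0x1726139d41))) (u
  52))) (u 50))) (u 44))) (b 43 (b 44 (b 50 (b 52 (b 56 (b 62 (q 0x3d04fa6081) (q 0x2ac8810d01))
  (b 62 (q 0x283e408b01) (q 0x1aff3d7d01))) (b 53 (b 56 (b 62 (q 0x25e013e701) (q 0x19ac12be01))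
  (b 62 (q 0x1804d72f81) (q 0xe6b984801))) (u 52))) (b 51 (b 52 (b 56 (b 62 (u 25) (q
  0x3e34ad7cc1)) (b 62 (q 0x39b43f3ac1) (q 0x2ff4b085c1))) (b 53 (b 56 (b 62 (q 0x3817f9a081) (q
  0x29abcc45c1)) (b 62 (q 0x24179b33c1) (q 0x19a0b17cc1))) (u 52))) (u 50))) (b 45 (b 50 (b 52 (b
  56 (b 62 (q 0x2402e04801) (q 0x110fe02801)) (b 62 (q 0x1aed5cf981) (q 0x20b2b66801))) (b 53 (b
  56 (b 62 (q 0x3997802681) (q 0x29b83d7d41)) (b 62 (q 0x26843e6f81) (q 0x1fd0232b41))) (u 52)))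
  (b 51 (b 52 (b 56 (b 62 (q 0x33c40be981) (q 0x26ab3e05c1)) (b 62 (q 0x2726acf5c1) (q
  0x19ad0b9ac1))) (b 53 (b 56 (b 62 (u 25) (q 0x3cf5e0f801)) (b 62 (q 0x39abd5cb41) (q
  0x25dccf5101))) (u 52))) (u 50))) (u 44))) (u 42))) (b 39 (b 42 (b 44 (b 50 (b 52 (b 56 (b 62
  (q 0x3232d2c101) (u 25)) (b 62 (q 0x223209ca81) (q 0x39c4caa681))) (b 53 (b 56 (b 62 (q
  0x23ea6b8081) (q 0x33f8c9a081)) (b 62 (q 0x111a3c8c81) (q 0x2b27fc25c1))) (u 52))) (b 51 (b 52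
  (b 56 (b 62 (q 0x25d0e04801) (q 0x381c5e73c1)) (b 62 (q 0x1f9ae6ad01) (q 0x2a9c13fb01))) (b 53
  (b 56 (b 62 (q 0x1408aace01) (q 0x2cff9d7201)) (b 62 (q 0x5c242a801) (q 0x1833435fc1))) (u
  52))) (u 50))) (b 45 (b 50 (b 52 (b 56 (b 62 (q 0x2f88e20081) (q 0x340f09ac81)) (b 62 (q
  0x1c823dca81) (q 0x2117c9aa81))) (b 53 (b 56 (b 62 (q 0x3ab5802e01) (u 25)) (b 62 (q
  0x282d210a81) (q 0x3fea22dd41))) (u 52))) (b 51 (b 52 (b 56 (b 62 (q 0x1cd79cf801) (q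
  0x26b8fd73c1)) (b 62 (q 0x2133e7eb41) (q 0x173f20f9c1))) (b 53 (b 56 (b 62 (q 0x2f8f5e0b41) (q
  0x3b604089c1)) (b 62 (q 0x19c8ab9b41) (q 0x2cd0b75681))) (u 52))) (u 50))) (u 44))) (b 43 (b 44
  (b 50 (b 52 (b 56 (b 62 (q 0x2c9c838401) (q 0x322cfe73c1)) (b 62 (q 0x1afe220b01) (q
  0x209773f9c1))) (b 53 (b 56 (b 62 (q 0x19f5acf801) (q 0x2ca03d79c1)) (b 62 (q 0x212bb399c1) (q
  0x1d50ac89c1))) (u 52))) (b 51 (b 52 (b 56 (b 62 (q 0x38085eb3c1) (u 25)) (b 62 (q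
  0x20883ecd01) (q 0x31085cfb01))) (b 53 (b 56 (b 62 (q 0x2f8f5e0ac1) (q 0x3fe072bcc1)) (b 62 (q
  0x1cd05dcac1) (q 0x2d5cfe7401))) (u 52))) (u 50))) (b 45 (b 50 (b 52 (b 56 (b 62 (q
  0x16a070fe01) (q 0x2d0f5e0fc1)) (b 62 (q 0x21773eb41) (q 0x19c85dcfc1))) (b 53 (b 56 (b 62 (q
  0x29d73ede01) (q 0x3802227401)) (b 62 (q 0x1227439d41) (q 0x25c86a7fc1))) (u 52))) (b 51 (b 52
  (b 56 (b 62 (q 0x2d1c12be01) (q 0x3e0443f201)) (b 62 (q 0x1fad0b9cc1) (q 0x25ff12b701))) (b 53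
  (b 56 (b 62 (q 0x3e02cdc101) (u 25)) (b 62 (q 0x25edcc2681) (q 0x30bfaf3101))) (u 52))) (u
  50))) (u 44))) (u 42))) (u 38))) (b 29 (b 38 (b 42 (b 44 (b 50 (b 52 (b 56 (b 62 (q
  0x38109bed01) (q 0x23f841a201)) (b 62 (q 0x2748fa6b01) (q 0x1fc4ca0081))) (b 53 (b 56 (b 62 (q
  0x2fb2e1a801) (q 0x381a5ddd41)) (b 62 (q 0x1d6a832201) (q 0x29aafc2801))) (u 52))) (b 51 (b 52
  (b 56 (b 62 (q 0x2e1af90081) (q 0x1ccf77f201)) (b 62 (q 0x3d399ac081) (q 0x2d17202b01))) (b 53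
  (b 56 (b 62 (q 0x1697988081) (q 0x2108097801)) (b 62 (q 0x26b376ce41) (q 0x3a979ace41))) (u
  52))) (u 50))) (b 45 (b 50 (b 52 (b 56 (b 62 (q 0x23f2088401) (q 0x3cad6b8201)) (b 62 (q
  0x15c8f9a401) (q 0x2a8f09dfc1))) (b 53 (b 56 (b 62 (q 0x34203f5b41) (u 35)) (b 62 (q
  0x29b23f5b41) (q 0x3b7f5ea201))) (u 52))) (b 51 (b 52 (b 56 (b 62 (q 0x15f3b4f681) (q
  0x2ccf77f201)) (b 62 (q 0x23fed10e41) (q 0x1b60fea741))) (b 53 (b 56 (b 62 (q 0x240fe1a081) (q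
  0x35f876afc1)) (b 62 (q 0x13f59885c1) (q 0x2e60097741))) (u 52))) (u 50))) (u 44))) (b 43 (b 44
  (b 50 (b 52 (b 56 (b 62 (q 0x23fe0b4981) (q 0x1e32120401)) (b 62 (q 0x3adad02981) (q
  0x282641d081))) (b 53 (b 56 (b 62 (q 0x1b1dc88681) (q 0x22176b5741)) (b 62 (q 0x21083daf81) (q
  0x15c8d6c741))) (u 52))) (b 51 (b 52 (b 56 (b 62 (q 0x342bf9a981) (q 0x2757af3b01)) (b 62 (u
  37) (q 0x3e5022ccc1))) (b 53 (b 56 (b 62 (q 0x242b6be981) (q 0x13da42b5c1)) (b 62 (q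
  0x3682e6c201) (q 0x2802cc85c1))) (u 52))) (u 50))) (b 45 (b 50 (b 52 (b 56 (b 62 (q
  0x1ad73ed081) (q 0x2d32fd0801)) (b 62 (q 0x26b93d0741) (q 0x3b6b750081))) (b 53 (b 56 (b 62 (q
  0x274fd6d801) (q 0x3420697e01)) (b 62 (q 0x10ab81d3c1) (q 0x221dff2801))) (u 52))) (b 51 (b 52
  (b 56 (b 62 (q 0x282bf82981) (q 0x1cdae083c1)) (b 62 (q 0x3d2b6b35c1) (q 0x221d4343c1))) (b 53
  (b 56 (b 62 (q 0x3e1aafe981) (q 0x2997838d41)) (b 62 (q 0x275aaf3f81) (q 0x143f239081))) (u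
  52))) (u 50))) (u 44))) (u 42))) (b 39 (b 42 (b 44 (b 50 (b 52 (b 56 (b 62 (q 0x212ae20401) (q
  0x39d0682a81)) (b 62 (q 0x15f9767681) (q 0x2827cbf3c1))) (b 53 (b 56 (b 62 (q 0x3778688c81) (u
  41)) (b 62 (q 0x25e0c9a9c1) (q 0x35f56a7c81))) (u 52))) (b 51 (b 52 (b 56 (b 62 (q
  0x19cf757401) (q 0x2b083f8401)) (b 62 (q 0x2a9afb9d01) (q 0x1808cd05c1))) (b 53 (b 56 (b 62 (q
  0x2b1076a081) (q 0x39ff76a081)) (b 62 (q 0x1cec139741) (q 0x2102748d41))) (u 52))) (u 50))) (b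
  45 (b 50 (b 52 (b 56 (b 62 (q 0x39da0b8c81) (u 49)) (b 62 (q 0x2c9a750801) (q 0x33d06a75c1)))
  (b 53 (b 56 (b 62 (u 59) (q 0x4cb869d204)) (b 62 (q 0x3772a90b41) (u 60))) (u 52))) (b 51 (b 52
  (b 56 (b 62 (q 0x2fada9a801) (q 0x33dd9d7401)) (b 62 (q 0x39f95dd681) (q 0x2d106a75c1))) (b 53
  (b 56 (b 62 (q 0x3d6ab605c1) (u 54)) (b 62 (q 0x2120b6a5c1) (q 0x35dad48081))) (u 52))) (u
  50))) (u 44))) (b 43 (b 44 (b 50 (b 52 (b 56 (b 62 (q 0x1832e27201) (q 0x210840f801)) (b 62 (q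
  0x210868fb01) (q 0x16b27793c1))) (b 53 (b 56 (b 62 (q 0x20a020f681) (q 0x3210cb5681)) (b 62 (q
  0x3b2075a201) (q 0x2e4f9c8681))) (u 52))) (b 51 (b 52 (b 56 (b 62 (q 0x2f8f417cc1) (q
  0x33e0d2cac1)) (b 62 (q 0x3af377e681) (q 0x29cf4345c1))) (b 53 (b 56 (b 62 (q 0x10be6b53c1) (q
  0x209743f201)) (b 62 (q 0x281db0f201) (q 0x1b0f81d201))) (u 52))) (u 50))) (b 45 (b 50 (b 52 (b
  56 (b 62 (q 0x2f9dc82201) (q 0x33c29c85c1)) (b 62 (q 0x182d132741) (q 0x22207503c1))) (b 53 (b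
  56 (b 62 (q 0x3b4f9ddc81) (u 46)) (b 62 (q 0x20b22359c1) (q 0x36bf3e0c81))) (u 52))) (b 51 (b
  52 (b 56 (b 62 (q 0x1134cfe5c1) (q 0x2affe0f801)) (b 62 (q 0x281a439741) (q 0x19e013f401))) (b
  53 (b 56 (b 62 (q 0x22206973c1) (q 0x381a43f9c1)) (b 62 (q 0x1133fb9681) (q 0x276dd5a9c1))) (u
  52))) (u 50))) (u 44))) (u 42))) (u 38))) (u 28))) (b 27 (b 28 (b 38 (b 42 (b 44 (b 50 (b 52 (b
  56 (b 62 (q 0x3e2a21c401) (q 0x26d0838d01)) (b 62 (q 0x20b2faa701) (q 0x122a5dc101))) (b 53 (b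
  56 (b 62 (q 0x23ea984f81) (q 0x1a90120201)) (b 62 (q 0x36fe108a81) (q 0x241b2355c1))) (u 52)))
  (b 51 (b 52 (b 56 (b 62 (q 0x25e0734e01) (q 0x3838cdb5c1)) (b 62 (q 0x1b33834201) (q
  0x2d2cff35c1))) (b 53 (b 56 (b 62 (q 0x10beaa6101) (q 0x23d7cff801)) (b 62 (q 0x23f95f5981) (q
  0x3984cec801))) (u 52))) (u 50))) (b 45 (b 50 (b 52 (b 56 (b 62 (q 0x23c8f84701) (q
  0x183fe02401)) (b 62 (q 0x3cad72a201) (q 0x208441b981))) (b 53 (b 56 (b 62 (q 0x39b5c90201) (q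
  0x29903d7b41)) (b 62 (u 35) (q 0x322d6e6e41))) (u 52))) (b 51 (b 52 (b 56 (b 62 (q
  0x16d0a88701) (q 0x213f5d06c1)) (b 62 (q 0x2d1cb4f6c1) (q 0x13d0d1c6c1))) (b 53 (b 56 (b 62 (q
  0x2217b5c3c1) (q 0x1e200bf5c1)) (b 62 (q 0x3d4f21ba81) (q 0x2408ab9d41))) (u 52))) (u 50))) (u
  44))) (b 43 (b 44 (b 50 (b 52 (b 56 (b 62 (q 0x26c481c401) (q 0x3d08fcfac1)) (b 62 (q
  0x13e6134401) (q 0x20906cfac1))) (b 53 (b 56 (b 62 (q 0x1adb3d7701) (q 0x2138fc8b01)) (b 62 (q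
  0x2117e506c1) (q 0x13c49bf6c1))) (u 52))) (b 51 (b 52 (b 56 (b 62 (q 0x35c4b10201) (u 37)) (b
  62 (q 0x272b434b01) (q 0x36ecd10ac1))) (b 53 (b 56 (b 62 (q 0x26e07045c1) (q 0x35ffadce01)) (b
  62 (q 0x1b02ce05c1) (q 0x20bfcec201))) (u 52))) (u 50))) (b 45 (b 50 (b 52 (b 56 (b 62 (q
  0x13e0726101) (q 0x2b7fadbd01)) (b 62 (q 0x2d10e72981) (q 0x3d396c43c1))) (b 53 (b 56 (b 62 (q
  0x20ad9b53c1) (q 0x15e0b503c1)) (b 62 (q 0x371bb663c1) (q 0x2d79ca66c1))) (u 52))) (b 51 (b 52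
  (b 56 (b 62 (q 0x26cf5eb101) (q 0x371b12b3c1)) (b 62 (q 0x1990ad73c1) (q 0x2984aff801))) (b 53
  (b 56 (b 62 (q 0x3804fad981) (q 0x22043e05c1)) (b 62 (q 0x2cf55fe981) (q 0x180f5e6101))) (u
  52))) (u 50))) (u 44))) (u 42))) (b 39 (b 42 (b 44 (b 50 (b 52 (b 56 (b 62 (q 0x25dc234101) (q
  0x343fb04d01)) (b 62 (q 0x1ab2e7e701) (q 0x2cbf5c43c1))) (b 53 (b 56 (b 62 (q 0x1e2c9e0401) (q
  0x2d67fd7801)) (b 62 (q 0x23dbd79f81) (q 0x16f972c5c1))) (u 52))) (b 51 (b 52 (b 56 (b 62 (q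
  0x3727e04b01) (u 41)) (b 62 (q 0x2e5bccf201) (q 0x3d1bb04fc1))) (b 53 (b 56 (b 62 (q
  0x25cfce7e01) (q 0x380fb1bcc1)) (b 62 (q 0x10a78336c1) (q 0x209721b801))) (u 52))) (u 50))) (b
  45 (b 50 (b 52 (b 56 (b 62 (q 0x1d389c2201) (q 0x2b78420fc1)) (b 62 (q 0x2d1bf9c201) (q
  0x142d81b3c1))) (b 53 (b 56 (b 62 (q 0x282ad50c81) (q 0x33f583fe01)) (b 62 (q 0x35cf6fe701) (q
  0x26d022d3c1))) (u 52))) (b 51 (b 52 (b 56 (b 62 (q 0x2b739cf801) (q 0x3fdb9cf801)) (b 62 (q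
  0x39c8fb9b41) (q 0x2b67734cc1))) (b 53 (b 56 (b 62 (q 0x1d571103c1) (q 0x2738427fc1)) (b 62 (q
  0x2108b4f701) (q 0x1b79ab5201))) (u 52))) (u 50))) (u 44))) (b 43 (b 44 (b 50 (b 52 (b 56 (b 62
  (q 0x3b04adb9c1) (u 49)) (b 62 (q 0x209071b801) (q 0x3af47275c1))) (b 53 (b 56 (b 62 (q
  0x2220adcb01) (q 0x3b0f8179c1)) (b 62 (q 0x3c90b27801) (q 0x2d50ae09c1))) (u 52))) (b 51 (b 52
  (b 56 (b 62 (u 61) (q 0x4d2cae0402)) (b 62 (q 0x3cd081c9c1) (u 58))) (b 53 (b 56 (b 62 (q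
  0x3827e333c1) (u 54)) (b 62 (q 0x212c5d06c1) (q 0x39c86d7801))) (u 52))) (u 50))) (b 45 (b 50
  (b 52 (b 56 (b 62 (q 0x2f9b134201) (q 0x3d3f2275c1)) (b 62 (q 0x1cab1106c1) (q 0x25e0d1bac1)))
  (b 53 (b 56 (b 62 (q 0x120f1385c1) (q 0x2b4f2385c1)) (b 62 (q 0x2132d50e41) (q 0x121c9f5401)))
  (u 52))) (b 51 (b 52 (b 56 (b 62 (q 0x3d1c5ebe01) (u 46)) (b 62 (q 0x240f81c6c1) (q
  0x3fc8d1b801))) (b 53 (b 56 (b 62 (q 0x2fb372b801) (q 0x321ce203c1)) (b 62 (q 0x1b4fcc4701) (q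
  0x25f39c8fc1))) (u 52))) (u 50))) (u 44))) (u 42))) (u 38))) (b 29 (b 38 (b 42 (b 44 (b 50 (b
  52 (b 56 (b 62 (q 0x25e6834b01) (q 0x140fcb4801)) (b 62 (q 0x1120caa981) (q 0x23f975b981))) (b
  53 (b 56 (b 62 (q 0x1210084a81) (q 0x2108fc2801)) (b 62 (q 0x281b135e41) (q 0x39b509dfc1))) (u
  52))) (b 51 (b 52 (b 56 (b 62 (q 0x1f8f438b01) (q 0x23c8120fc1)) (b 62 (q 0x26c2b26741) (q
  0x3cc40b9741))) (b 53 (b 56 (b 62 (q 0x2235cc46c1) (q 0x36d7d5da81)) (b 62 (q 0x31390ac741) (u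
  30))) (u 52))) (u 50))) (b 45 (b 50 (b 52 (b 56 (b 62 (q 0x15cf6edc81) (q 0x2990fcfb41)) (b 62
  (q 0x27724263c1) (q 0x33e09b96c1))) (b 53 (b 56 (b 62 (q 0x276d5f5201) (q 0x3a9d42d3c1)) (b 62
  (q 0x322d9b96c1) (u 30))) (u 52))) (b 51 (b 52 (b 56 (b 62 (q 0xbe6d0cc1) (q 0x181d10ffc1)) (b
  62 (q 0x1cd722ae41) (q 0x223f09b801))) (b 53 (b 56 (b 62 (q 0x16e613ed41) (q 0x23ea097d41)) (b
  62 (q 0x2b57988d41) (q 0x399777f081))) (u 52))) (u 50))) (u 44))) (b 43 (b 44 (b 50 (b 52 (b 56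
  (b 62 (q 0x17576cfd01) (q 0x220442bd01)) (b 62 (q 0x2102439981) (q 0x310240fd01))) (b 53 (b 56
  (b 62 (q 0x2179b2401) (q 0x121b3c2fc1)) (b 62 (q 0x1b17d48e41) (q 0x2d5de42801))) (u 52))) (b
  51 (b 52 (b 56 (b 62 (q 0x2750234ac1) (q 0x33e0cc85c1)) (b 62 (q 0x3cddd0f401) (u 30))) (b 53
  (b 56 (b 62 (q 0x10ac10fcc1) (q 0x243f6c8801)) (b 62 (q 0x24330a6741) (q 0x3b1be5d081))) (u
  52))) (u 50))) (b 45 (b 50 (b 52 (b 56 (b 62 (q 0x299b134c81) (q 0x341d11bac1)) (b 62 (q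
  0x3110addd01) (u 30))) (b 53 (b 56 (b 62 (q 0x111b9beb41) (q 0x2d60fcf081)) (b 62 (q
  0x2ad0cad6c1) (q 0x311d42dc81))) (u 52))) (b 51 (b 52 (b 56 (b 62 (q 0x1d023d7ac1) (q
  0x22346ff101)) (b 62 (q 0x2ccf439d01) (q 0x39b481bfc1))) (b 53 (b 56 (b 62 (q 0x23f3d66f81) (q
  0x1d66b42801)) (b 62 (q 0x1102e57981) (q 0x243fe5b101))) (u 52))) (u 50))) (u 44))) (u 42))) (b
  39 (b 42 (b 44 (b 50 (b 52 (b 56 (b 62 (q 0x1090227e01) (q 0x213f9d03c1)) (b 62 (q 0x9fe22c801)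
  (q 0x1097120fc1))) (b 53 (b 56 (b 62 (q 0x2fb57429c1) (q 0x35c2e0f9c1)) (b 62 (q 0x19f2f8fd41)
  (q 0x2e5da82fc1))) (u 52))) (b 51 (b 52 (b 56 (b 62 (q 0x25ec1386c1) (q 0x3e0483f201)) (b 62 (q
  0x112c417cc1) (q 0x29d7233801))) (b 53 (b 56 (b 62 (q 0x3ab86c4b01) (u 30)) (b 62 (q
  0x23c476ad41) (q 0x3b17775081))) (u 52))) (u 50))) (b 45 (b 50 (b 52 (b 56 (b 62 (q
  0x2d387675c1) (q 0x3808cad081)) (b 62 (q 0x1fa75c8b41) (q 0x29dd0bfc81))) (b 53 (b 56 (b 62 (q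
  0x3438b72201) (u 30)) (b 62 (q 0x2e485f2d41) (q 0x3feda97d41))) (u 52))) (b 51 (b 52 (b 56 (b
  62 (q 0x16c4cfe9c1) (q 0x20908273c1)) (b 62 (q 0x276de7ed01) (q 0x109de6a801))) (b 53 (b 56 (b
  62 (q 0x2cdd0a7a81) (q 0x38024383c1)) (b 62 (q 0x1d4f21ba81) (q 0x24355ff201))) (u 52))) (u
  50))) (u 44))) (b 43 (b 44 (b 50 (b 52 (b 56 (b 62 (q 0x2c849f8201) (q 0x3ae0e089c1)) (b 62 (q
  0x140fb39ac1) (q 0x2760ad03c1))) (b 53 (b 56 (b 62 (q 0x177ed729c1) (q 0x2ae73d0801)) (b 62 (q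
  0x23f582c9c1) (q 0x1fcf21d801))) (u 52))) (b 51 (b 52 (b 56 (b 62 (q 0x3aece049c1) (u 30)) (b
  62 (q 0x2817d08cc1) (q 0x3ccf83f6c1))) (b 53 (b 56 (b 62 (q 0x2d5be04cc1) (q 0x39db8085c1)) (b
  62 (q 0x1d79f82b01) (q 0x2773108b01))) (u 52))) (u 50))) (b 45 (b 50 (b 52 (b 56 (b 62 (q
  0x3c9b9f85c1) (u 30)) (b 62 (q 0x29ddd02b41) (q 0x3750adbd01))) (b 53 (b 56 (b 62 (q
  0x2d7209d9c1) (q 0x3202810fc1)) (b 62 (q 0x181d9c2c81) (q 0x2e4f83f741))) (u 52))) (b 51 (b 52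
  (b 56 (b 62 (q 0x27749db101) (q 0x33d76f4ac1)) (b 62 (q 0x12179f3d01) (q 0x25c4fd0801))) (b 53
  (b 56 (b 62 (q 0x1b6022be01) (q 0x213f3d7801)) (b 62 (q 0x75b9c8b41) (q 0x15e074ffc1))) (u
  52))) (u 50))) (u 44))) (u 42))) (u 38))) (u 28))) (u 26)))

open T in
def t1_10 : T :=
  (u 22)

open T in
def t1_11 : T :=
  (u 14)

open T in
def t1 : T :=
  (b 14 (b 22 (b 26 (b 28 t1_0 t1_1) (b 27 t1_2 t1_3)) (b 23 (b 26 t1_4 t1_5) t1_6)) (b 15 (b 22 (b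
  26 t1_7 t1_8) (b 23 t1_9 t1_10)) t1_11))

open T in
def t2 : T :=
  (b 7 (b 11 (b 19 (b 35 (b 28 (b 31 (b 44 (b 47 (b 52 (b 55 (b 56 (u 13) (b 59 (u 13) (b 57 (b 58
  l (u 58)) (u 57)))) (u 55)) (b 55 (u 52) (b 53 (b 54 (b 57 (u 13) (b 58 (u 13) (b 56 (b 59 l (u
  59)) (u 56)))) (u 54)) (u 53)))) (u 47)) (b 47 (u 44) (b 45 (b 46 (b 52 (b 55 (b 57 (u 21) (b
  58 (u 21) (b 56 (b 59 l (u 59)) (u 56)))) (u 55)) (b 55 (u 52) (b 53 (b 54 (b 56 (u 25) (b 59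
  (u 25) (b 57 (b 58 l (u 58)) (u 57)))) (u 54)) (u 53)))) (u 46)) (u 45)))) (u 31)) (b 31 (u 28)
  (b 29 (b 30 (b 44 (b 47 (b 52 (b 55 (b 57 (u 37) (b 58 (u 37) (b 56 (b 59 l (u 59)) (u 56))))
  (u 55)) (b 55 (u 52) (b 53 (b 54 (b 56 (u 41) (b 59 (u 41) (b 57 (b 58 l (u 58)) (u 57)))) (u
  54)) (u 53)))) (u 47)) (b 47 (u 44) (b 45 (b 46 (b 52 (b 55 (b 56 (u 49) (b 59 (u 49) (b 57 (b
  58 l (u 58)) (u 57)))) (u 55)) (b 55 (u 52) (b 53 (b 54 (b 57 (u 60) (b 58 (u 57) (b 56 (b 59 l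
  (u 59)) (u 56)))) (u 54)) (u 53)))) (u 46)) (u 45)))) (u 30)) (u 29)))) (u 35)) (u 19)) (u 11))
  (u 7))

open T in
def t3 : T :=
  (b 15 (b 23 (b 39 (b 56 s s) (b 35 (b 37 (b 38 (b 56 s (b 57 s (b 58 s s))) (u 38)) (u 37)) (u
  35))) (b 19 (b 21 (b 22 (b 39 (b 56 s (b 57 s (b 58 s s))) (b 35 (b 37 (b 38 (b 56 (b 59 (q
  0x3f568258cf) (u 52)) (b 63 (q 0x35b99a5808) (u 55))) (u 38)) (u 37)) (u 35))) (u 22)) (u 21))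
  (u 19))) (b 11 (b 13 (b 14 (b 23 (b 39 (b 56 s (b 57 s (b 58 s s))) (b 35 (b 37 (b 38 (b 56 (b
  59 (q 0x3f8b8e0957) (u 44)) (b 63 (q 0x38cef39e90) (u 47))) (u 38)) (u 37)) (u 35))) (b 19 (b
  21 (b 22 (b 39 (b 56 (b 59 (q 0x32d6e3bf67) (u 28)) (b 63 (q 0x3350e7fea0) (u 31))) (b 35 (b 37
  (b 38 (b 56 (b 63 (q 0x34e338b23f) (u 25)) (b 59 (b 60 (q 0x34203482fc) (u 25)) (b 61 (b 58 (q
  0x340d9a383a) (u 25)) (b 62 (b 7 (u 25) (q 0x3366413579)) (b 7 (b 57 (b 58 l (u 58)) (u 57)) (u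
  7)))))) (u 38)) (u 37)) (u 35))) (u 22)) (u 21)) (u 19))) (u 14)) (u 13)) (u 11)))

open T in
def t4 : T :=
  (b 15 (b 19 (b 35 (u 49) (b 37 (b 21 (u 49) (b 22 (u 50) (b 38 s (b 25 s s)))) (b 38 (b 21 (u 49)
  (b 22 s (b 25 s s))) (b 39 (b 21 (b 22 (b 41 s s) (u 49)) (b 22 (u 50) (b 43 (b 25 s s) (u
  56)))) (u 39))))) (b 21 (b 22 (u 52) (b 37 (u 49) (b 35 (b 38 s (b 25 s s)) (b 41 (u 56) (b 46
  s (b 25 (b 28 s s) (b 28 s s))))))) (b 22 (b 38 (u 50) (b 35 (b 37 s (b 26 s s)) (b 42 (u 56)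
  (b 45 s (b 26 (b 28 s s) (b 28 s s)))))) (b 23 (b 39 (u 56) (b 41 (b 25 (u 49) (b 30 (u 54) (b
  42 s (b 26 s s)))) (b 42 (b 25 (b 26 s s) (u 53)) (b 44 (u 51) (b 25 (b 30 s (u 56)) (b 30 (u
  63) (b 26 (b 28 s s) (b 28 s s)))))))) (u 23))))) (b 23 (b 39 (u 56) (b 43 (b 13 (u 49) (b 14 s
  (u 15))) (b 45 (b 27 (b 14 s s) (u 53)) (b 41 (b 46 (u 49) (b 35 (b 37 (b 38 (b 42 (b 44 (b 47
  (b 25 (b 26 (b 11 (q 0x30a9b26bd7) (q 0x2066b2abd7)) (b 13 (b 11 g (b 28 (q 0x3b23101357) (u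
  11))) (u 13))) (b 26 (b 14 (b 11 g (b 28 (q 0x33aaa63957) (u 11))) (u 14)) (b 28 (b 13 (b 14 g
  (u 14)) (u 13)) (b 11 (b 13 g (b 14 g (q 0x322f8298d0))) (b 27 (b 13 (b 14 g (q 0x336cbe68d0))
  (b 14 (q 0x33aaa6f950) (q 0x26e9823950))) (u 11)))))) (u 47)) (u 44)) (u 42)) (u 38)) (u 37))
  (u 35))) (u 41))))) (b 27 (b 43 (u 52) (b 39 (b 13 s (b 14 s (u 15))) (b 45 (u 57) (b 37 (b 46
  (u 49) (b 35 (b 38 (b 41 (b 42 (b 44 (b 47 (b 28 (b 13 (b 14 g (q 0x39418ea99b)) (b 14 (q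
  0x3220963a5b) (q 0x2720963a5b))) (b 7 (b 13 g (b 14 g (b 21 (b 22 (q 0x31ec9a58db) (u 13)) (b
  22 (u 14) (q 0x39aa087110))))) (u 7))) (u 47)) (u 44)) (u 42)) (u 41)) (u 38)) (u 35))) (u
  37))))) (b 29 (b 45 (u 50) (b 46 (u 50) (b 39 (b 30 s (u 50)) (b 38 (b 43 (u 52) (b 35 (b 37 (b
  41 (b 42 (b 44 (b 47 (b 30 (b 7 (b 11 g (u 11)) (u 7)) (b 7 (b 11 g (b 14 g (q 0x3be00811dd)))
  (b 26 (b 11 (b 14 g (q 0x38e520b09d)) (b 14 (q 0x3982a6395d) (q 0x2123aa099d))) (u 7)))) (u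
  47)) (u 44)) (u 42)) (u 41)) (u 37)) (u 35))) (u 38))))) (b 30 (b 47 (b 35 (b 37 (b 38 (b 41 (b
  42 (b 44 (b 7 (b 11 g (b 13 g (q 0x3b2604709e))) (b 25 (b 11 (b 13 g (q 0x3a429a5bde)) (b 13 (q
  0x39a034811e) (q 0x24ef9aab1e))) (u 7))) (u 44)) (u 42)) (u 41)) (u 38)) (u 37)) (u 35)) (u
  49)) (b 19 (b 21 (b 22 (b 25 (b 26 (b 28 (b 31 (b 47 (u 49) (b 39 (b 41 (b 42 (b 11 (q
  0x30997167e7) (q 0x281f719567)) (b 13 (b 11 g (b 44 (q 0x37dc20d067) (u 11))) (u 13))) (b 42 (b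
  14 (b 11 g (b 44 (q 0x3110653567) (u 11))) (u 14)) (b 44 (b 13 (b 14 g (u 14)) (u 13)) (b 11 (b
  13 g (b 14 g (q 0x32dc65a4e0))) (b 43 (b 13 (b 14 g (q 0x341310d060)) (b 14 (q 0x341320e0a0) (q
  0x205f6536a0))) (u 11)))))) (b 43 (b 44 (b 13 (b 14 g (q 0x340859f6ab)) (b 14 (q 0x354869072b)
  (q 0x221641572b))) (b 7 (b 13 g (b 14 g (b 37 (b 38 (q 0x36501c206b) (u 13)) (b 38 (u 14) (q
  0x3059595420))))) (u 7))) (b 44 (u 47) (b 45 (b 46 (b 7 (b 11 g (u 11)) (u 7)) (b 7 (b 11 g (b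
  14 g (q 0x36844d55ad))) (b 42 (b 11 (b 14 g (q 0x364871656d)) (b 14 (q 0x359f08422d) (q
  0x281a4df66d))) (u 7)))) (b 46 (b 7 (b 11 g (b 13 g (q 0x34da08706e))) (b 41 (b 11 (b 13 g (q
  0x364159f72e)) (b 13 (q 0x34084df6ae) (q 0x205c69066e))) (u 7))) (u 44))))))) (u 31)) (u 28))
  (u 26)) (u 25)) (u 22)) (u 21)) (u 19)))))))

open T in
def t5 : T :=
  (b 7 g (b 11 g (b 13 g (b 14 g (b 15 g (b 19 g (b 21 g (b 22 g (b 23 g (b 25 g (b 26 g (b 27 g (b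
  28 g (b 29 g (b 30 g (b 31 g (b 39 (b 57 (b 42 (u 23) (b 43 (b 44 (u 23) (b 54 (q 0x1cf6d67fe0)
  (u 22))) (u 43))) (b 58 (b 41 (u 23) (b 53 (u 57) (u 21))) (b 60 (b 43 (b 49 s s) (u 11)) (b 43
  (u 23) (b 45 (u 23) (b 41 (b 46 (u 23) (b 42 (b 44 (b 51 (u 15) (b 53 (u 15) (b 62 (q
  0x112cfbde27) (u 25)))) (u 44)) (u 42))) (u 41))))))) (b 43 (b 53 (b 38 (u 27) (u 39)) (b 54 (b
  37 (u 27) (u 39)) (b 45 (u 27) (b 37 (b 46 (u 21) (b 38 (b 57 (u 29) (b 58 (u 30) (b 60 s (b 55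
  (q 0x19609acd2b) (u 28))))) (u 38))) (u 37))))) (b 45 (b 51 (b 38 (u 27) (u 39)) (b 35 (b 46 (u
  19) (b 54 (u 29) (b 38 (b 57 (u 27) (b 58 s (b 42 (b 50 (b 53 (u 15) (b 62 (q 0x1ef822acad) (u
  19))) (u 50)) (u 42)))) (u 38)))) (u 35))) (b 46 (b 51 (u 30) (b 35 (b 53 (u 29) (b 37 (b 57 (u
  7) (b 41 (b 49 (b 54 (u 15) (b 58 (u 15) (b 61 (q 0x1a7d238c6e) (u 19)))) (u 49)) (u 41))) (u
  37))) (u 35))) (b 51 (b 53 (u 27) (b 37 (b 54 (u 13) (b 38 (b 57 (u 23) (b 62 (q 0x12259a0b33)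
  (u 13))) (u 38))) (u 37))) (b 35 (b 53 (b 54 (u 11) (b 38 (b 57 (u 23) (b 62 (q 0x1201110ab5)
  (u 11))) (u 38))) (b 37 (b 54 (b 57 s (b 41 (b 49 (b 58 (u 23) (b 61 (q 0x1825231a76) (u 11)))
  (u 49)) (u 41))) (b 38 (b 57 (b 62 (q 0x10500889b9) (u 7)) (b 41 (b 49 (b 62 (u 7) (b 58 (b 61
  (q 0x1dc29af97a) (u 7)) (b 42 (b 50 (b 61 (u 7) (b 60 (b 47 (q 0x10a9c608fc) (u 19)) (b 63 (q
  0x1c65a6383f) (u 7)))) (u 50)) (u 42)))) (u 49)) (u 41))) (u 38))) (u 37))) (u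
  35)))))))))))))))))))))))

def force (n : ℕ) (f : ℕ → Bool) : Bool :=
  Nat.rec (motive := fun _ => Bool) (f 0) (fun k _ => f (k + 1)) n

/-- butterfly step -/
def bf (M m s : ℕ) : ℕ := ((M >>> s) &&& m) ||| ((M &&& m) <<< s)

def trs (M v i m s : ℕ) : ℕ := bif Nat.testBit v i then bf M m s else M

/-- translate of the mask `M` by `v` -/
def tr (M v : ℕ) : ℕ :=
  trs (trs (trs (trs (trs (trs M v 0 0x5555555555555555 1) v 1 0x3333333333333333 2)
    v 2 0x0f0f0f0f0f0f0f0f 4) v 3 0x00ff00ff00ff00ff 8) v 4 0x0000ffff0000ffff 16) v 5 0x00000000ffffffff 32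

def pc (M n : ℕ) : ℕ :=
  Nat.rec (motive := fun _ => ℕ) 0 (fun k ih => ih + (M >>> k) % 2) n

def hN (n p : ℕ) : ℕ :=
  (p % 2 * (n % 64)) ^^^ ((p >>> 1) % 2 * ((n >>> 6) % 64)) ^^^
  ((p >>> 2) % 2 * ((n >>> 12) % 64)) ^^^ ((p >>> 3) % 2 * ((n >>> 18) % 64)) ^^^
  ((p >>> 4) % 2 * ((n >>> 24) % 64)) ^^^ ((p >>> 5) % 2 * ((n >>> 30) % 64))

def rep (i : ℕ) : List ℕ :=
  match i with
  | 0 => [1, 2, 4, 8, 14, 16, 22, 27, 29, 32, 39, 42, 45, 50, 53, 57, 62]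
  | 1 => [1, 2, 4, 8, 14, 16, 22, 26, 29, 32, 38, 42, 45, 50, 53, 57, 63]
  | 2 => [1, 2, 4, 8, 14, 16, 22, 26, 28, 32, 38, 42, 45, 50, 53, 57, 63]
  | 3 => [1, 2, 4, 8, 14, 16, 22, 26, 28, 32, 38, 42, 44, 50, 53, 57, 63]
  | _ => [1, 2, 4, 8, 14, 16, 22, 26, 28, 32, 38, 42, 44, 50, 52, 56, 63]

def img (n : ℕ) (L : List ℕ) : ℕ := L.foldr (fun p m => (1 <<< hN n p) ||| m) 0

def FULL : ℕ := 0xffffffffffffffff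

noncomputable def check (r : ℕ) (t : T) : ℕ → ℕ → Bool :=
  T.rec (motive := fun _ => ℕ → ℕ → Bool)
    (fun v _ _ ihx ihy I C =>
      (Nat.blt v 64) &&
      (force (I ||| (1 <<< v)) fun I' => force (C &&& (FULL ^^^ (tr I v ||| (1 <<< v)))) fun C' =>
        ihx I' C') &&
      (force (C &&& (FULL ^^^ (1 <<< v))) fun C' => ihy I C'))
    (fun I C => Nat.blt (pc (I ||| C) 64) 17)
    (fun I _ => Nat.blt 5 (pc I (2 ^ r)))
    (fun I _ => Nat.blt 17 (pc I 64))
    (fun x I C => force (I ||| C) fun J =>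
      Nat.blt 0 x && (Nat.blt x 64) && (Nat.beq (J &&& (1 <<< x)) 0) && (Nat.beq (tr J x &&& J) 0))
    (fun n I C => Nat.beq (I ||| C) (img n (rep (n >>> 36))))
    t

theorem c0 : check 0 t0 0x100010116 0x6996966896686880 = true := by decide +kernel
theorem c2 : check 2 t2 0x100010116 0xff0f008f0080880 = true := by decide +kernel
theorem c3 : check 3 t3 0x100010116 0xff0000e800e8e880 = true := by decide +kernel
theorem c4 : check 4 t4 0x100010116 0xfee8fee8e880 = true := by decide +kernel
theorem c5 : check 5 t5 0x100010116 0xfffefee8fee8e880 = true := by decide +kernel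
theorem c1 : check 1 t1 0x100010116 0xc33c3cc03cc0c000 = true := by decide +kernel

def dec (k : ℕ) : Fin 6 → ZMod 2 := fun i => if k.testBit i then 1 else 0

theorem dec_xor (a b : ℕ) : dec (a ^^^ b) = dec a + dec b := by
  funext i
  simp only [dec, Nat.testBit_xor, Pi.add_apply]
  cases a.testBit i <;> cases b.testBit i <;> decide

theorem dec_inj {a b : ℕ} (ha : a < 64) (hb : b < 64) (h : dec a = dec b) : a = b := by
  apply Nat.eq_of_testBit_eq
  intro i
  by_cases hi : i < 6
  · have := congrFun h ⟨i, hi⟩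
    simp only [dec] at this
    revert this
    cases a.testBit i <;> cases b.testBit i <;> simp
  · have h64 : 64 ≤ 2 ^ i := by
      calc 64 = 2 ^ 6 := rfl
        _ ≤ 2 ^ i := Nat.pow_le_pow_right (by norm_num) (by omega)
    rw [Nat.testBit_lt_two_pow (by omega), Nat.testBit_lt_two_pow (by omega)]

theorem dec_surj (x : Fin 6 → ZMod 2) : ∃ k, k < 64 ∧ dec k = x := by
  have hb : Function.Bijective (fun k : Fin 64 => dec k) := by
    rw [Fintype.bijective_iff_injective_and_card]
    refine ⟨fun a b h => Fin.ext (dec_inj a.2 b.2 h), ?_⟩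
    simp [ZMod.card]
  obtain ⟨k, hk⟩ := hb.2 x
  exact ⟨k, k.2, hk⟩

theorem dec_zero : dec 0 = 0 := by funext i; simp [dec]

theorem dec_mul (p j c : ℕ) :
    dec ((p >>> j) % 2 * c) = (if p.testBit j then (1 : ZMod 2) else 0) • dec c := by
  have : p.testBit j = decide ((p >>> j) % 2 = 1) := by
    rw [Nat.testBit_eq_decide_div_mod_eq, Nat.shiftRight_eq_div_pow]
  rcases Nat.mod_two_eq_zero_or_one (p >>> j) with h | h <;> simp [this, h, dec_zero]

def Hm (n : ℕ) : Matrix (Fin 6) (Fin 6) (ZMod 2) :=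
  Matrix.of fun i j => dec ((n >>> (6 * (j : ℕ))) % 64) i

theorem dec_hN (n p : ℕ) : dec (hN n p) = (Hm n).mulVec (dec p) := by
  have h0 := dec_mul p 0 (n % 64)
  rw [Nat.shiftRight_zero] at h0
  unfold hN
  simp only [dec_xor, h0, dec_mul]
  funext i
  simp only [Matrix.mulVec, dotProduct, Fin.sum_univ_six, Hm, Matrix.of_apply, Pi.add_apply,
    Pi.smul_apply, smul_eq_mul]
  simp [dec, mul_comm]

theorem force_eq (n : ℕ) (f : ℕ → Bool) : force n f = f n := by
  cases n <;> rfl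

theorem xor_lt {a b : ℕ} (ha : a < 64) (hb : b < 64) : a ^^^ b < 64 :=
  Nat.xor_lt_two_pow (n := 6) ha hb

theorem bf_aux (M m s i : ℕ)
    (h : ∀ k < 64, if k.testBit i = true then
        (m.testBit k = false ∧ s ≤ k ∧ m.testBit (k - s) = true ∧ k ^^^ s = k - s)
      else (m.testBit k = true ∧ (s ≤ k → m.testBit (k - s) = false) ∧ k ^^^ s = k + s))
    (k : ℕ) (hk : k < 64) : (bf M m s).testBit k = M.testBit (k ^^^ s) := by
  have := h k hk
  unfold bf
  simp only [Nat.testBit_or, Nat.testBit_and, Nat.testBit_shiftRight, Nat.testBit_shiftLeft]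
  cases hi : k.testBit i
  · simp only [hi, Bool.false_eq_true, if_false] at this
    obtain ⟨h1, h2, h3⟩ := this
    rw [h1, h3, Nat.add_comm s k]
    by_cases hs : s ≤ k
    · simp [h2 hs]
    · simp [hs]
  · simp only [hi, if_true] at this
    obtain ⟨h1, h2, h3, h4⟩ := this
    simp [h1, h2, h3, h4]

theorem trs_aux (M v m s i : ℕ) (hs : s = 2 ^ i)
    (h : ∀ k < 64, if k.testBit i = true then
        (m.testBit k = false ∧ s ≤ k ∧ m.testBit (k - s) = true ∧ k ^^^ s = k - s)
      else (m.testBit k = true ∧ (s ≤ k → m.testBit (k - s) = false) ∧ k ^^^ s = k + s))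
    (k : ℕ) (hk : k < 64) :
    (trs M v i m s).testBit k = M.testBit (k ^^^ (v &&& s)) := by
  unfold trs
  cases hv : v.testBit i
  · have : v &&& s = 0 := by
      rw [hs, Nat.and_two_pow, hv]; simp
    simp [this]
  · have : v &&& s = s := by
      rw [hs, Nat.and_two_pow, hv]; simp
    simp only [cond_true, this]
    exact bf_aux M m s i h k hk

theorem tr_testBit (M v k : ℕ) (hv : v < 64) (hk : k < 64) :
    (tr M v).testBit k = M.testBit (k ^^^ v) := by
  unfold tr
  have hs : ∀ s, s < 64 → v &&& s < 64 := fun s hs => lt_of_le_of_lt Nat.and_le_right hs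
  have l1 : k ^^^ (v &&& 32) < 64 := xor_lt hk (hs _ (by norm_num))
  have l2 : k ^^^ (v &&& 32) ^^^ (v &&& 16) < 64 := xor_lt l1 (hs _ (by norm_num))
  have l3 : k ^^^ (v &&& 32) ^^^ (v &&& 16) ^^^ (v &&& 8) < 64 := xor_lt l2 (hs _ (by norm_num))
  have l4 : k ^^^ (v &&& 32) ^^^ (v &&& 16) ^^^ (v &&& 8) ^^^ (v &&& 4) < 64 :=
    xor_lt l3 (hs _ (by norm_num))
  have l5 : k ^^^ (v &&& 32) ^^^ (v &&& 16) ^^^ (v &&& 8) ^^^ (v &&& 4) ^^^ (v &&& 2) < 64 :=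
    xor_lt l4 (hs _ (by norm_num))
  rw [trs_aux _ v _ 32 5 rfl (by decide +kernel) k hk,
    trs_aux _ v _ 16 4 rfl (by decide +kernel) _ l1,
    trs_aux _ v _ 8 3 rfl (by decide +kernel) _ l2,
    trs_aux _ v _ 4 2 rfl (by decide +kernel) _ l3,
    trs_aux _ v _ 2 1 rfl (by decide +kernel) _ l4,
    trs_aux _ v _ 1 0 rfl (by decide +kernel) _ l5]
  congr 1
  have : (v &&& 32) ^^^ (v &&& 16) ^^^ (v &&& 8) ^^^ (v &&& 4) ^^^ (v &&& 2) ^^^ (v &&& 1) = v := by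
    clear hs l1 l2 l3 l4 l5
    revert v
    decide +kernel
  simp only [Nat.xor_assoc] at this ⊢
  rw [this]

theorem pc_eq (M n : ℕ) : pc M n = ((Finset.range n).filter (fun k => M.testBit k = true)).card := by
  induction n with
  | zero => rfl
  | succ n ih =>
    have h1 : pc M (n + 1) = pc M n + (M >>> n) % 2 := rfl
    have h2 : M.testBit n = decide ((M >>> n) % 2 = 1) := by
      rw [Nat.testBit_eq_decide_div_mod_eq, Nat.shiftRight_eq_div_pow]
    rw [h1, ih, Finset.range_add_one, Finset.filter_insert]
    rcases Nat.mod_two_eq_zero_or_one (M >>> n) with h | h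
    · simp [h2, h]
    · rw [if_pos (by simp [h2, h]), Finset.card_insert_of_notMem (by simp), h]

theorem img_testBit (n : ℕ) (L : List ℕ) (k : ℕ) (h : (img n L).testBit k = true) :
    ∃ p ∈ L, hN n p = k := by
  induction L with
  | nil => simp [img] at h
  | cons p L ih =>
    have : img n (p :: L) = (1 <<< hN n p) ||| img n L := rfl
    rw [this, Nat.testBit_or, Nat.one_shiftLeft, Nat.testBit_two_pow] at h
    simp only [Bool.or_eq_true, decide_eq_true_eq] at h
    rcases h with h | h
    · exact ⟨p, by simp, h⟩
    · obtain ⟨p', hp', h'⟩ := ih h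
      exact ⟨p', by simp [hp'], h'⟩

structure Sys (P : ℕ → Prop) (r : ℕ) : Prop where
  cap : ∀ a < 64, ∀ b < 64, P a → P b → a ≠ b → ¬ P (a ^^^ b)
  sat : ∀ x < 64, x ≠ 0 → ¬ P x → ∃ a < 64, ∃ b < 64, P a ∧ P b ∧ x = a ^^^ b
  card : ∃ F : Finset ℕ, F.card = 17 ∧ ∀ k, k ∈ F ↔ k < 64 ∧ P k
  small : ∀ G : Finset ℕ, (∀ k ∈ G, k < 2 ^ r ∧ P k) → G.card ≤ 5

theorem full_testBit (k : ℕ) (hk : k < 64) : FULL.testBit k = true := by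
  revert k; decide +kernel

theorem check_sound (P : ℕ → Prop) (r : ℕ) (hr : r ≤ 6) (hP : Sys P r) (t : T) : ∀ I C : ℕ,
    check r t I C = true → (∀ k < 64, I.testBit k = true → P k) →
    (∀ k < 64, P k → I.testBit k = true ∨ C.testBit k = true) →
    ∃ n, ∀ k < 64, P k → (img n (rep (n >>> 36))).testBit k = true := by
  have hr2 : 2 ^ r ≤ 64 := by
    calc 2 ^ r ≤ 2 ^ 6 := Nat.pow_le_pow_right (by norm_num) hr
      _ = 64 := rfl
  obtain ⟨F, hF, hFm⟩ := hP.card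
  induction t with
  | b v x y ihx ihy =>
    intro I C h hI hC
    have h' : ((Nat.blt v 64) &&
      (force (I ||| (1 <<< v)) fun I' => force (C &&& (FULL ^^^ (tr I v ||| (1 <<< v)))) fun C' =>
        check r x I' C') &&
      (force (C &&& (FULL ^^^ (1 <<< v))) fun C' => check r y I C')) = true := h
    simp only [force_eq, Bool.and_eq_true, Nat.blt_eq] at h'
    obtain ⟨⟨hv, hx⟩, hy⟩ := h'
    by_cases hPv : P v
    · refine ihx _ _ hx ?_ ?_
      · intro k hk hk2
        rw [Nat.testBit_or, Nat.one_shiftLeft, Nat.testBit_two_pow] at hk2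
        simp only [Bool.or_eq_true, decide_eq_true_eq] at hk2
        rcases hk2 with hk2 | hk2
        · exact hI k hk hk2
        · exact hk2 ▸ hPv
      · intro k hk hPk
        simp only [Nat.testBit_or, Nat.one_shiftLeft, Nat.testBit_two_pow, Nat.testBit_and,
          Nat.testBit_xor, full_testBit k hk, tr_testBit I v k hv hk]
        by_cases hvk : v = k
        · left; simp [hvk]
        · rcases hC k hk hPk with h1 | h1
          · left; simp [h1]
          · right
            have : I.testBit (k ^^^ v) = false := by
              by_contra hc
              exact hP.cap k hk v hv hPk hPv (Ne.symm hvk)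
                (hI _ (xor_lt hk hv) (by simpa using hc))
            simp [h1, this, hvk]
    · refine ihy _ _ hy hI ?_
      intro k hk hPk
      have hvk : v ≠ k := fun e => hPv (e ▸ hPk)
      simp only [Nat.one_shiftLeft, Nat.testBit_two_pow, Nat.testBit_and,
          Nat.testBit_xor, full_testBit k hk]
      simpa [hvk] using hC k hk hPk
  | s =>
    intro I C h hI hC
    have h' : Nat.blt (pc (I ||| C) 64) 17 = true := h
    rw [Nat.blt_eq, pc_eq] at h'
    have : F.card ≤ ((Finset.range 64).filter (fun k => (I ||| C).testBit k = true)).card := by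
      apply Finset.card_le_card
      intro k hk
      obtain ⟨h1, h2⟩ := (hFm k).1 hk
      simp only [Finset.mem_filter, Finset.mem_range, Nat.testBit_or, Bool.or_eq_true]
      exact ⟨h1, hC k h1 h2⟩
    omega
  | g =>
    intro I C h hI hC
    have h' : Nat.blt 5 (pc I (2 ^ r)) = true := h
    rw [Nat.blt_eq, pc_eq] at h'
    have := hP.small ((Finset.range (2 ^ r)).filter (fun k => I.testBit k = true)) (by
      intro k hk
      simp only [Finset.mem_filter, Finset.mem_range] at hk
      exact ⟨hk.1, hI k (by omega) hk.2⟩)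
    omega
  | l =>
    intro I C h hI hC
    have h' : Nat.blt 17 (pc I 64) = true := h
    rw [Nat.blt_eq, pc_eq] at h'
    have : ((Finset.range 64).filter (fun k => I.testBit k = true)).card ≤ F.card := by
      apply Finset.card_le_card
      intro k hk
      simp only [Finset.mem_filter, Finset.mem_range] at hk
      exact (hFm k).2 ⟨hk.1, hI k hk.1 hk.2⟩
    omega
  | u x =>
    intro I C h hI hC
    have h' : (force (I ||| C) fun J =>
      Nat.blt 0 x && (Nat.blt x 64) && (Nat.beq (J &&& (1 <<< x)) 0) &&
        (Nat.beq (tr J x &&& J) 0)) = true := h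
    simp only [force_eq, Bool.and_eq_true, Nat.blt_eq, Nat.beq_eq] at h'
    obtain ⟨⟨⟨hx0, hx⟩, hxJ⟩, htr⟩ := h'
    have hJ : ∀ k < 64, P k → (I ||| C).testBit k = true := by
      intro k hk hPk
      rw [Nat.testBit_or, Bool.or_eq_true]
      exact hC k hk hPk
    have hnx : ¬ P x := by
      intro hPx
      have h1 := congrArg (fun z => Nat.testBit z x) hxJ
      simp only [Nat.testBit_and, hJ x hx hPx, Nat.one_shiftLeft, Nat.testBit_two_pow] at h1
      simp at h1
    obtain ⟨a, ha, b, hb, hPa, hPb, hab⟩ := hP.sat x hx (by omega) hnx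
    have h1 := congrArg (fun z => Nat.testBit z a) htr
    simp only [Nat.testBit_and, tr_testBit _ x a hx ha, hJ a ha hPa] at h1
    have h2 : a ^^^ x = b := by rw [hab, ← Nat.xor_assoc, Nat.xor_self, Nat.zero_xor]
    rw [h2, hJ b hb hPb] at h1
    simp at h1
  | q n =>
    intro I C h hI hC
    have h' : Nat.beq (I ||| C) (img n (rep (n >>> 36))) = true := h
    rw [Nat.beq_eq] at h'
    refine ⟨n, fun k hk hPk => ?_⟩
    rw [← h', Nat.testBit_or, Bool.or_eq_true]
    exact hC k hk hPk

/-! Fourier part -/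

def chi (x : ZMod 2) : ℤ := if x = 0 then 1 else -1

theorem chi_add (x y : ZMod 2) : chi (x + y) = chi x * chi y := by
  revert x y; decide

theorem chi_sum {ι : Type*} (s : Finset ι) (f : ι → ZMod 2) :
    chi (∑ i ∈ s, f i) = ∏ i ∈ s, chi (f i) := by
  classical
  induction s using Finset.induction_on with
  | empty => simp [chi]
  | insert a s ha ih => rw [Finset.sum_insert ha, Finset.prod_insert ha, chi_add, ih]

theorem chi_orth (x : Fin 6 → ZMod 2) :
    ∑ f : Fin 6 → ZMod 2, chi (f ⬝ᵥ x) = if x = 0 then 64 else 0 := by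
  have h1 : ∀ f : Fin 6 → ZMod 2, chi (f ⬝ᵥ x) = ∏ i, chi (f i * x i) := fun f => chi_sum _ _
  simp_rw [h1]
  have h2 := Finset.prod_univ_sum (fun _ : Fin 6 => (Finset.univ : Finset (ZMod 2)))
    (fun i t => chi (t * x i))
  rw [Fintype.piFinset_univ] at h2
  rw [← h2]
  have h3 : ∀ y : ZMod 2, ∑ t : ZMod 2, chi (t * y) = if y = 0 then 2 else 0 := by decide
  simp_rw [h3]
  by_cases hx : x = 0
  · simp [hx]
  · rw [if_neg hx]
    obtain ⟨i, hi⟩ := Function.ne_iff.1 hx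
    exact Finset.prod_eq_zero (Finset.mem_univ i) (if_neg hi)

theorem fourier (F : Finset (Fin 6 → ZMod 2)) (hF : F.card = 17)
    (hcap : ∀ a ∈ F, ∀ b ∈ F, ∀ c ∈ F, a + b + c ≠ 0) :
    ∃ f : Fin 6 → ZMod 2, (F.filter (fun s => f ⬝ᵥ s = 0)).card ≤ 5 := by
  by_contra! hcon
  set G : (Fin 6 → ZMod 2) → ℤ := fun f => ∑ s ∈ F, chi (f ⬝ᵥ s) with hG
  have hGe : ∀ f, G f = 2 * ((F.filter (fun s => f ⬝ᵥ s = 0)).card : ℤ) - 17 := by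
    intro f
    have h1 : ∀ s, chi (f ⬝ᵥ s) = 2 * (if f ⬝ᵥ s = 0 then 1 else 0) - 1 := by
      intro s; unfold chi; split_ifs <;> norm_num
    simp only [hG, h1, Finset.sum_sub_distrib, ← Finset.mul_sum, Finset.sum_boole]
    simp [hF]
  have hlow : ∀ f, -5 ≤ G f := by
    intro f
    have := hcon f
    rw [hGe]; omega
  have hG0 : G 0 = 17 := by simp [hG, chi, hF]
  have h2 : ∑ f, G f ^ 2 = 64 * 17 := by
    have : ∀ f, G f ^ 2 = ∑ a ∈ F, ∑ b ∈ F, chi (f ⬝ᵥ (a + b)) := by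
      intro f
      simp only [hG, sq, Finset.sum_mul_sum, dotProduct_add, chi_add]
    simp_rw [this]
    rw [Finset.sum_comm]
    have h' : ∀ a ∈ F, ∑ f : Fin 6 → ZMod 2, ∑ b ∈ F, chi (f ⬝ᵥ (a + b)) = 64 := by
      intro a ha
      rw [Finset.sum_comm]
      simp_rw [chi_orth]
      rw [Finset.sum_eq_single a]
      · rw [if_pos (CharTwo.add_self_eq_zero a)]
      · intro b _ hb
        rw [if_neg]
        intro h
        exact hb (CharTwo.add_eq_zero.1 h).symm
      · exact fun h => absurd ha h
    rw [Finset.sum_congr rfl h']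
    simp [hF]
  have h3 : ∑ f, G f ^ 3 = 0 := by
    have : ∀ f, G f ^ 3 = ∑ a ∈ F, ∑ b ∈ F, ∑ c ∈ F, chi (f ⬝ᵥ (c + b + a)) := by
      intro f
      have : G f ^ 3 = (G f * G f) * G f := by ring
      rw [this]
      simp only [hG, dotProduct_add, chi_add, Finset.sum_mul, Finset.mul_sum]
    simp_rw [this]
    rw [Finset.sum_comm]
    refine Finset.sum_eq_zero fun a ha => ?_
    rw [Finset.sum_comm]
    refine Finset.sum_eq_zero fun b hb => ?_
    rw [Finset.sum_comm]
    refine Finset.sum_eq_zero fun c hc => ?_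
    rw [chi_orth, if_neg (hcap c hc b hb a ha)]
  have h4 : G 0 ^ 2 * (G 0 + 5) ≤ ∑ f, G f ^ 2 * (G f + 5) :=
    Finset.single_le_sum (f := fun f => G f ^ 2 * (G f + 5))
      (fun f _ => mul_nonneg (sq_nonneg _) (by linarith [hlow f])) (Finset.mem_univ 0)
  have h5 : ∑ f, G f ^ 2 * (G f + 5) = ∑ f, G f ^ 3 + 5 * ∑ f, G f ^ 2 := by
    rw [Finset.mul_sum, ← Finset.sum_add_distrib]
    exact Finset.sum_congr rfl fun f _ => by ring
  rw [h5, h2, h3, hG0] at h4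
  norm_num at h4

/-! Choosing a basis -/

theorem span_top {S : Set (Fin 6 → ZMod 2)} (hS : Saturating S) :
    Submodule.span (ZMod 2) S = ⊤ := by
  rw [eq_top_iff]
  intro x _
  by_cases hx : x = 0
  · rw [hx]; exact Submodule.zero_mem _
  by_cases hxS : x ∈ S
  · exact Submodule.subset_span hxS
  obtain ⟨a, ha, b, hb, -, rfl⟩ := hS.2 x hx hxS
  exact Submodule.add_mem _ (Submodule.subset_span ha) (Submodule.subset_span hb)

theorem exists_equiv {α : Type*} [Fintype α] (h6 : Fintype.card α = 6) (p : α → Prop)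
    [DecidablePred p] (r : ℕ) (hr : Fintype.card {x // p x} = r) :
    ∃ e : α ≃ Fin 6, ∀ x, p x ↔ (e x : ℕ) < r := by
  have hr6 : r ≤ 6 := by
    rw [← hr, ← h6]; exact Fintype.card_subtype_le p
  have hq : Fintype.card {i : Fin 6 // (i : ℕ) < r} = r := by
    rw [Fintype.card_subtype]
    interval_cases r <;> decide
  have e1 : {x // p x} ≃ {i : Fin 6 // (i : ℕ) < r} := Fintype.equivOfCardEq (by rw [hr, hq])
  have e2 : {x // ¬ p x} ≃ {i : Fin 6 // ¬ (i : ℕ) < r} := Fintype.equivOfCardEq (by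
    rw [Fintype.card_subtype_compl, Fintype.card_subtype_compl, hr, hq, h6, Fintype.card_fin])
  refine ⟨(Equiv.sumCompl p).symm.trans ((Equiv.sumCongr e1 e2).trans
    (Equiv.sumCompl (fun i : Fin 6 => (i : ℕ) < r))), fun x => ?_⟩
  by_cases hx : p x
  · simp only [hx, true_iff, Equiv.trans_apply]
    rw [Equiv.sumCompl_symm_apply_of_pos hx]
    exact (e1 ⟨x, hx⟩).2
  · simp only [hx, false_iff, Equiv.trans_apply]
    rw [Equiv.sumCompl_symm_apply_of_neg hx]
    exact (e2 ⟨x, hx⟩).2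

theorem exists_basis {S : Set (Fin 6 → ZMod 2)} (hS : Saturating S)
    (φ : (Fin 6 → ZMod 2) →ₗ[ZMod 2] ZMod 2) (hB : {s ∈ S | φ s = 0}.ncard ≤ 5) :
    ∃ (r : ℕ) (v : Module.Basis (Fin 6) (ZMod 2) (Fin 6 → ZMod 2)), r ≤ 5 ∧
      (∀ i, v i ∈ S) ∧ (∀ i, φ (v i) = if (i : ℕ) < r then 0 else 1) ∧
      (∀ x ∈ S, φ x = 0 → ∀ i : Fin 6, r ≤ (i : ℕ) → v.repr x i = 0) := by
  classical
  obtain ⟨b0, hb0B, hspan, hli⟩ := exists_linearIndependent (ZMod 2) {s ∈ S | φ s = 0}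
  have hb0S : b0 ⊆ S := fun x hx => (hb0B hx).1
  obtain ⟨b1, hb1S, hb01, hSsp, hli1⟩ := exists_linearIndepOn_id_extension hli hb0S
  have hsp1 : ⊤ ≤ Submodule.span (ZMod 2) (Set.range (Subtype.val : b1 → Fin 6 → ZMod 2)) := by
    rw [Subtype.range_coe, ← span_top hS]
    exact Submodule.span_le.2 hSsp
  let w : Module.Basis b1 (ZMod 2) (Fin 6 → ZMod 2) := Module.Basis.mk hli1 hsp1
  have hw : ∀ x : b1, w x = x.1 := fun x => by simp [w]
  have : Fintype b1 := Fintype.ofFinite b1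
  have h6 : Fintype.card b1 = 6 := by
    rw [← Module.finrank_eq_card_basis w]; simp
  obtain ⟨e, he⟩ := exists_equiv h6 (fun x : b1 => φ x.1 = 0) _ rfl
  refine ⟨Fintype.card {x : b1 // φ x.1 = 0}, w.reindex e, ?_, ?_, ?_, ?_⟩
  · refine le_trans ?_ hB
    rw [← Nat.card_eq_fintype_card, ← Nat.card_coe_set_eq]
    exact Nat.card_le_card_of_injective
      (fun x : {x : b1 // φ x.1 = 0} => (⟨x.1.1, hb1S x.1.2, x.2⟩ : {s ∈ S | φ s = 0}))
      (fun x y h => Subtype.ext (Subtype.ext (congrArg (fun z => z.1) h)))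
  · intro i
    rw [Module.Basis.reindex_apply, hw]; exact hb1S (e.symm i).2
  · intro i
    rw [Module.Basis.reindex_apply, hw]
    have := he (e.symm i)
    rw [e.apply_symm_apply] at this
    split_ifs with h
    · exact this.2 h
    · have h2 : φ (e.symm i).1 ≠ 0 := fun h' => h (this.1 h')
      revert h2
      generalize φ (e.symm i).1 = z
      revert z; decide
  · intro x hx hφ i hi
    have hxs : x ∈ Submodule.span (ZMod 2) b0 := by
      rw [hspan]; exact Submodule.subset_span ⟨hx, hφ⟩
    rw [Module.Basis.repr_reindex_apply]
    have hle : Submodule.span (ZMod 2) b0 ≤ LinearMap.ker (w.coord (e.symm i)) := by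
      refine Submodule.span_le.2 fun y hy => ?_
      have hne : (⟨y, hb01 hy⟩ : b1) ≠ e.symm i := by
        intro h
        have h1 := (he ⟨y, hb01 hy⟩).1 (hb0B hy).2
        rw [h, e.apply_symm_apply] at h1
        omega
      have h3 : w.coord (e.symm i) (w ⟨y, hb01 hy⟩) = 0 := by
        rw [Module.Basis.coord_apply, Module.Basis.repr_self, Finsupp.single_apply, if_neg hne]
      rw [hw ⟨y, hb01 hy⟩] at h3
      exact h3
    exact hle hxs

/-! The five caps -/

def A (i : Fin 5) : Set (Fin 6 → ZMod 2) := {x | ∃ p ∈ rep i, dec p = x}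

theorem rep_lt : ∀ i : Fin 5, ∀ p ∈ rep i, p < 64 ∧ p ≠ 0 := by decide +kernel

theorem rep_card : ∀ i : Fin 5, (rep i).toFinset.card = 17 := by decide +kernel

theorem rep_cap : ∀ i : Fin 5, ∀ a ∈ rep i, ∀ b ∈ rep i, a ^^^ b ∉ rep i := by decide +kernel

theorem rep_sat : ∀ i : Fin 5, ∀ x < 64, x = 0 ∨ x ∈ rep i ∨
    ∃ a ∈ rep i, a ^^^ x ∈ rep i := by decide +kernel

theorem A_eq (i : Fin 5) : A i = dec '' ((rep i).toFinset : Set ℕ) := by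
  ext x; simp [A]

theorem dec_injOn (i : Fin 5) : Set.InjOn dec ((rep i).toFinset : Set ℕ) := by
  intro a ha b hb h
  simp only [List.coe_toFinset, Set.mem_setOf_eq] at ha hb
  exact dec_inj (rep_lt i a ha).1 (rep_lt i b hb).1 h

theorem A_ncard (i : Fin 5) : (A i).ncard = 17 := by
  rw [A_eq, Set.ncard_image_of_injOn (dec_injOn i), Set.ncard_coe_finset, rep_card]

theorem dec_ne_zero {k : ℕ} (hk : k < 64) (h : k ≠ 0) : dec k ≠ 0 := by
  intro h'
  rw [← dec_zero] at h'
  exact h (dec_inj hk (by norm_num) h')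

theorem A_complete (i : Fin 5) : CompleteCap (A i) := by
  have h0 : ∀ s ∈ A i, s ≠ 0 := by
    rintro _ ⟨p, hp, rfl⟩
    exact dec_ne_zero (rep_lt i p hp).1 (rep_lt i p hp).2
  refine ⟨⟨h0, ?_⟩, h0, ?_⟩
  · rintro _ ⟨a, ha, rfl⟩ _ ⟨b, hb, rfl⟩ _ ⟨c, hc, rfl⟩ - - - h
    rw [← dec_xor] at h
    have h2 := CharTwo.add_eq_zero.1 h
    have h3 := dec_inj (xor_lt (rep_lt i a ha).1 (rep_lt i b hb).1) (rep_lt i c hc).1 h2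
    exact rep_cap i a ha b hb (h3 ▸ hc)
  · intro x hx hxA
    obtain ⟨k, hk, rfl⟩ := dec_surj x
    rcases rep_sat i k hk with h | h | ⟨a, ha, hb⟩
    · exact absurd (by rw [h, dec_zero]) hx
    · exact absurd ⟨k, h, rfl⟩ hxA
    refine ⟨dec a, ⟨a, ha, rfl⟩, dec (a ^^^ k), ⟨_, hb, rfl⟩, ?_, ?_⟩
    · rw [dec_xor]
      intro h'
      exact hx (by simpa using h')
    · rw [dec_xor, ← add_assoc, CharTwo.add_self_eq_zero, zero_add]

/-! Energy -/

def Eset (S : Set (Fin 6 → ZMod 2)) :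
    Set ((Fin 6 → ZMod 2) × (Fin 6 → ZMod 2) × (Fin 6 → ZMod 2)) :=
  {t | t.1 ∈ S ∧ t.2.1 ∈ S ∧ t.2.2 ∈ S ∧ t.1 + t.2.1 + t.2.2 ∈ S}

theorem Eset_inv {S U : Set (Fin 6 → ZMod 2)} (h : ProjEquiv S U) :
    (Eset S).ncard = (Eset U).ncard := by
  obtain ⟨g, rfl⟩ := h
  set G : (Fin 6 → ZMod 2) → (Fin 6 → ZMod 2) :=
    fun x => Matrix.mulVec (g : Matrix (Fin 6) (Fin 6) (ZMod 2)) x with hG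
  have hinj : Function.Injective G := Matrix.mulVec_injective_of_isUnit g.isUnit
  have hadd : ∀ x y, G (x + y) = G x + G y := fun x y => Matrix.mulVec_add _ _ _
  have : Eset (G '' S) = Prod.map G (Prod.map G G) '' Eset S := by
    ext ⟨x, y, z⟩
    constructor
    · rintro ⟨⟨a, ha, h1⟩, ⟨b, hb, h2⟩, ⟨c, hc, h3⟩, ⟨d, hd, h4⟩⟩
      simp only at h1 h2 h3 h4
      subst h1 h2 h3
      rw [← hadd, ← hadd] at h4
      have := hinj h4
      exact ⟨(a, b, c), ⟨ha, hb, hc, by simpa [← this] using hd⟩, rfl⟩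
    · rintro ⟨⟨a, b, c⟩, ⟨ha, hb, hc, hd⟩, h⟩
      simp only [Prod.map_apply, Prod.mk.injEq] at h
      obtain ⟨rfl, rfl, rfl⟩ := h
      refine ⟨⟨a, ha, rfl⟩, ⟨b, hb, rfl⟩, ⟨c, hc, rfl⟩, ⟨a + b + c, hd, ?_⟩⟩
      simp only [hadd]
  rw [this, Set.ncard_image_of_injective _ (hinj.prodMap (hinj.prodMap hinj))]

def mk (i : ℕ) : ℕ :=
  match i with
  | 0 => 0x4224248128414116
  | 1 => 0x8224244124414116
  | 2 => 0x8224244114414116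
  | 3 => 0x8224144114414116
  | _ => 0x8114144114414116

theorem mk_rep : ∀ i : Fin 5, ∀ k < 64, (mk i).testBit k = true ↔ k ∈ rep i := by decide +kernel

def Efin (i : ℕ) : Finset (ℕ × ℕ × ℕ) :=
  ((rep i).toFinset ×ˢ (rep i).toFinset ×ˢ (rep i).toFinset).filter
    (fun t => (mk i).testBit (t.1 ^^^ t.2.1 ^^^ t.2.2) = true)

def en (i : ℕ) : ℕ :=
  match i with
  | 0 => 2273
  | 1 => 2393
  | 2 => 2465
  | 3 => 2585
  | _ => 3353

theorem Efin_card : ∀ i : Fin 5, (Efin i).card = en i := by decide +kernel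

theorem Eset_A (i : Fin 5) : (Eset (A i)).ncard = en i := by
  have : Eset (A i) = Prod.map dec (Prod.map dec dec) '' (Efin i : Set (ℕ × ℕ × ℕ)) := by
    ext ⟨x, y, z⟩
    constructor
    · rintro ⟨⟨a, ha, h1⟩, ⟨b, hb, h2⟩, ⟨c, hc, h3⟩, ⟨d, hd, h4⟩⟩
      simp only at h1 h2 h3 h4
      subst h1 h2 h3
      rw [← dec_xor, ← dec_xor] at h4
      have hlt := xor_lt (xor_lt (rep_lt i a ha).1 (rep_lt i b hb).1) (rep_lt i c hc).1
      have := dec_inj (rep_lt i d hd).1 hlt h4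
      refine ⟨(a, b, c), ?_, rfl⟩
      simp only [Efin, Finset.coe_filter, Finset.mem_product, List.mem_toFinset, Set.mem_setOf_eq]
      exact ⟨⟨ha, hb, hc⟩, (mk_rep i _ hlt).2 (this ▸ hd)⟩
    · rintro ⟨⟨a, b, c⟩, h, h'⟩
      simp only [Efin, Finset.coe_filter, Finset.mem_product, List.mem_toFinset,
        Set.mem_setOf_eq] at h
      obtain ⟨⟨ha, hb, hc⟩, hd⟩ := h
      simp only [Prod.map_apply, Prod.mk.injEq] at h'
      obtain ⟨rfl, rfl, rfl⟩ := h'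
      have hlt := xor_lt (xor_lt (rep_lt i a ha).1 (rep_lt i b hb).1) (rep_lt i c hc).1
      refine ⟨⟨a, ha, rfl⟩, ⟨b, hb, rfl⟩, ⟨c, hc, rfl⟩, ⟨_, (mk_rep i _ hlt).1 hd, ?_⟩⟩
      simp only [dec_xor]
  rw [this, Set.ncard_image_of_injOn, Set.ncard_coe_finset, Efin_card]
  rintro ⟨a, b, c⟩ h ⟨a', b', c'⟩ h' heq
  simp only [Efin, Finset.coe_filter, Finset.mem_product, List.mem_toFinset,
        Set.mem_setOf_eq] at h h'
  simp only [Prod.map_apply, Prod.mk.injEq] at heq ⊢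
  exact ⟨dec_inj (rep_lt i a h.1.1).1 (rep_lt i a' h'.1.1).1 heq.1,
    dec_inj (rep_lt i b h.1.2.1).1 (rep_lt i b' h'.1.2.1).1 heq.2.1,
    dec_inj (rep_lt i c h.1.2.2).1 (rep_lt i c' h'.1.2.2).1 heq.2.2⟩

theorem A_inequiv (i j : Fin 5) (hij : i ≠ j) : ¬ ProjEquiv (A i) (A j) := by
  intro h
  have h1 := Eset_inv h
  rw [Eset_A, Eset_A] at h1
  have key : ∀ i j : Fin 5, i ≠ j → en i ≠ en j := by decide
  exact key i j hij h1

/-! The system of a complete cap -/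

theorem mkSys {S : Set (Fin 6 → ZMod 2)} (hc : CompleteCap S) (h17 : S.ncard = 17)
    (L : (Fin 6 → ZMod 2) ≃ₗ[ZMod 2] (Fin 6 → ZMod 2)) (φ : (Fin 6 → ZMod 2) →ₗ[ZMod 2] ZMod 2)
    (hB : {s ∈ S | φ s = 0}.ncard ≤ 5) (r : ℕ) (hr : r ≤ 5)
    (hφ : ∀ k < 2 ^ r, φ (L (dec k)) = 0) : Sys (fun k => L (dec k) ∈ S) r := by
  classical
  have hr2 : 2 ^ r ≤ 64 := by
    calc 2 ^ r ≤ 2 ^ 6 := Nat.pow_le_pow_right (by norm_num) (by omega)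
      _ = 64 := rfl
  refine ⟨?_, ?_, ?_, ?_⟩
  · intro a ha b hb hPa hPb hab hPab
    have h1 : L (dec a) ≠ L (dec b) := fun h => hab (dec_inj ha hb (L.injective h))
    have h2 : L (dec (a ^^^ b)) = L (dec a) + L (dec b) := by rw [dec_xor, map_add]
    refine hc.1.2 _ hPa _ hPb _ hPab h1 ?_ ?_ ?_
    · rw [h2]; intro h; exact hc.1.1 _ hPb (by simpa using h)
    · rw [h2]; intro h; exact hc.1.1 _ hPa (by simpa using h)
    · rw [h2]; exact CharTwo.add_self_eq_zero _
  · intro x hx hx0 hPx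
    have hne : L (dec x) ≠ 0 := by
      intro h; exact dec_ne_zero hx hx0 (by simpa using h)
    obtain ⟨a, ha, b, hb, hab, h⟩ := hc.2.2 _ hne hPx
    obtain ⟨a, rfl⟩ := L.surjective a
    obtain ⟨b, rfl⟩ := L.surjective b
    obtain ⟨ka, hka, rfl⟩ := dec_surj a
    obtain ⟨kb, hkb, rfl⟩ := dec_surj b
    refine ⟨ka, hka, kb, hkb, ha, hb, ?_⟩
    rw [← map_add, ← dec_xor] at h
    exact dec_inj hx (xor_lt hka hkb) (L.injective h)
  · refine ⟨(Finset.range 64).filter (fun k => L (dec k) ∈ S), ?_, by simp⟩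
    rw [← h17, ← Set.ncard_coe_finset]
    have : S = (fun k => L (dec k)) ''
        (((Finset.range 64).filter (fun k => L (dec k) ∈ S) : Finset ℕ) : Set ℕ) := by
      ext x
      constructor
      · intro hx
        obtain ⟨y, rfl⟩ := L.surjective x
        obtain ⟨k, hk, rfl⟩ := dec_surj y
        exact ⟨k, by simp [hk, hx], rfl⟩
      · rintro ⟨k, hk, rfl⟩
        simp only [Finset.coe_filter, Set.mem_setOf_eq] at hk
        exact hk.2
    conv_rhs => rw [this]
    rw [Set.ncard_image_of_injOn]
    intro a ha b hb h
    simp only [Finset.coe_filter, Set.mem_setOf_eq, Finset.mem_range] at ha hb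
    exact dec_inj ha.1 hb.1 (L.injective h)
  · intro G hG
    refine le_trans ?_ hB
    rw [← Set.ncard_coe_finset]
    refine Set.ncard_le_ncard_of_injOn (fun k => L (dec k)) ?_ ?_ (Set.toFinite _)
    · intro k hk
      obtain ⟨h1, h2⟩ := hG k hk
      exact ⟨h2, hφ k h1⟩
    · intro a ha b hb h
      exact dec_inj (by have := (hG a ha).1; omega) (by have := (hG b hb).1; omega) (L.injective h)

def par (r k : ℕ) : ZMod 2 := ∑ i : Fin 6, dec k i * (if (i : ℕ) < r then 0 else 1)

def wt2 (k : ℕ) : Prop := ∃ i < 6, ∃ j < 6, i ≠ j ∧ k = 2 ^ i ^^^ 2 ^ j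

instance (k : ℕ) : Decidable (wt2 k) := by unfold wt2; infer_instance

def cover (r C : ℕ) : Prop := ∀ k < 64, (par r k = 0 → ∀ i : Fin 6, r ≤ (i : ℕ) → dec k i = 0) →
  Nat.testBit 0x100010116 k = true ∨ C.testBit k = true ∨ k = 0 ∨ wt2 k

instance (r C : ℕ) : Decidable (cover r C) := by unfold cover; infer_instance

theorem cov0 : cover 0 0x6996966896686880 := by decide +kernel
theorem cov1 : cover 1 0xc33c3cc03cc0c000 := by decide +kernel
theorem cov2 : cover 2 0xff0f008f0080880 := by decide +kernel
theorem cov3 : cover 3 0xff0000e800e8e880 := by decide +kernel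
theorem cov4 : cover 4 0xfee8fee8e880 := by decide +kernel
theorem cov5 : cover 5 0xfffefee8fee8e880 := by decide +kernel

theorem I0_bits : ∀ k < 64, Nat.testBit 0x100010116 k = true → ∃ i : Fin 6, dec k = Pi.single i 1 := by
  decide +kernel

theorem dec_two_pow (i : ℕ) (hi : i < 6) : dec (2 ^ i) = Pi.single ⟨i, hi⟩ 1 := by
  have : ∀ i : Fin 6, dec (2 ^ (i : ℕ)) = Pi.single i 1 := by decide +kernel
  exact this ⟨i, hi⟩

theorem exists_fin (j : ℕ) : ∃ i : Fin 5, rep i = rep j := by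
  match j with
  | 0 => exact ⟨0, rfl⟩
  | 1 => exact ⟨1, rfl⟩
  | 2 => exact ⟨2, rfl⟩
  | 3 => exact ⟨3, rfl⟩
  | n + 4 => exact ⟨4, rfl⟩

theorem run_check (P : ℕ → Prop) (r : ℕ) (hr : r ≤ 5) (hP : Sys P r)
    (hI : ∀ k < 64, Nat.testBit 0x100010116 k = true → P k)
    (hC : ∀ C, cover r C → ∀ k < 64, P k → Nat.testBit 0x100010116 k = true ∨ C.testBit k = true) :
    ∃ n, ∀ k < 64, P k → (img n (rep (n >>> 36))).testBit k = true := by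
  interval_cases r
  · exact check_sound P 0 (by norm_num) hP t0 _ _ c0 hI (hC _ cov0)
  · exact check_sound P 1 (by norm_num) hP t1 _ _ c1 hI (hC _ cov1)
  · exact check_sound P 2 (by norm_num) hP t2 _ _ c2 hI (hC _ cov2)
  · exact check_sound P 3 (by norm_num) hP t3 _ _ c3 hI (hC _ cov3)
  · exact check_sound P 4 (by norm_num) hP t4 _ _ c4 hI (hC _ cov4)
  · exact check_sound P 5 (by norm_num) hP t5 _ _ c5 hI (hC _ cov5)

theorem classify (S : Set (Fin 6 → ZMod 2)) (hc : CompleteCap S) (h17 : S.ncard = 17) :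
    ∃ i, ProjEquiv S (A i) := by
  classical
  have hfin : S.Finite := Set.toFinite S
  obtain ⟨f, hf⟩ := fourier hfin.toFinset (by rw [← Set.ncard_eq_toFinset_card S hfin, h17]) (by
    intro a ha b hb c hcS h
    simp only [Set.Finite.mem_toFinset] at ha hb hcS
    by_cases hab : a = b
    · subst hab
      rw [CharTwo.add_self_eq_zero, zero_add] at h
      exact hc.1.1 c hcS h
    by_cases hac : a = c
    · subst hac
      have : a + b + a = b := by
        rw [add_comm a b, add_assoc, CharTwo.add_self_eq_zero, add_zero]
      exact hc.1.1 b hb (this ▸ h)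
    by_cases hbc : b = c
    · subst hbc
      rw [add_assoc, CharTwo.add_self_eq_zero, add_zero] at h
      exact hc.1.1 a ha h
    exact hc.1.2 a ha b hb c hcS hab hac hbc h)
  let φ : (Fin 6 → ZMod 2) →ₗ[ZMod 2] ZMod 2 :=
    { toFun := fun x => f ⬝ᵥ x
      map_add' := fun x y => dotProduct_add f x y
      map_smul' := fun c x => dotProduct_smul c f x }
  have hB : {s ∈ S | φ s = 0}.ncard ≤ 5 := by
    refine le_trans (le_of_eq ?_) hf
    rw [← Set.ncard_coe_finset]
    congr 1
    ext x
    simp [φ]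
  obtain ⟨r, v, hr, hvS, hvφ, hvr⟩ := exists_basis hc.2 φ hB
  let L : (Fin 6 → ZMod 2) ≃ₗ[ZMod 2] (Fin 6 → ZMod 2) := v.equivFun.symm
  have hLs : ∀ x, L x = ∑ i, x i • v i := fun x => v.equivFun_symm_apply x
  have hφL : ∀ k, φ (L (dec k)) = par r k := by
    intro k
    rw [hLs, map_sum]
    unfold par
    refine Finset.sum_congr rfl fun i _ => ?_
    rw [map_smul, hvφ, smul_eq_mul]
  have hrepr : ∀ x i, v.repr (L x) i = x i := by
    intro x i
    have := congrFun (v.equivFun.apply_symm_apply x) i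
    rwa [Module.Basis.equivFun_apply] at this
  have hLsingle : ∀ i, L (Pi.single i 1) = v i := by
    intro i
    rw [hLs, Finset.sum_eq_single i]
    · simp
    · intro j _ hj; simp [hj]
    · simp
  have hsys : Sys (fun k => L (dec k) ∈ S) r := by
    refine mkSys hc h17 L φ hB r hr fun k hk => ?_
    rw [hφL]
    refine Finset.sum_eq_zero fun i _ => ?_
    split_ifs with h
    · simp
    · have : k.testBit i = false := Nat.testBit_lt_two_pow
        (lt_of_lt_of_le hk (Nat.pow_le_pow_right (by norm_num) (by omega)))
      simp [dec, this]
  obtain ⟨n, hn⟩ := run_check _ r hr hsys (by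
    intro k hk h
    obtain ⟨i, hi⟩ := I0_bits k hk h
    show L (dec k) ∈ S
    rw [hi, hLsingle]; exact hvS i) (by
    intro C hC k hk hPk
    have hPk' : L (dec k) ∈ S := hPk
    rcases hC k hk (by
      intro h i hi
      rw [← hφL] at h
      rw [← hrepr (dec k) i]
      exact hvr _ hPk' h i hi) with h | h | h | h
    · exact Or.inl h
    · exact Or.inr h
    · exfalso
      rw [h, dec_zero, map_zero] at hPk'
      exact hc.1.1 _ hPk' rfl
    · exfalso
      obtain ⟨i, hi, j, hj, hij, rfl⟩ := h
      have hlt : ∀ i < 6, 2 ^ i < 64 := by decide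
      refine hsys.cap _ (hlt i hi) _ (hlt j hj) ?_ ?_ ?_ hPk
      · show L (dec _) ∈ S
        rw [dec_two_pow i hi, hLsingle]; exact hvS _
      · show L (dec _) ∈ S
        rw [dec_two_pow j hj, hLsingle]; exact hvS _
      · exact fun h => hij (Nat.pow_right_injective (le_refl 2) h))
  obtain ⟨i, hi⟩ := exists_fin (n >>> 36)
  rw [← hi] at hn
  obtain ⟨F, hF, hFm⟩ := hsys.card
  have hFeq : F = (rep i).toFinset.image (hN n) := by
    apply Finset.eq_of_subset_of_card_le
    · intro k hk
      obtain ⟨h1, h2⟩ := (hFm k).1 hk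
      obtain ⟨p, hp, hpk⟩ := img_testBit n _ k (hn k h1 h2)
      exact Finset.mem_image.2 ⟨p, List.mem_toFinset.2 hp, hpk⟩
    · rw [hF, ← rep_card i]; exact Finset.card_image_le
  let f2 : (Fin 6 → ZMod 2) →ₗ[ZMod 2] (Fin 6 → ZMod 2) := L.toLinearMap ∘ₗ (Hm n).mulVecLin
  have hf2 : ∀ p, f2 (dec p) = L (dec (hN n p)) := by
    intro p; rw [dec_hN]; rfl
  have himg : f2 '' A i = S := by
    ext x
    constructor
    · rintro ⟨_, ⟨p, hp, rfl⟩, rfl⟩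
      rw [hf2]
      have : hN n p ∈ F := by
        rw [hFeq]; exact Finset.mem_image_of_mem _ (List.mem_toFinset.2 hp)
      exact ((hFm _).1 this).2
    · intro hx
      obtain ⟨y, rfl⟩ := L.surjective x
      obtain ⟨k, hk, rfl⟩ := dec_surj y
      have : k ∈ F := (hFm k).2 ⟨hk, hx⟩
      rw [hFeq] at this
      obtain ⟨p, hp, rfl⟩ := Finset.mem_image.1 this
      exact ⟨dec p, ⟨p, List.mem_toFinset.1 hp, rfl⟩, hf2 p⟩
  have hsurj : Function.Surjective f2 := by
    rw [← LinearMap.range_eq_top, eq_top_iff, ← span_top hc.2, Submodule.span_le, ← himg]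
    rintro _ ⟨x, _, rfl⟩
    exact ⟨x, rfl⟩
  have hinj : Function.Injective f2 := LinearMap.injective_iff_surjective.2 hsurj
  let e := LinearEquiv.ofBijective f2 ⟨hinj, hsurj⟩
  have he : ∀ x, e x = f2 x := fun x => rfl
  refine ⟨i, ⟨LinearMap.toMatrix' e.symm.toLinearMap, LinearMap.toMatrix' e.toLinearMap, ?_, ?_⟩, ?_⟩
  · rw [← LinearMap.toMatrix'_comp]; simp
  · rw [← LinearMap.toMatrix'_comp]; simp
  · have : ∀ x, Matrix.mulVec (LinearMap.toMatrix' e.symm.toLinearMap) x = e.symm x := fun x =>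
      LinearMap.toMatrix'_mulVec _ _
    simp only [this]
    rw [← himg]
    ext x
    constructor
    · rintro ⟨_, ⟨y, hy, rfl⟩, rfl⟩
      show e.symm (f2 y) ∈ A i
      rw [← he, e.symm_apply_apply]; exact hy
    · intro hx
      exact ⟨f2 x, ⟨x, hx, rfl⟩, by show e.symm (f2 x) = x; rw [← he, e.symm_apply_apply]⟩

end PG5

/-- Up to projective equivalence there are exactly five complete caps of size 17 in
PG(5,2) (the conjecture of Davydov and Tombak). -/
theorem completeCap_PG5_size17_five_orbits :
    ∃ A : Fin 5 → Set (Fin 6 → ZMod 2),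
      (∀ i, CompleteCap (A i) ∧ (A i).ncard = 17) ∧
      (∀ i j, i ≠ j → ¬ ProjEquiv (A i) (A j)) ∧
      (∀ S : Set (Fin 6 → ZMod 2), CompleteCap S → S.ncard = 17 →
        ∃ i, ProjEquiv S (A i)) := by
  exact ⟨PG5.A, fun i => ⟨PG5.A_complete i, PG5.A_ncard i⟩, PG5.A_inequiv, PG5.classify⟩
end
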